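/- arXiv:1801.03536 — 3 statements merged into one kernel-verified Lean document; each statement's English description precedes it below -/
import Mathlib

section
/- The following are equivalent: (1) the substitution σ is not unilaterally recognizable; (2) for each L ∈ ℕ there exist i, j ∈ ℤ₊ such that σ(u_j) is a strict (proper) suffix of σ(u_i), and σ(u_{i+k}) = σ(u_{j+k}) for every integer k with 1 ≤ k ≤ L. -/
open List Filter

section Defs

variable {A : Type*}

/-- The segment `u_[i,j)` of the sequence `u`. -/
def seg (u : ℕ → A) (i j : ℕ) : List A :=
  (List.range (j - i)).map fun k => u (i + k)

/-- A substitution applied to a word, letter by letter. -/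
def substWord (σ : A → List A) (w : List A) : List A := w.flatMap σ

/-- `σ^p` applied to a word. -/
def substPow (σ : A → List A) (p : ℕ) (w : List A) : List A := (substWord σ)^[p] w

/-- A substitution is primitive if some power of it sends every letter to a word
containing every letter. -/
def IsPrimitiveSubst (σ : A → List A) : Prop :=
  ∃ k : ℕ, ∀ a b : A, a ∈ substPow σ k [b]

/-- `u` is a fixed point of `σ`: the image of every prefix of `u` is again a prefix of `u`. -/
def IsFixedPoint (σ : A → List A) (u : ℕ → A) : Prop :=
  ∀ m : ℕ, substWord σ (seg u 0 m) = seg u 0 (substWord σ (seg u 0 m)).length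

/-- `u` is aperiodic under the left shift: `T^i u ≠ u` for all `i ≥ 1`. -/
def AperiodicSeq (u : ℕ → A) : Prop := ∀ i : ℕ, 1 ≤ i → (fun n => u (n + i)) ≠ u

/-- The set `E_p` of natural `p`-cutting points. -/
def cutPoints (σ : A → List A) (u : ℕ → A) (p : ℕ) : Set ℕ :=
  { m | ∃ n : ℕ, m = (substPow σ p (seg u 0 n)).length }

/-- Unilateral recognizability of `σ` (with fixed point `u`). -/
def UnilaterallyRecognizable (σ : A → List A) (u : ℕ → A) : Prop :=
  ∃ L : ℕ, 1 ≤ L ∧ ∀ i j : ℕ,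
    seg u i (i + L) = seg u j (j + L) → i ∈ cutPoints σ u 1 → j ∈ cutPoints σ u 1

/-- `L_n(u)`: the set of factors of `u` of length `n`. -/
def factors (u : ℕ → A) (n : ℕ) : Set (List A) := { w | ∃ i : ℕ, w = seg u i (i + n) }

/-- `L(u)`: the language of `u` (including the empty word). -/
def lang (u : ℕ → A) : Set (List A) := { w | ∃ i n : ℕ, w = seg u i (i + n) }

/-- `w^n`: the concatenation of `n` copies of `w`. -/
def wpow (w : List A) (n : ℕ) : List A := (List.replicate n w).flatten

/-- A nonempty word `v` is primitive if `v = w^n` with `w` nonempty forces `w = v`. -/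
def PrimitiveWord (v : List A) : Prop :=
  ∀ w : List A, w ≠ [] → ∀ n : ℕ, 1 ≤ n → v = wpow w n → w = v

/-- `g` is a gap of occurrences of `w` in `u` if every interval of length `g` in `ℤ₊`
contains an occurrence of `w`. -/
def IsGap (u : ℕ → A) (w : List A) (g : ℕ) : Prop := ∀ i : ℕ, w <:+: seg u i (i + g)

/-- The minimal gap of a word. -/
noncomputable def minGap (u : ℕ → A) (w : List A) : ℕ := sInf { g | IsGap u w g }

/-- `g`: the maximum over `w ∈ L₂(u)` of the minimal gap of `w`. -/
noncomputable def gapConst (u : ℕ → A) : ℕ :=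
  sSup { m | ∃ w ∈ factors u 2, m = minGap u w }

/-- A natural `p`-cutting `{α, σ^p(u_{i'}), …, σ^p(u_{i'+k-1}), β}` of `u_[i,i+ℓ)`. -/
def IsNaturalCutting (σ : A → List A) (u : ℕ → A) (p i ℓ : ℕ)
    (α : List A) (i' k : ℕ) (β : List A) : Prop :=
  1 ≤ k ∧
  α <:+ substPow σ p [u (i' - 1)] ∧
  β <+: substPow σ p [u (i' + k)] ∧
  seg u i (i + ℓ) = α ++ substPow σ p (seg u i' (i' + k)) ++ β ∧
  i + α.length = (substPow σ p (seg u 0 i')).length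

section Fin

variable [Fintype A] [Nonempty A] [DecidableEq A]

/-- The incidence matrix of a substitution: the `(a,b)` entry is `|σ(a)|_b`. -/
def incMatrix (σ : A → List A) : Matrix A A ℕ := Matrix.of fun a b => (σ a).count b

/-- The incidence matrix as a real matrix. -/
noncomputable def incMatrixR (σ : A → List A) : Matrix A A ℝ :=
  Matrix.of fun a b => ((σ a).count b : ℝ)

/-- `S_p = max_{a ∈ A} |σ^p(a)|`. -/
def Sp (σ : A → List A) (p : ℕ) : ℕ :=
  Finset.univ.sup' Finset.univ_nonempty fun a => (substPow σ p [a]).length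

/-- `I_p = min_{a ∈ A} |σ^p(a)|`. -/
def Ip (σ : A → List A) (p : ℕ) : ℕ :=
  Finset.univ.inf' Finset.univ_nonempty fun a => (substPow σ p [a]).length

/-- `C = ⌈(max_b β_b)/(min_b β_b)⌉` for a positive eigenvector `β`. -/
noncomputable def Cst (β : A → ℝ) : ℕ :=
  ⌈(Finset.univ.sup' Finset.univ_nonempty β) / (Finset.univ.inf' Finset.univ_nonempty β)⌉₊

/-- `K = ⌈λ C² max{2(g+1), (#A)²}⌉`. -/
noncomputable def Kst (u : ℕ → A) (lam : ℝ) (β : A → ℝ) : ℕ :=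
  ⌈lam * (Cst β : ℝ) ^ 2 *
    max (2 * ((gapConst u : ℝ) + 1)) ((Fintype.card A : ℝ) ^ 2)⌉₊

/-- The constant `p₀` of Lemma 4.2. -/
noncomputable def p0 (u : ℕ → A) (lam : ℝ) (β : A → ℝ) : ℕ :=
  (Kst u lam β) ^ 2 * ((Cst β) ^ 4 * (Kst u lam β + 1) + 2 * (Cst β) ^ 2 + 1) *
    (∑ n ∈ Finset.Icc ((Cst β) ^ 2 * (Kst u lam β + 1) + 2)
        ((Kst u lam β + 1) * (Cst β) ^ 6 + 2 * (Cst β) ^ 4 + (Cst β) ^ 2 + 2), n) + 1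

/-- The constant `L₀ = (C⁴(K+1)+2C²+1) S_{p₀}`. -/
noncomputable def L0 (σ : A → List A) (u : ℕ → A) (lam : ℝ) (β : A → ℝ) : ℕ :=
  ((Cst β) ^ 4 * (Kst u lam β + 1) + 2 * (Cst β) ^ 2 + 1) * Sp σ (p0 u lam β)

/-- The ℓ¹ norm of a vector. -/
def l1norm (f : A → ℝ) : ℝ := ∑ a, |f a|

/-- The projective metric on positive row vectors. -/
noncomputable def projMetric (x y : A → ℝ) : ℝ :=
  Real.log ((Finset.univ.sup' Finset.univ_nonempty fun a => x a / y a) /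
    (Finset.univ.inf' Finset.univ_nonempty fun a => x a / y a))

/-- The Birkhoff contraction coefficient of a matrix. -/
noncomputable def birkhoff (M : Matrix A A ℝ) : ℝ :=
  sSup { r | ∃ x y : A → ℝ, (∀ a, 0 < x a) ∧ (∀ a, 0 < y a) ∧
    LinearIndependent ℝ ![x, y] ∧
    r = projMetric (Matrix.vecMul x M) (Matrix.vecMul y M) / projMetric x y }

end Fin

/-- Membership in the vertex set `V^*`: pairs `(xac, ybc)` of factors of `u` of length
`N + L₁ + 1` with `a ≠ b` and `|c| = L₁`. -/
def memVstar (u : ℕ → A) (N L₁ : ℕ) (p : List A × List A) : Prop :=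
  ∃ (x y c : List A) (a b : A), a ≠ b ∧
    x.length = N ∧ y.length = N ∧ c.length = L₁ ∧
    p.1 = x ++ a :: c ∧ p.2 = y ++ b :: c ∧
    p.1 ∈ factors u (N + L₁ + 1) ∧ p.2 ∈ factors u (N + L₁ + 1)

/-- An edge between representatives: there is a word `w` with `s'w` a suffix of `σ(s)` and
`t'w` a suffix of `σ(t)`. -/
def edgeRep (σ : A → List A) (p q : List A × List A) : Prop :=
  ∃ w : List A, w ≠ [] ∧ (q.1 ++ w) <:+ substWord σ p.1 ∧ (q.2 ++ w) <:+ substWord σ p.2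

/-- An edge in the graph `G` between the unordered pairs represented by `p` and `q`. -/
def graphEdge (σ : A → List A) (p q : List A × List A) : Prop :=
  edgeRep σ p q ∨ edgeRep σ p q.swap ∨ edgeRep σ p.swap q ∨ edgeRep σ p.swap q.swap

/-- A representative generates a gap of natural 1-cutting points. -/
def genGapRep (σ : A → List A) (p : List A × List A) : Prop :=
  ∃ (α β : A) (γ δ : List A),
    (σ α <:+ σ β ∧ σ α ≠ σ β) ∧
    List.Forall₂ (fun s t => σ s = σ t) γ δ ∧
    (α :: γ) <:+ substWord σ p.1 ∧ (β :: δ) <:+ substWord σ p.2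

/-- The unordered pair represented by `p` generates a gap of natural 1-cutting points. -/
def genGap (σ : A → List A) (p : List A × List A) : Prop :=
  genGapRep σ p ∨ genGapRep σ p.swap

/-- The list of consecutive two-letter blocks of a word. -/
def pairsList (l : List A) : List (List A) :=
  List.zipWith (fun a b => [a, b]) l l.tail

end Defs

namespace Recog
universe v
section Gen
variable {A B C : Type*} {G : Type*} [CommSemiring G]

/-- the word `l` occurs in `y` at position `p`. -/
def Occ : List B → (G → B) → G → Prop
  | [], _, _ => True
  | b :: l, y, p => y p = b ∧ Occ l y (p + 1)

/-- `y` is the concatenation of the words `α (x n)`, the `n`-th one placed at `c n`. -/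
def Rep (α : A → List B) (x : G → A) (c : G → G) (y : G → B) : Prop :=
  ∀ n, c (n + 1) = c n + ((α (x n)).length : G) ∧ Occ (α (x n)) y (c n)

/-- every position is covered. -/
def Loc (α : A → List B) (x : G → A) (c : G → G) : Prop :=
  ∀ p, ∃ n, ∃ t : ℕ, p = c n + t ∧ t < (α (x n)).length

/-- all factors of `x` are factors of `u`. -/
def InX (u : ℕ → A) (x : G → A) : Prop := ∀ l a, Occ l x a → ∃ i, Occ l u i

theorem occ_iff {l : List B} {y : G → B} {p : G} :
    Occ l y p ↔ ∀ k (h : k < l.length), y (p + k) = l[k] := by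
  induction l generalizing p with
  | nil => simp [Occ]
  | cons b l ih =>
    simp only [Occ, ih]
    constructor
    · rintro ⟨h1, h2⟩ k hk
      cases k with
      | zero => simpa using h1
      | succ k =>
        have := h2 k (by simpa using hk)
        simp only [List.getElem_cons_succ, ← this]
        push_cast
        congr 1
        ring
    · intro h
      refine ⟨by have := h 0 (by simp); simp only [Nat.cast_zero, add_zero] at this; exact this, fun k hk => ?_⟩
      have := h (k + 1) (by simpa using hk)
      simp only [List.getElem_cons_succ] at this
      rw [← this]
      push_cast
      congr 1
      ring

theorem occ_append {l l' : List B} {y : G → B} {p : G} :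
    Occ (l ++ l') y p ↔ Occ l y p ∧ Occ l' y (p + l.length) := by
  induction l generalizing p with
  | nil => simp [Occ]
  | cons b l ih =>
    simp only [List.cons_append, Occ, ih, List.length_cons, and_assoc]
    push_cast
    rw [add_assoc, add_comm (1 : G)]

theorem exists_occ (y : G → B) (p : G) (n : ℕ) : ∃ l : List B, l.length = n ∧ Occ l y p := by
  induction n generalizing p with
  | zero => exact ⟨[], rfl, trivial⟩
  | succ n ih =>
    obtain ⟨l, h1, h2⟩ := ih (p + 1)
    exact ⟨y p :: l, by simp [h1], rfl, h2⟩

theorem occ_unique {l l' : List B} {y : G → B} {p : G} (h : Occ l y p) (h' : Occ l' y p)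
    (hl : l.length = l'.length) : l = l' := by
  apply List.ext_getElem hl
  intro k h1 h2
  rw [← occ_iff.1 h k h1, ← occ_iff.1 h' k h2]

theorem occ_transfer {H : Type*} [CommSemiring H] {W l : List B} {y : G → B} {v : H → B}
    {p : G} {q : H} {t : ℕ}
    (h1 : Occ W y p) (h2 : Occ l y (p + t)) (ht : t + l.length ≤ W.length) (h3 : Occ W v q) :
    Occ l v (q + t) := by
  rw [occ_iff] at *
  intro k hk
  have a1 := h1 (t + k) (by omega)
  have a2 := h2 k hk
  have a3 := h3 (t + k) (by omega)
  push_cast at a1 a3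
  rw [← add_assoc] at a1 a3
  rw [a3, ← a1, a2]

theorem rep_word {α : A → List B} {x : G → A} {c : G → G} {y : G → B} (h : Rep α x c y)
    {l : List A} {n : G} (hl : Occ l x n) :
    Occ (l.flatMap α) y (c n) ∧ c (n + l.length) = c n + ((l.flatMap α).length : G) := by
  induction l generalizing n with
  | nil => simp [Occ]
  | cons a l ih =>
    obtain ⟨h1, h2⟩ := hl
    obtain ⟨i1, i2⟩ := ih h2
    obtain ⟨j1, j2⟩ := h n
    subst h1
    rw [List.flatMap_cons, occ_append]
    refine ⟨⟨j2, j1 ▸ i1⟩, ?_⟩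
    simp only [List.length_cons, List.length_append]
    push_cast
    rw [add_comm (l.length : G), ← add_assoc, i2, j1]
    ring

theorem rep_comp {τ : C → List A} {α : A → List B} {z : G → C} {c : G → G} {x : G → A}
    {e : G → G} {y : G → B} (h : Rep τ z c x) (h' : Rep α x e y) :
    Rep (fun b => (τ b).flatMap α) z (fun n => e (c n)) y := by
  intro n
  obtain ⟨h1, h2⟩ := h n
  obtain ⟨i1, i2⟩ := rep_word h' h2
  exact ⟨by show e (c (n + 1)) = _; rw [h1, i2], i1⟩

theorem length_flatMap_ge {α : A → List B} (hα : ∀ a, α a ≠ []) (l : List A) :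
    l.length ≤ (l.flatMap α).length := by
  induction l with
  | nil => simp
  | cons a l ih =>
    have := List.length_pos_of_ne_nil (hα a)
    simp only [List.flatMap_cons, List.length_append, List.length_cons]
    omega

theorem inX_image {α : A → List B} (hα : ∀ a, α a ≠ []) {x : G → A} {c : G → G} {y : G → B}
    (h : Rep α x c y) (hloc : Loc α x c) {u : ℕ → A} {e : ℕ → ℕ} {v : ℕ → B}
    (hu : Rep α u e v) (hx : InX u x) : InX v y := by
  intro l a hl
  obtain ⟨n, t, rfl, ht⟩ := hloc a
  obtain ⟨L, hL, hLx⟩ := exists_occ x (n + 1) l.length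
  have h0 : Occ (x n :: L) x n := ⟨rfl, hLx⟩
  obtain ⟨i, hi⟩ := hx _ _ h0
  have h1 := (rep_word h h0).1
  have h2 := (rep_word hu hi).1
  refine ⟨_, occ_transfer h1 hl ?_ h2⟩
  have := length_flatMap_ge hα L
  simp only [List.flatMap_cons, List.length_append]
  omega

end Gen

section NatZ
variable {A B C : Type*}

theorem rep_strictMonoN {α : A → List B} {x : ℕ → A} (hα : ∀ n, α (x n) ≠ []) {c : ℕ → ℕ}
    {y : ℕ → B} (h : Rep α x c y) : StrictMono c := by
  apply strictMono_nat_of_lt_succ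
  intro n
  have := List.length_pos_of_ne_nil (hα n)
  have h1 := (h n).1
  simp only [Nat.cast_id] at h1
  omega

theorem rep_strictMonoZ {α : A → List B} (hα : ∀ a, α a ≠ []) {x : ℤ → A} {c : ℤ → ℤ}
    (h : ∀ n, c (n + 1) = c n + ((α (x n)).length : ℤ)) : StrictMono c := by
  apply strictMono_int_of_lt_succ
  intro n
  have := List.length_pos_of_ne_nil (hα (x n))
  have h1 := h n
  omega

theorem locN_aux {c : ℕ → ℕ} (hc : StrictMono c) (p : ℕ) (h0 : c 0 ≤ p) :
    ∃ n, c n ≤ p ∧ p < c (n + 1) := by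
  have hex : ∃ n, p < c n := ⟨p + 1, hc.le_apply⟩
  classical
  have h1 := Nat.find_spec hex
  have h2 := @Nat.find_min _ _ hex
  cases hm : Nat.find hex with
  | zero => rw [hm] at h1; omega
  | succ m =>
    refine ⟨m, ?_, hm ▸ h1⟩
    have := h2 (m := m) (by omega)
    omega

theorem locZ_aux {c : ℤ → ℤ} (hc : StrictMono c) (p : ℤ) :
    ∃ n, c n ≤ p ∧ p < c (n + 1) := by
  have key : ∀ n : ℕ, c 0 + n ≤ c n ∧ c (-n) ≤ c 0 - n := by
    intro n
    induction n with
    | zero => simp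
    | succ n ih =>
      have h1 : c n < c (n + 1) := hc (by omega)
      have h2 : c (-n - 1) < c (-n) := hc (by omega)
      have h3 : (-((n + 1 : ℕ) : ℤ)) = -n - 1 := by push_cast; ring
      rw [h3]
      push_cast
      omega
  obtain ⟨n, hn, hmax⟩ := Int.exists_greatest_of_bdd (P := fun n => c n ≤ p)
    ⟨((p - c 0).toNat : ℕ), fun z hz => by
      by_contra hlt
      push Not at hlt
      have h1 := (key (p - c 0).toNat).1
      have h2 := hc hlt
      omega⟩
    ⟨-((c 0 - p).toNat : ℕ), by
      have h1 := (key (c 0 - p).toNat).2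
      omega⟩
  refine ⟨n, hn, ?_⟩
  by_contra hlt
  push Not at hlt
  have := hmax _ hlt
  omega

theorem rep_locN {α : A → List B} (hα : ∀ a, α a ≠ []) {x : ℕ → A} {c : ℕ → ℕ}
    (h : ∀ n, c (n + 1) = c n + (α (x n)).length) (h0 : c 0 = 0) : Loc α x c := by
  have hc : StrictMono c := strictMono_nat_of_lt_succ fun n => by
    have := List.length_pos_of_ne_nil (hα (x n))
    have h1 := h n
    omega
  intro p
  obtain ⟨n, h1, h2⟩ := locN_aux hc p (by omega)
  have := h n
  exact ⟨n, p - c n, by simp only [Nat.cast_id]; omega, by omega⟩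

theorem rep_locZ {α : A → List B} (hα : ∀ a, α a ≠ []) {x : ℤ → A} {c : ℤ → ℤ}
    (h : ∀ n, c (n + 1) = c n + ((α (x n)).length : ℤ)) : Loc α x c := by
  intro p
  obtain ⟨n, h1, h2⟩ := locZ_aux (rep_strictMonoZ hα h) p
  have := h n
  exact ⟨n, (p - c n).toNat, by omega, by omega⟩

/-- existence of images, generic. -/
theorem exists_image {G : Type*} [CommSemiring G] {α : A → List B}
    {x : G → A} {c : G → G} (h : ∀ n, c (n + 1) = c n + ((α (x n)).length : G))
    (hloc : Loc α x c)
    (huniq : ∀ n m (s t : ℕ), c n + s = c m + t → s < (α (x n)).length →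
      t < (α (x m)).length → n = m ∧ s = t) :
    ∃ y, Rep α x c y := by
  choose n t h1 h2 using hloc
  refine ⟨fun p => (α (x (n p)))[t p]'(h2 p), fun m => ⟨h m, ?_⟩⟩
  rw [occ_iff]
  intro k hk
  obtain ⟨e1, e2⟩ := huniq _ _ _ _ (h1 (c m + k)) hk (h2 _)
  have : ∀ (m' : G) (k' : ℕ) (hk' : k' < (α (x m')).length), m = m' → k = k' →
      (α (x m'))[k'] = (α (x m))[k] := by
    rintro _ _ _ rfl rfl; rfl
  exact this _ _ _ e1 e2

theorem exists_imageN {α : A → List B} (hα : ∀ a, α a ≠ []) (x : ℕ → A) :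
    ∃ c y, c 0 = 0 ∧ Rep α x c y := by
  let c : ℕ → ℕ := fun n => ∑ i ∈ Finset.range n, (α (x i)).length
  have h : ∀ n, c (n + 1) = c n + (α (x n)).length := fun n => Finset.sum_range_succ _ _
  have hc : StrictMono c := strictMono_nat_of_lt_succ fun n => by
    have := List.length_pos_of_ne_nil (hα (x n))
    have h1 := h n
    omega
  obtain ⟨y, hy⟩ := exists_image (G := ℕ) (c := c) (α := α) (x := x) (fun n => by simpa using h n)
    (rep_locN hα h (by simp [c]))
    (by
      intro n m s t h1 h2 h3
      simp only [Nat.cast_id] at h1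
      have hn := h n
      have hm := h m
      have : n = m := by
        rcases lt_trichotomy n m with hlt | heq | hlt
        · have := hc.monotone (show n + 1 ≤ m from hlt); omega
        · exact heq
        · have := hc.monotone (show m + 1 ≤ n from hlt); omega
      subst this
      exact ⟨rfl, by omega⟩)
  exact ⟨c, y, by simp [c], hy⟩

theorem exists_cutsZ (len : ℤ → ℕ) (s : ℤ) :
    ∃ c : ℤ → ℤ, c 0 = s ∧ ∀ n, c (n + 1) = c n + len n := by
  refine ⟨fun n => s + (∑ i ∈ Finset.range n.toNat, (len i : ℤ)) -
    ∑ i ∈ Finset.range (-n).toNat, (len (-1 - i) : ℤ), by simp, fun n => ?_⟩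
  rcases le_or_gt 0 n with hn | hn
  · obtain ⟨m, rfl⟩ := Int.eq_ofNat_of_zero_le hn
    have h1 : ((m : ℤ) + 1).toNat = m + 1 := by omega
    have h2 : (-((m : ℤ) + 1)).toNat = 0 := by omega
    have h3 : (-(m : ℤ)).toNat = 0 := by omega
    simp only [h1, h2, h3, Int.toNat_natCast, Finset.sum_range_succ]
    simp
    ring
  · obtain ⟨m, hm⟩ := Int.eq_ofNat_of_zero_le (show 0 ≤ -1 - n by omega)
    have hn' : n = -1 - m := by omega
    subst hn'
    have h1 : (-1 - (m : ℤ) + 1).toNat = 0 := by omega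
    have h2 : (-(-1 - (m : ℤ) + 1)).toNat = m := by omega
    have h3 : (-(-1 - (m : ℤ))).toNat = m + 1 := by omega
    have h4 : (-1 - (m : ℤ)).toNat = 0 := by omega
    simp only [h1, h2, h3, h4, Finset.sum_range_succ]
    simp
    ring

theorem exists_imageZ_of_cuts {α : A → List B} (hα : ∀ a, α a ≠ []) (x : ℤ → A) (c : ℤ → ℤ)
    (h : ∀ n, c (n + 1) = c n + ((α (x n)).length : ℤ)) :
    ∃ y, Rep α x c y := by
  have hc := rep_strictMonoZ hα h
  refine exists_image h (rep_locZ hα h) ?_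
  intro n m s t h1 h2 h3
  have hn := h n
  have hm := h m
  have : n = m := by
    rcases lt_trichotomy n m with hlt | heq | hlt
    · have := hc.monotone (show n + 1 ≤ m from hlt); omega
    · exact heq
    · have := hc.monotone (show m + 1 ≤ n from hlt); omega
  subst this
  exact ⟨rfl, by omega⟩

theorem exists_imageZ {α : A → List B} (hα : ∀ a, α a ≠ []) (x : ℤ → A) (s : ℤ) :
    ∃ c y, c 0 = s ∧ Rep α x c y := by
  obtain ⟨c, h0, h⟩ := exists_cutsZ (fun n => (α (x n)).length) s
  obtain ⟨y, hy⟩ := exists_imageZ_of_cuts hα x c h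
  exact ⟨c, y, h0, hy⟩

/-- images of eventually periodic sequences are eventually periodic. -/
theorem per_image {τ : A → List B} {z : ℕ → A} (hτ : ∀ n, τ (z n) ≠ []) {f : ℕ → ℕ} {Y : ℕ → B}
    (h : Rep τ z f Y) {p N : ℕ} (hp : 1 ≤ p) (hz : ∀ n, N ≤ n → z (n + p) = z n) :
    ∃ q M, 1 ≤ q ∧ ∀ n, M ≤ n → Y (n + q) = Y n := by
  have hm := rep_strictMonoN hτ h
  have hq := hm (show N < N + p by omega)
  have key : ∀ k, f (N + k + p) = f (N + k) + (f (N + p) - f N) := by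
    intro k
    induction k with
    | zero => simp only [add_zero]; omega
    | succ k ih =>
      have h1 := (h (N + k + p)).1
      have h2 := (h (N + k)).1
      rw [hz _ (by omega)] at h1
      simp only [Nat.cast_id] at h1 h2
      have e1 : N + (k + 1) + p = N + k + p + 1 := by ring
      rw [e1, h1, ← add_assoc, h2, ih]
      ring
  refine ⟨f (N + p) - f N, f N, by omega, fun n hn => ?_⟩
  obtain ⟨m, h1, h2⟩ := locN_aux hm n ((hm.monotone (Nat.zero_le N)).trans hn)
  have hNm : N ≤ m := by
    by_contra hlt
    push Not at hlt
    have := hm.monotone (show m + 1 ≤ N from hlt)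
    omega
  obtain ⟨k, rfl⟩ := Nat.exists_eq_add_of_le hNm
  have o1 := (h (N + k)).2
  have o2 := (h (N + k + p)).2
  have l1 := (h (N + k)).1
  rw [hz _ hNm, key] at o2
  rw [occ_iff] at o1 o2
  simp only [Nat.cast_id] at o1 o2 l1
  have a1 := o1 (n - f (N + k)) (by omega)
  have a2 := o2 (n - f (N + k)) (by omega)
  rw [← a1] at a2
  convert a2 using 2 <;> omega

end NatZ
end Recog

namespace Recog
universe v
section Core
variable {A : Type v}

open Classical in
/-- merge the consecutive blocks `c, b` into one. -/
noncomputable def mg (c b : List A) : List (List A) → List (List A)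
  | [] => []
  | [x] => [x]
  | x :: y :: l => if x = c ∧ y = b then (c ++ b) :: mg c b l else x :: mg c b (y :: l)

theorem mg_flatten (c b : List A) (l : List (List A)) : (mg c b l).flatten = l.flatten := by
  fun_induction mg c b l with
  | case1 => rfl
  | case2 => rfl
  | case3 x y l h ih => simp [ih, h.1, h.2]
  | case4 x y l h ih => rw [List.flatten_cons, ih, List.flatten_cons (l := x)]

theorem mg_nil_notMem (c b : List A) (l : List (List A)) (h : [] ∉ l) : [] ∉ mg c b l := by
  fun_induction mg c b l with
  | case1 => exact h
  | case2 => exact h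
  | case3 x y l h' ih =>
    simp only [List.mem_cons, not_or] at h ⊢
    refine ⟨?_, ih h.2.2⟩
    intro h0
    have := (List.append_eq_nil_iff.1 h0.symm).1
    exact h.1 (by rw [h'.1, this])
  | case4 x y l h' ih =>
    rw [List.mem_cons, not_or] at h ⊢
    exact ⟨h.1, ih h.2⟩

theorem mg_length_le (c b : List A) (l : List (List A)) : (mg c b l).length ≤ l.length := by
  fun_induction mg c b l with
  | case1 => simp
  | case2 => simp
  | case3 x y l h' ih => simp only [List.length_cons]; omega
  | case4 x y l h' ih => simp only [List.length_cons] at *; omega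

theorem mg_length_lt (c b : List A) (l : List (List A)) (l₁ l₂ : List (List A))
    (h : l = l₁ ++ c :: b :: l₂) : (mg c b l).length < l.length := by
  fun_induction mg c b l generalizing l₁ with
  | case1 => simp at h
  | case2 x =>
    have := congrArg List.length h
    simp at this
    omega
  | case3 x y l h' ih =>
    have := mg_length_le c b l
    simp only [List.length_cons]; omega
  | case4 x y l h' ih =>
    cases l₁ with
    | nil => simp at h; exact absurd ⟨h.1, h.2.1⟩ h'
    | cons a l₁ =>
      simp only [List.cons_append, List.cons.injEq] at h
      have := ih l₁ h.2
      simp only [List.length_cons] at *; omega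

open Classical in
/-- enumeration of the places kept after merging. -/
noncomputable def gcut (c b : List A) (z : ℕ → List A) : ℕ → ℕ
  | 0 => 0
  | t + 1 => gcut c b z t +
      if z (gcut c b z t) = c ∧ z (gcut c b z t + 1) = b then 2 else 1

open Classical in
noncomputable def zmg (c b : List A) (z : ℕ → List A) (t : ℕ) : List A :=
  if z (gcut c b z t) = c ∧ z (gcut c b z t + 1) = b then c ++ b else z (gcut c b z t)

theorem mg_occ (c b : List A) (z : ℕ → List A) (l : List (List A)) (t : ℕ)
    (h : Occ l z (gcut c b z t)) (hb : z (gcut c b z t + l.length) ≠ b) :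
    Occ (mg c b l) (zmg c b z) t ∧
      gcut c b z (t + (mg c b l).length) = gcut c b z t + l.length := by
  fun_induction mg c b l generalizing t with
  | case1 => simp [Occ]
  | case2 x =>
    simp only [List.length_cons, List.length_nil, zero_add] at hb
    simp only [Occ, and_true] at h
    simp [Occ, zmg, gcut, hb, h]
  | case3 x y l h' ih =>
    obtain ⟨h1, h2, h3⟩ := h
    have hc : z (gcut c b z t) = c ∧ z (gcut c b z t + 1) = b := by
      rw [h1, h2]; exact h'
    have hg : gcut c b z (t + 1) = gcut c b z t + 2 := by
      rw [gcut, if_pos hc]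
    simp only [List.length_cons] at hb
    obtain ⟨i1, i2⟩ := ih (t + 1) (by rw [hg]; exact h3)
      (by rw [hg]; convert hb using 2; ring)
    refine ⟨⟨by rw [zmg, if_pos hc], i1⟩, ?_⟩
    simp only [List.length_cons]
    rw [show t + ((mg c b l).length + 1) = t + 1 + (mg c b l).length by ring, i2, hg]
    ring
  | case4 x y l h' ih =>
    obtain ⟨h1, h2⟩ := h
    have h2' := h2
    obtain ⟨h2, h3⟩ := h2
    have hc : ¬ (z (gcut c b z t) = c ∧ z (gcut c b z t + 1) = b) := by
      rw [h1, h2]; exact h'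
    have hg : gcut c b z (t + 1) = gcut c b z t + 1 := by
      rw [gcut, if_neg hc]
    rw [List.length_cons] at hb
    obtain ⟨i1, i2⟩ := ih (t + 1) (by rw [hg]; exact h2')
      (by rw [hg]; convert hb using 2; ring)
    refine ⟨⟨by rw [zmg, if_neg hc, h1], i1⟩, ?_⟩
    rw [List.length_cons, List.length_cons (a := x)]
    rw [show t + ((mg c b (y :: l)).length + 1) = t + 1 + (mg c b (y :: l)).length by ring, i2, hg]
    ring

theorem gcut_strictMono (c b : List A) (z : ℕ → List A) : StrictMono (gcut c b z) := by
  apply strictMono_nat_of_lt_succ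
  intro n
  rw [gcut]
  split_ifs <;> omega

theorem gcut_surj (c b : List A) (z : ℕ → List A) (p : ℕ) (hp : z p ≠ b) :
    ∃ t, gcut c b z t = p := by
  obtain ⟨t, h1, h2⟩ := locN_aux (gcut_strictMono c b z) p (by simp [gcut])
  refine ⟨t, ?_⟩
  rw [gcut] at h2
  split_ifs at h2 with h
  · by_contra hne
    have : p = gcut c b z t + 1 := by omega
    rw [this] at hp
    exact hp h.2
  · omega

/-- A synchronised decomposition. -/
structure Dec (σ : A → List A) (w w' : ℕ → A) (c c' : ℕ → ℕ) (Y : ℕ → A)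
    (α : A → List (List A)) (z : ℕ → List A) (e e' f : ℕ → ℕ) : Prop where
  fl : ∀ a, (α a).flatten = σ a
  nn : ∀ a, [] ∉ α a
  r : Rep α w e z
  r' : Rep α w' e' z
  zn : ∀ n, z n ≠ []
  rz : Rep (fun b => b) z f Y
  f0 : f 0 = 0
  fe : ∀ n, f (e n) = c n
  fe' : ∀ n, f (e' n) = c' n

theorem Dec.ne {σ : A → List A} (hσ : ∀ a, σ a ≠ []) {w w' : ℕ → A} {c c' : ℕ → ℕ} {Y : ℕ → A}
    {α : A → List (List A)} {z : ℕ → List A} {e e' f : ℕ → ℕ} (D : Dec σ w w' c c' Y α z e e' f)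
    (a : A) : α a ≠ [] := by
  intro h
  apply hσ a
  rw [← D.fl, h]
  rfl

theorem Dec.fmono {σ : A → List A} {w w' : ℕ → A} {c c' : ℕ → ℕ} {Y : ℕ → A}
    {α : A → List (List A)} {z : ℕ → List A} {e e' f : ℕ → ℕ} (D : Dec σ w w' c c' Y α z e e' f) :
    StrictMono f :=
  rep_strictMonoN D.zn D.rz

theorem dec_step {σ : A → List A} (hσ : ∀ a, σ a ≠ []) {w w' : ℕ → A} {c c' : ℕ → ℕ} {Y : ℕ → A}
    {α : A → List (List A)} {z : ℕ → List A} {e e' f : ℕ → ℕ} (D : Dec σ w w' c c' Y α z e e' f)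
    (d b : List A) (hb : ∀ a l, α a ≠ b :: l) :
    ∃ z₁ e₁ e₁' f₁, Dec σ w w' c c' Y (fun a => mg d b (α a)) z₁ e₁ e₁' f₁ := by
  have hz : ∀ (w : ℕ → A) (e : ℕ → ℕ), Rep α w e z → ∀ n, z (e n) ≠ b := by
    intro w e h n hn
    have h1 := (h n).2
    cases hα : α (w n) with
    | nil => exact D.ne hσ _ hα
    | cons x l =>
      rw [hα] at h1
      apply hb (w n) l
      rw [hα, ← h1.1, hn]
  have key : ∀ (w : ℕ → A) (e : ℕ → ℕ), Rep α w e z → ∃ e₁ : ℕ → ℕ,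
      (∀ n, gcut d b z (e₁ n) = e n) ∧ Rep (fun a => mg d b (α a)) w e₁ (zmg d b z) := by
    intro w e h
    choose e₁ he₁ using fun n => gcut_surj d b z (e n) (hz w e h n)
    refine ⟨e₁, he₁, fun n => ?_⟩
    obtain ⟨h1, h2⟩ := h n
    have h3 := hz w e h (n + 1)
    simp only [Nat.cast_id] at h1 ⊢
    rw [h1] at h3
    rw [← he₁ n] at h2 h3
    obtain ⟨i1, i2⟩ := mg_occ d b z (α (w n)) (e₁ n) h2 h3
    refine ⟨?_, i1⟩
    apply (gcut_strictMono d b z).injective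
    rw [i2, he₁, he₁, h1]
  obtain ⟨e₁, g1, g2⟩ := key w e D.r
  obtain ⟨e₁', g1', g2'⟩ := key w' e' D.r'
  refine ⟨zmg d b z, e₁, e₁', fun t => f (gcut d b z t), ?_⟩
  refine ⟨fun a => by rw [mg_flatten, D.fl], fun a => mg_nil_notMem _ _ _ (D.nn a), g2, g2', ?_, ?_,
    D.f0, fun n => by rw [g1, D.fe], fun n => by rw [g1', D.fe']⟩
  · intro t
    rw [zmg]
    split_ifs with h
    · rw [← h.1]
      simp [D.zn]
    · exact D.zn _
  intro t
  obtain ⟨h1, h2⟩ := D.rz (gcut d b z t)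
  obtain ⟨h3, h4⟩ := D.rz (gcut d b z t + 1)
  simp only [Nat.cast_id] at h1 h3 ⊢
  show f (gcut d b z (t + 1)) = f (gcut d b z t) + (zmg d b z t).length ∧
    Occ (zmg d b z t) Y (f (gcut d b z t))
  classical
  have hg : gcut d b z (t + 1) = gcut d b z t +
      if z (gcut d b z t) = d ∧ z (gcut d b z t + 1) = b then 2 else 1 := by
    rw [gcut]
  rw [hg, zmg]
  split_ifs with h
  · rw [h.1] at h1 h2
    rw [h.2, h1] at h3 h4
    refine ⟨?_, occ_append.2 ⟨h2, h4⟩⟩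
    rw [show gcut d b z t + 2 = gcut d b z t + 1 + 1 from rfl, h3, List.length_append]
    ring
  · exact ⟨h1, h2⟩

theorem dec_min [Fintype A] {σ : A → List A} (hσ : ∀ a, σ a ≠ []) {w w' : ℕ → A} {c c' : ℕ → ℕ}
    {Y : ℕ → A} (h : Rep σ w c Y) (h' : Rep σ w' c' Y) :
    ∃ α z e e' f, Dec σ w w' c c' Y α z e e' f ∧ ∀ a, ∀ b ∈ α a, ∃ a' l, α a' = b :: l := by
  have hex : ∃ N, ∃ α z e e' f, Dec σ w w' c c' Y α z e e' f ∧ ∑ a, (α a).length = N := by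
    have hs : ∀ (w : ℕ → A) (c : ℕ → ℕ), Rep σ w c Y →
        Rep (fun a => (σ a).map fun x => [x]) w c (fun n => [Y n]) := by
      intro w c h n
      obtain ⟨h1, h2⟩ := h n
      refine ⟨by simpa using h1, ?_⟩
      rw [occ_iff] at h2 ⊢
      intro k hk
      simp only [List.length_map] at hk
      simp [← h2 k hk]
    refine ⟨_, fun a => (σ a).map fun x => [x], fun n => [Y n], c, c', fun n => n, ?_, rfl⟩
    refine ⟨fun a => ?_, fun a => by simp, hs _ _ h, hs _ _ h', fun n => by simp, ?_, rfl, fun n => rfl, fun n => rfl⟩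
    · induction σ a with
      | nil => rfl
      | cons x l ih => simp [ih]
    · intro n
      simp [Occ]
  classical
  obtain ⟨α, z, e, e', f, D, hN⟩ := Nat.find_spec hex
  refine ⟨α, z, e, e', f, D, ?_⟩
  intro a b hba
  by_contra hno
  push Not at hno
  obtain ⟨l₁, l₂, hl⟩ := List.append_of_mem hba
  rcases List.eq_nil_or_concat l₁ with rfl | ⟨l₁, d, rfl⟩
  · exact hno a l₂ hl
  · obtain ⟨z₁, e₁, e₁', f₁, D₁⟩ := dec_step hσ D d b hno
    have hlt : ∑ a, (mg d b (α a)).length < ∑ a, (α a).length := by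
      apply Finset.sum_lt_sum
      · intro i _
        exact mg_length_le _ _ _
      · exact ⟨a, Finset.mem_univ _, mg_length_lt _ _ _ l₁ l₂ (by simpa using hl)⟩
    rw [hN] at hlt
    exact Nat.find_min hex hlt ⟨_, _, _, _, _, D₁, rfl⟩

/-- `σ` factors through a smaller alphabet. -/
def Factors [Fintype A] (σ : A → List A) : Prop :=
  ∃ (B : Type v) (_ : Fintype B) (α : A → List B) (τ : B → List A),
    Fintype.card B < Fintype.card A ∧ (∀ a, α a ≠ []) ∧ (∀ b, τ b ≠ []) ∧
    ∀ a, (α a).flatMap τ = σ a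

theorem factors_of_dec [Fintype A] {σ : A → List A} (hσ : ∀ a, σ a ≠ [])
    {w w' : ℕ → A} {c c' : ℕ → ℕ} {Y : ℕ → A}
    {α : A → List (List A)} {z : ℕ → List A} {e e' f : ℕ → ℕ} (D : Dec σ w w' c c' Y α z e e' f)
    (hhd : ∀ a, ∀ b ∈ α a, ∃ a' l, α a' = b :: l)
    (hni : ¬ Function.Injective fun a => (α a).head (D.ne hσ a)) : Factors σ := by
  classical
  let U : Finset (List A) := Finset.univ.image fun a => (α a).head (D.ne hσ a)
  have hU : ∀ a, ∀ b ∈ α a, b ∈ U := by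
    intro a b hb
    obtain ⟨a', l, h⟩ := hhd a b hb
    refine Finset.mem_image.2 ⟨a', Finset.mem_univ _, ?_⟩
    simp [h]
  refine ⟨U, inferInstance, fun a => (α a).attachWith (· ∈ U) (hU a), fun b => b.1, ?_, ?_, ?_, ?_⟩
  · rw [Fintype.card_coe]
    refine lt_of_le_of_ne Finset.card_image_le ?_
    intro heq
    apply hni
    have := Finset.card_image_iff.1 heq
    exact Set.injOn_univ.1 (by simpa using this)
  · intro a h
    apply D.ne hσ a
    have := congrArg List.length h
    simpa using this
  · rintro ⟨b, hb⟩ h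
    obtain ⟨a, _, rfl⟩ := Finset.mem_image.1 hb
    apply D.nn a
    have h' : (α a).head (D.ne hσ a) = [] := h
    rw [← h']
    exact List.head_mem _
  · intro a
    rw [← D.fl a]
    rw [List.flatMap_def]
    congr 1
    simp

end Core
end Recog

namespace Recog
universe v
section Det
variable {A : Type v} {B : Type*}

/-- state: a cut of one representation at `p`, the next word `v` reaching a cut of the other. -/
def St (z : ℕ → B) (e e' : ℕ → ℕ) (p : ℕ) (v : List B) : Prop :=
  Occ v z p ∧ v ≠ [] ∧ ((∃ i j, e i = p ∧ e' j = p + v.length) ∨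
    (∃ i j, e' i = p ∧ e j = p + v.length))

theorem st_step_aux {α : A → List B} {w : ℕ → A} {z : ℕ → B} {e e' : ℕ → ℕ}
    (h : Rep α w e z) (hd : ∀ n m, e n ≠ e' m) {p : ℕ} {v : List B} (ho : Occ v z p)
    (hr : ∃ i j, e i = p ∧ e' j = p + v.length) :
    ∃ a, Occ (α a) z p ∧
      (((α a).length < v.length ∧ Occ (v.drop (α a).length) z (p + (α a).length) ∧
        (∃ i j, e i = p + (α a).length ∧ e' j = p + (α a).length + (v.drop (α a).length).length)) ∨
       (v.length < (α a).length ∧ Occ ((α a).drop v.length) z (p + v.length) ∧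
        (∃ i j, e' i = p + v.length ∧ e j = p + v.length + ((α a).drop v.length).length))) := by
  obtain ⟨i, j, hi, hj⟩ := hr
  obtain ⟨h1, h2⟩ := h i
  simp only [Nat.cast_id] at h1
  rw [hi] at h1 h2
  have hdrop : ∀ (l : List B) (n : ℕ), n ≤ l.length → Occ l z p → Occ (l.drop n) z (p + n) := by
    intro l n hn hl
    rw [← List.take_append_drop n l, occ_append] at hl
    have := hl.2
    rwa [List.length_take, Nat.cast_id, min_eq_left hn] at this
  refine ⟨w i, h2, ?_⟩
  rcases lt_trichotomy (α (w i)).length v.length with hlt | heq | hlt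
  · left
    refine ⟨hlt, hdrop _ _ hlt.le ho, i + 1, j, h1, ?_⟩
    rw [List.length_drop]
    omega
  · exact absurd (by rw [h1, hj, heq]) (hd (i + 1) j)
  · right
    refine ⟨hlt, hdrop _ _ hlt.le h2, j, i + 1, hj, ?_⟩
    rw [List.length_drop]
    omega

theorem st_step {α : A → List B} {w w' : ℕ → A} {z : ℕ → B} {e e' : ℕ → ℕ}
    (h : Rep α w e z) (h' : Rep α w' e' z) (hd : ∀ n m, e n ≠ e' m) {p : ℕ} {v : List B}
    (hs : St z e e' p v) :
    ∃ a, Occ (α a) z p ∧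
      (((α a).length < v.length ∧ St z e e' (p + (α a).length) (v.drop (α a).length)) ∨
       (v.length < (α a).length ∧ St z e e' (p + v.length) ((α a).drop v.length))) := by
  have hne : ∀ (l : List B) (n : ℕ), n < l.length → l.drop n ≠ [] := by
    intro l n hn h0
    have := congrArg List.length h0
    simp at this
    omega
  obtain ⟨ho, hv, hr | hr⟩ := hs
  · obtain ⟨a, h1, ⟨h2, h3, h4⟩ | ⟨h2, h3, h4⟩⟩ := st_step_aux h hd ho hr
    · exact ⟨a, h1, Or.inl ⟨h2, h3, hne _ _ h2, Or.inl h4⟩⟩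
    · exact ⟨a, h1, Or.inr ⟨h2, h3, hne _ _ h2, Or.inr h4⟩⟩
  · obtain ⟨a, h1, ⟨h2, h3, h4⟩ | ⟨h2, h3, h4⟩⟩ :=
      st_step_aux h' (fun n m => (hd m n).symm) ho hr
    · exact ⟨a, h1, Or.inl ⟨h2, h3, hne _ _ h2, Or.inr h4⟩⟩
    · exact ⟨a, h1, Or.inr ⟨h2, h3, hne _ _ h2, Or.inl h4⟩⟩

theorem st_det {α : A → List B} (hα : ∀ a, α a ≠ [])
    (hinj : Function.Injective fun a => (α a).head (hα a)) {w w' : ℕ → A} {z : ℕ → B}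
    {e e' : ℕ → ℕ} (h : Rep α w e z) (h' : Rep α w' e' z) (hd : ∀ n m, e n ≠ e' m) (i : ℕ) :
    ∀ p p' v, St z e e' p v → St z e e' p' v → z (p + i) = z (p' + i) := by
  have hhead : ∀ a p, Occ (α a) z p → z p = (α a).head (hα a) := by
    intro a p ho
    have := occ_iff.1 ho 0 (List.length_pos_of_ne_nil (hα a))
    rw [List.head_eq_getElem]
    simpa using this
  induction i using Nat.strong_induction_on with
  | _ i ih =>
    intro p p' v hs hs'
    have ho := occ_iff.1 hs.1
    have ho' := occ_iff.1 hs'.1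
    simp only [Nat.cast_id] at ho ho'
    have hvl := List.length_pos_of_ne_nil hs.2.1
    by_cases hi : i < v.length
    · rw [ho i hi, ho' i hi]
    · push Not at hi
      obtain ⟨a, h1, h2⟩ := st_step h h' hd hs
      obtain ⟨a', h1', h2'⟩ := st_step h h' hd hs'
      have haa : a = a' := by
        apply hinj
        show (α a).head (hα a) = (α a').head (hα a')
        rw [← hhead a p h1, ← hhead a' p' h1']
        have e1 := ho 0 hvl
        have e2 := ho' 0 hvl
        rw [← e2] at e1
        simpa using e1
      subst haa
      have hal := List.length_pos_of_ne_nil (hα a)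
      rcases h2 with ⟨h2, h3⟩ | ⟨h2, h3⟩
      · rcases h2' with ⟨h2', h3'⟩ | ⟨h2', h3'⟩
        · have := ih (i - (α a).length) (by omega) _ _ _ h3 h3'
          convert this using 2 <;> omega
        · omega
      · rcases h2' with ⟨h2', h3'⟩ | ⟨h2', h3'⟩
        · omega
        · have := ih (i - v.length) (by omega) _ _ _ h3 h3'
          convert this using 2 <;> omega

theorem det_periodic [Finite A] {α : A → List B} (hα : ∀ a, α a ≠ [])
    (hinj : Function.Injective fun a => (α a).head (hα a)) {w w' : ℕ → A} {z : ℕ → B}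
    {e e' : ℕ → ℕ} (h : Rep α w e z) (h' : Rep α w' e' z) (hd : ∀ n m, e n ≠ e' m)
    (he : e 0 = 0) : ∃ p N, 1 ≤ p ∧ ∀ n, N ≤ n → z (n + p) = z n := by
  obtain ⟨v₀, hv₀, hov⟩ := exists_occ z 0 (e' 0)
  have hs0 : St z e e' 0 v₀ := by
    refine ⟨hov, ?_, Or.inl ⟨0, 0, he, by omega⟩⟩
    rintro rfl
    simp at hv₀
    exact hd 0 0 (by omega)
  let T : Set (List B) := {v | v <:+ v₀} ∪ ⋃ a, {v | v <:+ α a}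
  have hfin : ∀ l : List B, {v | v <:+ l}.Finite := by
    intro l
    refine (List.finite_toSet l.tails).subset ?_
    intro v hv
    exact (List.mem_tails _ _).2 hv
  have hT : T.Finite := (hfin _).union (Set.finite_iUnion fun a => hfin _)
  have hsuf : ∀ v v', v ∈ T → v' <:+ v → v' ∈ T := by
    rintro v v' (hv | hv) hs
    · exact Or.inl (hs.trans hv)
    · obtain ⟨a, ha⟩ := Set.mem_iUnion.1 hv
      exact Or.inr (Set.mem_iUnion.2 ⟨a, hs.trans ha⟩)
  have hunb : ∀ n : ℕ, ∃ p, n ≤ p ∧ ∃ v ∈ T, St z e e' p v := by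
    intro n
    induction n with
    | zero => exact ⟨0, le_rfl, v₀, Or.inl (List.suffix_refl _), hs0⟩
    | succ n ih =>
      obtain ⟨p, hp, v, hv, hs⟩ := ih
      obtain ⟨a, _, ⟨h2, h3⟩ | ⟨h2, h3⟩⟩ := st_step h h' hd hs
      · have := List.length_pos_of_ne_nil (hα a)
        exact ⟨_, by omega, _, hsuf _ _ hv (List.drop_suffix _ _), h3⟩
      · have := List.length_pos_of_ne_nil hs.2.1
        exact ⟨_, by omega, _, Or.inr (Set.mem_iUnion.2 ⟨a, List.drop_suffix _ _⟩), h3⟩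
  choose P hP V hVT hV using hunb
  have hinf : (Set.range P).Infinite := by
    apply Set.infinite_of_not_bddAbove
    rintro ⟨M, hM⟩
    have := hM ⟨M + 1, rfl⟩
    have := hP (M + 1)
    omega
  obtain ⟨g, hg⟩ : ∃ g : ℕ → List B, ∀ p ∈ Set.range P, g p ∈ T ∧ St z e e' p (g p) := by
    have : ∀ p, ∃ v, p ∈ Set.range P → v ∈ T ∧ St z e e' p v := by
      intro p
      by_cases hp : p ∈ Set.range P
      · obtain ⟨n, rfl⟩ := hp
        exact ⟨V n, fun _ => ⟨hVT n, hV n⟩⟩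
      · exact ⟨[], fun h => absurd h hp⟩
    choose g hg using this
    exact ⟨g, hg⟩
  obtain ⟨p, hp, p', hp', hne, heq⟩ :=
    hinf.exists_ne_map_eq_of_mapsTo (f := g) (fun p hp => (hg p hp).1) hT
  wlog hlt : p < p' generalizing p p'
  · exact this p' hp' p hp hne.symm heq.symm (by omega)
  refine ⟨p' - p, p, by omega, fun n hn => ?_⟩
  have := st_det hα hinj h h' hd (n - p) p p' (g p) (hg p hp).2 (heq ▸ (hg p' hp').2)
  rw [show p + (n - p) = n by omega, show p' + (n - p) = n + (p' - p) by omega] at this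
  exact this.symm

theorem right_merge [Fintype A] {σ : A → List A} (hσ : ∀ a, σ a ≠ []) {w w' : ℕ → A}
    {c c' : ℕ → ℕ} {Y : ℕ → A} (h : Rep σ w c Y) (h' : Rep σ w' c' Y) (h0 : c 0 = c' 0)
    (hw : w 0 ≠ w' 0) : Factors σ := by
  obtain ⟨α, z, e, e', f, D, hhd⟩ := dec_min hσ h h'
  apply factors_of_dec hσ D hhd
  intro hinj
  apply hw
  apply hinj
  have he : e 0 = e' 0 := D.fmono.injective (by rw [D.fe, D.fe', h0])
  have hhead : ∀ a p, Occ (α a) z p → z p = (α a).head (D.ne hσ a) := by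
    intro a p ho
    have := occ_iff.1 ho 0 (List.length_pos_of_ne_nil (D.ne hσ a))
    rw [List.head_eq_getElem]
    simpa using this
  show (α (w 0)).head _ = (α (w' 0)).head _
  rw [← hhead _ _ (D.r 0).2, ← hhead _ _ (D.r' 0).2, he]

theorem right_disjoint [Fintype A] {σ : A → List A} (hσ : ∀ a, σ a ≠ []) {w w' : ℕ → A}
    {c c' : ℕ → ℕ} {Y : ℕ → A} (h : Rep σ w c Y) (h' : Rep σ w' c' Y) (h0 : c 0 = 0)
    (hd : ∀ n m, c n ≠ c' m) :
    Factors σ ∨ ∃ p N, 1 ≤ p ∧ ∀ n, N ≤ n → Y (n + p) = Y n := by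
  obtain ⟨α, z, e, e', f, D, hhd⟩ := dec_min hσ h h'
  by_cases hinj : Function.Injective fun a => (α a).head (D.ne hσ a)
  · right
    have he : e 0 = 0 := D.fmono.injective (by rw [D.fe, D.f0, h0])
    obtain ⟨p, N, hp, hz⟩ := det_periodic (D.ne hσ) hinj D.r D.r'
      (fun n m hnm => hd n m (by rw [← D.fe, ← D.fe', hnm])) he
    exact per_image (τ := fun b : List A => b) (z := z) D.zn D.rz hp hz
  · exact Or.inl (factors_of_dec hσ D hhd hinj)

end Det
end Recog

namespace Recog
universe v
section Two
variable {A : Type v} {B : Type*}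

theorem rep_restrict {α : A → List B} (hα : ∀ a, α a ≠ []) {x : ℤ → A} {c : ℤ → ℤ} {y : ℤ → B}
    (h : Rep α x c y) (n P : ℤ) (hP : P ≤ c n) :
    Rep α (fun t : ℕ => x (n + t)) (fun t : ℕ => (c (n + t) - P).toNat)
      (fun t : ℕ => y (P + t)) := by
  have hm := (rep_strictMonoZ hα (fun n => (h n).1)).monotone
  intro t
  obtain ⟨h1, h2⟩ := h (n + t)
  have h3 : c n ≤ c (n + t) := hm (by omega)
  constructor
  · simp only [Nat.cast_id]
    push_cast
    rw [← add_assoc, h1]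
    omega
  · rw [occ_iff] at h2 ⊢
    intro k hk
    rw [← h2 k hk]
    simp only [Nat.cast_id]
    congr 1
    push_cast
    rw [Int.toNat_of_nonneg (by omega)]
    ring

theorem occ_reverse {l : List B} {y : ℤ → B} {p : ℤ} (h : Occ l y p) :
    Occ l.reverse (fun n : ℤ => y (-1 - n)) (-(p + l.length)) := by
  rw [occ_iff] at h ⊢
  intro k hk
  rw [List.length_reverse] at hk
  rw [List.getElem_reverse, ← h _ (by omega)]
  congr 1
  omega

theorem rep_reverse {α : A → List B} {x : ℤ → A} {c : ℤ → ℤ} {y : ℤ → B} (h : Rep α x c y) :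
    Rep (fun a => (α a).reverse) (fun n => x (-1 - n)) (fun n => - c (-n))
      (fun n => y (-1 - n)) := by
  intro n
  obtain ⟨h1, h2⟩ := h (-1 - n)
  rw [show (-1 - n + 1 : ℤ) = - n by ring] at h1
  refine ⟨?_, ?_⟩
  · beta_reduce
    rw [h1, List.length_reverse, show -(n+1) = -1 - n by ring]
    ring
  · have := occ_reverse h2
    rwa [← h1] at this

theorem factors_reverse [Fintype A] {σ : A → List A} (h : Factors fun a => (σ a).reverse) :
    Factors σ := by
  obtain ⟨B, i, α, τ, h1, h2, h3, h4⟩ := h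
  refine ⟨B, i, fun a => (α a).reverse, fun b => (τ b).reverse, h1, fun a => by simp [h2],
    fun b => by simp [h3], fun a => ?_⟩
  have h5 : flatMap τ (α a) = (σ a).reverse := h4 a
  rw [← List.reverse_inj, ← h5, List.reverse_flatMap]
  simp [Function.comp_def]

theorem right_step [Fintype A] {σ : A → List A} (hσ : ∀ a, σ a ≠ []) {x x' : ℤ → A}
    {c c' : ℤ → ℤ} {y : ℤ → A} (h : Rep σ x c y) (h' : Rep σ x' c' y) {n m : ℤ}
    (h0 : c n = c' m) (hw : ∃ k : ℕ, x (n + k) ≠ x' (m + k)) : Factors σ := by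
  classical
  have hlt : ∀ k : ℕ, (∀ j < k, x (n + j) = x' (m + j)) → c (n + k) = c' (m + k) := by
    intro k
    induction k with
    | zero => intro _; simpa using h0
    | succ k ih =>
      intro hk
      have := ih fun j hj => hk j (by omega)
      push_cast
      rw [← add_assoc, ← add_assoc, (h _).1, (h' _).1, this, hk k (by omega)]
  have hk := hlt (Nat.find hw) fun j hj => by
    have := Nat.find_min hw hj
    push Not at this
    exact this
  have hf := Nat.find_spec hw
  set k := Nat.find hw
  refine right_merge hσ (rep_restrict hσ h (n + k) (c (n + k)) le_rfl)
    (rep_restrict hσ h' (m + k) (c (n + k)) hk.le) ?_ ?_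
  · simp [hk]
  · simpa using hf

theorem left_step [Fintype A] {σ : A → List A} (hσ : ∀ a, σ a ≠ []) {x x' : ℤ → A}
    {c c' : ℤ → ℤ} {y : ℤ → A} (h : Rep σ x c y) (h' : Rep σ x' c' y) {n m : ℤ}
    (h0 : c n = c' m) (hw : ∃ k : ℕ, x (n - 1 - k) ≠ x' (m - 1 - k)) : Factors σ := by
  apply factors_reverse
  refine right_step (n := -n) (m := -m) (fun a => by simp [hσ]) (rep_reverse h) (rep_reverse h')
    (by simp [h0]) ?_
  obtain ⟨k, hk⟩ := hw
  refine ⟨k, ?_⟩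
  convert hk using 2 <;> ring

theorem step [Fintype A] {σ : A → List A} (hσ : ∀ a, σ a ≠ []) {x x' : ℤ → A}
    {c c' : ℤ → ℤ} {y : ℤ → A} (h : Rep σ x c y) (h' : Rep σ x' c' y)
    (hne : ¬ ∃ d, ∀ n, x' n = x (n + d) ∧ c' n = c (n + d)) :
    Factors σ ∨ ∃ P : ℤ, ∃ p N : ℕ, 1 ≤ p ∧
      ∀ n : ℕ, N ≤ n → y (P + (n + p : ℕ)) = y (P + n) := by
  have hm := rep_strictMonoZ hσ (fun n => (h n).1)
  have hm' := rep_strictMonoZ hσ (fun n => (h' n).1)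
  by_cases hc : ∃ n m, c n = c' m
  · left
    obtain ⟨n, m, h0⟩ := hc
    by_contra hF
    have hr : ∀ k : ℕ, x (n + k) = x' (m + k) := by
      by_contra hx
      push Not at hx
      exact hF (right_step hσ h h' h0 hx)
    have hl : ∀ k : ℕ, x (n - 1 - k) = x' (m - 1 - k) := by
      by_contra hx
      push Not at hx
      exact hF (left_step hσ h h' h0 hx)
    apply hne
    have hx : ∀ t, x' t = x (t + (n - m)) := by
      intro t
      rcases le_or_gt m t with ht | ht
      · have := hr (t - m).toNat
        rw [Int.toNat_of_nonneg (by omega)] at this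
        rw [show t + (n - m) = n + (t - m) by ring, this]
        congr 1
        ring
      · have := hl (m - 1 - t).toNat
        rw [Int.toNat_of_nonneg (by omega)] at this
        rw [show t + (n - m) = n - 1 - (m - 1 - t) by ring, this]
        congr 1
        ring
    refine ⟨n - m, fun t => ⟨hx t, ?_⟩⟩
    induction t using Int.inductionOn' (b := m) with
    | zero => rw [← h0]; congr 1; ring
    | succ k _ ih =>
      rw [(h' _).1, show k + 1 + (n - m) = k + (n - m) + 1 by ring, (h _).1, ih, hx]
    | pred k _ ih =>
      have h1 := (h' (k - 1)).1
      have h2 := (h (k - 1 + (n - m))).1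
      rw [← hx, show k - 1 + (n - m) + 1 = k + (n - m) by ring, ← ih] at h2
      rw [show k - 1 + 1 = k by ring] at h1
      linarith
  · push Not at hc
    obtain ⟨m, h1, h2⟩ := locZ_aux hm' (c 0)
    have := right_disjoint hσ (rep_restrict hσ h 0 (c 0) le_rfl)
      (rep_restrict hσ h' (m + 1) (c 0) h2.le) (by simp) (by
        intro i j hij
        have a1 := hm.monotone (show (0 : ℤ) ≤ 0 + (i : ℤ) by omega)
        have a2 := hm'.monotone (show m + 1 ≤ m + 1 + (j : ℤ) by omega)
        exact hc (0 + i) (m + 1 + j) (by omega))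
    rcases this with hF | ⟨p, N, hp, hper⟩
    · exact Or.inl hF
    · exact Or.inr ⟨c 0, p, N, hp, hper⟩

end Two
end Recog

namespace Recog
universe v
section Lim
variable {A B : Type*}

theorem ultra_lim {F : Type*} {f : ℕ → F} {S : Set F} (hS : S.Finite)
    (h : ∀ᶠ L in (hyperfilter ℕ : Filter ℕ), f L ∈ S) :
    ∃ s, ∀ᶠ L in (hyperfilter ℕ : Filter ℕ), f L = s := by
  have : ∀ᶠ L in (hyperfilter ℕ : Filter ℕ), ∃ s ∈ S, f L = s := by
    filter_upwards [h] with L hL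
    exact ⟨_, hL, rfl⟩
  obtain ⟨s, _, hs⟩ := (Ultrafilter.eventually_exists_mem_iff hS).1 this
  exact ⟨s, hs⟩

theorem ultra_ge (N : ℕ) : ∀ᶠ L in (hyperfilter ℕ : Filter ℕ), N ≤ L :=
  Nat.hyperfilter_le_atTop (eventually_ge_atTop N)

theorem lim [Finite B] {τ : B → List A} (hτ : ∀ b, τ b ≠ []) {v : ℕ → B} {e : ℕ → ℕ} {u : ℕ → A}
    (h : Rep τ v e u) (h0 : e 0 = 0) (i : ℕ → ℕ) (hi : ∀ L, L ≤ i L) :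
    ∃ (x : ℤ → B) (c : ℤ → ℤ) (y : ℤ → A), Rep τ x c y ∧ InX v x ∧
      (∀ n : ℤ, ∀ᶠ L in (hyperfilter ℕ : Filter ℕ), u ((i L : ℤ) + n).toNat = y n) ∧
      c 0 ≤ 0 ∧ 0 < c 1 ∧
      ∀ᶠ L in (hyperfilter ℕ : Filter ℕ), (c 0 = 0 ↔ ∃ n, i L = e n) := by
  have hm : StrictMono e := rep_strictMonoN (fun n => hτ _) h
  have hstep : ∀ n, e (n + 1) = e n + (τ (v n)).length := fun n => by simpa using (h n).1
  obtain ⟨K, hK⟩ : ∃ K, ∀ b, (τ b).length ≤ K := by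
    obtain ⟨K, hK⟩ := (Set.finite_range fun b => (τ b).length).bddAbove
    exact ⟨K, fun b => hK ⟨b, rfl⟩⟩
  have hlip : ∀ a b, e (a + b) ≤ e a + K * b := by
    intro a b
    induction b with
    | zero => simp
    | succ b ih =>
      rw [← add_assoc, hstep]
      have := hK (v (a + b))
      nlinarith
  have hloc := fun L => locN_aux hm (i L) (by omega)
  choose k hk1 hk2 using hloc
  have hkge : ∀ N : ℕ, ∀ᶠ L in (hyperfilter ℕ : Filter ℕ), N ≤ k L := by
    intro N
    filter_upwards [ultra_ge (K * N)] with L hL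
    by_contra hlt
    have a1 := hlip 0 (k L + 1)
    have a2 := hk2 L
    have a3 := hi L
    rw [zero_add, h0] at a1
    have : K * (k L + 1) ≤ K * N := Nat.mul_le_mul_left _ (by omega)
    omega
  have hxl : ∀ n : ℤ, ∃ b, ∀ᶠ L in (hyperfilter ℕ : Filter ℕ), v ((k L : ℤ) + n).toNat = b :=
    fun n => ultra_lim (Set.toFinite Set.univ) (Eventually.of_forall fun _ => trivial)
  choose x hx using hxl
  have hcl : ∀ n : ℤ, ∃ b : ℤ, ∀ᶠ L in (hyperfilter ℕ : Filter ℕ),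
      (e ((k L : ℤ) + n).toNat : ℤ) - i L = b := by
    intro n
    apply ultra_lim (Set.finite_Icc (-(K * (n.natAbs + 1) : ℤ)) (K * (n.natAbs + 1) : ℤ))
    filter_upwards [hkge n.natAbs] with L hL
    have a1 := hk1 L
    have a2 := hk2 L
    have a3 := hlip (k L) 1
    rw [mul_one] at a3
    obtain ⟨m, rfl | rfl⟩ := n.eq_nat_or_neg
    · rw [show ((k L : ℤ) + m).toNat = k L + m by omega]
      have a4 := hlip (k L) m
      have a5 := hm.monotone (show k L ≤ k L + m by omega)
      simp only [Int.natAbs_natCast, Set.mem_Icc]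
      zify at *
      constructor <;> nlinarith
    · simp only [Int.natAbs_neg, Int.natAbs_natCast, Set.mem_Icc] at hL ⊢
      rw [show ((k L : ℤ) + -m).toNat = k L - m by omega]
      have a4 := hlip (k L - m) m
      have a5 := hm.monotone (show k L - m ≤ k L by omega)
      rw [show k L - m + m = k L by omega] at a4
      generalize e (k L - m) = q at *
      zify at *
      constructor <;> nlinarith
  choose c hc using hcl
  have hcx : ∀ n, c (n + 1) = c n + ((τ (x n)).length : ℤ) := by
    intro n
    obtain ⟨L, b1, b2, b3, b4⟩ :=
      ((hkge n.natAbs).and ((hc n).and ((hc (n + 1)).and (hx n)))).exists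
    rw [show ((k L : ℤ) + (n + 1)).toNat = ((k L : ℤ) + n).toNat + 1 by omega, hstep, b4] at b3
    push_cast at b3
    linarith
  obtain ⟨y, hy⟩ := exists_imageZ_of_cuts hτ x c hcx
  refine ⟨x, c, y, hy, ?_, ?_, ?_, ?_, ?_⟩
  · intro l a hl
    rw [occ_iff] at hl
    have hall : ∀ᶠ L in (hyperfilter ℕ : Filter ℕ), ∀ t ∈ Finset.range l.length,
        v ((k L : ℤ) + (a + (t : ℕ))).toNat = x (a + t) := by
      rw [Filter.eventually_all_finset]
      exact fun t _ => hx _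
    obtain ⟨L, b1, b2⟩ := ((hkge a.natAbs).and hall).exists
    refine ⟨((k L : ℤ) + a).toNat, ?_⟩
    rw [occ_iff]
    intro t ht
    rw [← hl t ht, ← b2 t (Finset.mem_range.2 ht)]
    congr 1
    simp only [Nat.cast_id]
    omega
  · intro n
    obtain ⟨m, t, hnt, ht⟩ := rep_locZ hτ hcx n
    filter_upwards [hkge m.natAbs, hc m, hx m] with L b1 b2 b3
    have o1 := occ_iff.1 (h ((k L : ℤ) + m).toNat).2
    have o2 := occ_iff.1 (hy m).2 t ht
    rw [b3] at o1
    have o3 := o1 t ht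
    rw [← o2, ← hnt] at o3
    rw [← o3]
    congr 1
    simp only [Nat.cast_id]
    omega
  · obtain ⟨L, b1⟩ := (hc 0).exists
    have := hk1 L
    simp at b1
    omega
  · obtain ⟨L, b1⟩ := (hc 1).exists
    have := hk2 L
    rw [show ((k L : ℤ) + 1).toNat = k L + 1 by omega] at b1
    omega
  · filter_upwards [hc 0] with L b1
    have a1 := hk1 L
    have a2 := hk2 L
    simp at b1
    constructor
    · intro hc0
      exact ⟨k L, by omega⟩
    · rintro ⟨n, hn⟩
      rw [hn] at a1 a2
      have := hm.le_iff_le.1 a1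
      have := hm.lt_iff_lt.1 a2
      have : n = k L := by omega
      subst this
      omega

theorem lift_exists [Finite B] {τ : B → List A} (hτ : ∀ b, τ b ≠ []) {v : ℕ → B} {e : ℕ → ℕ}
    {u : ℕ → A} (h : Rep τ v e u) (h0 : e 0 = 0) {y : ℤ → A} (hy : InX u y) :
    ∃ (z : ℤ → B) (c : ℤ → ℤ), Rep τ z c y ∧ InX v z := by
  have hw : ∀ L : ℕ, ∃ j, ∀ n : ℤ, -L ≤ n → n ≤ L → u ((j + L : ℕ) + n).toNat = y n := by
    intro L
    obtain ⟨l, hl, ho⟩ := exists_occ y (-(L : ℤ)) (2 * L + 1)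
    obtain ⟨j, hj⟩ := hy l _ ho
    refine ⟨j, fun n h1 h2 => ?_⟩
    rw [occ_iff] at ho hj
    have q1 := ho (n + L).toNat (by omega)
    have q2 := hj (n + L).toNat (by omega)
    rw [← q1] at q2
    convert q2 using 2
    · simp only [Nat.cast_id]
      omega
    · omega
  choose j hj using hw
  obtain ⟨x, c, y', h1, h2, h3, -⟩ := lim hτ h h0 (fun L => j L + L) (fun L => by omega)
  have : y' = y := by
    funext n
    obtain ⟨L, b1, b2⟩ := ((h3 n).and (ultra_ge n.natAbs)).exists
    rw [← b1]
    exact hj L n (by omega) (by omega)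
  exact ⟨x, c, this ▸ h1, h2⟩

end Lim
end Recog

namespace Recog
universe v
section Ind

theorem rep_unique {A B G : Type*} [CommSemiring G] {α : A → List B} {x : G → A} {c : G → G}
    {y y' : G → B} (hl : Loc α x c) (h : Rep α x c y) (h' : Rep α x c y') : y = y' := by
  funext p
  obtain ⟨n, t, rfl, ht⟩ := hl p
  rw [occ_iff.1 (h n).2 t ht, occ_iff.1 (h' n).2 t ht]

theorem cuts_unique {c c' len : ℤ → ℤ} (b : ℤ) (h0 : c b = c' b)
    (h : ∀ n, c (n + 1) = c n + len n) (h' : ∀ n, c' (n + 1) = c' n + len n) (n : ℤ) :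
    c n = c' n := by
  induction n using Int.inductionOn' (b := b) with
  | zero => exact h0
  | succ k _ ih => rw [h, h', ih]
  | pred k _ ih =>
    have h1 := h (k - 1)
    have h2 := h' (k - 1)
    rw [show k - 1 + 1 = k by ring] at h1 h2
    linarith

theorem decompZ {A B C : Type*} {α : A → List B} {τ : B → List C} (hα : ∀ a, α a ≠ [])
    (hτ : ∀ b, τ b ≠ []) {x : ℤ → A} {c : ℤ → ℤ} {y : ℤ → C}
    (h : Rep (fun a => (α a).flatMap τ) x c y) :
    ∃ e p f, e 0 = 0 ∧ Rep α x e p ∧ Rep τ p f y ∧ ∀ n, f (e n) = c n := by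
  have hσ : ∀ a, (α a).flatMap τ ≠ [] := fun a h0 => by
    have h1 := length_flatMap_ge hτ (α a)
    have h2 := List.length_pos_of_ne_nil (hα a)
    rw [h0, List.length_nil] at h1
    omega
  obtain ⟨e, p, he, hp⟩ := exists_imageZ hα x 0
  obtain ⟨f, y', hf, hy'⟩ := exists_imageZ hτ p (c 0)
  have hc := rep_comp hp hy'
  have hcc : (fun n => f (e n)) = c := by
    funext n
    exact cuts_unique (c := fun n => f (e n)) (len := fun n => (((α (x n)).flatMap τ).length : ℤ)) 0
      (by simp only [he, hf]) (fun n => (hc n).1) (fun n => (h n).1) n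
  rw [hcc] at hc
  have := rep_unique (rep_locZ hσ fun n => (h n).1) hc h
  subst this
  exact ⟨e, p, f, he, hp, hy', fun n => congrFun hcc n⟩

/-- no eventually periodic sequence has all factors in the language of `u`. -/
def NP {A : Type*} (u : ℕ → A) : Prop :=
  ∀ (w : ℕ → A) (p N : ℕ), 1 ≤ p → (∀ n, N ≤ n → w (n + p) = w n) → ¬ InX u w

theorem recog (N : ℕ) : ∀ (A : Type v) [Fintype A], Fintype.card A = N →
    ∀ (σ : A → List A), (∀ a, σ a ≠ []) → ∀ (u : ℕ → A) (e : ℕ → ℕ), Rep σ u e u → e 0 = 0 →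
    NP u → ∀ (x x' : ℤ → A) (c c' : ℤ → ℤ) (y : ℤ → A), InX u x → InX u x' →
    Rep σ x c y → Rep σ x' c' y → ∃ d, ∀ n, x' n = x (n + d) ∧ c' n = c (n + d) := by
  induction N using Nat.strong_induction_on with
  | _ N ih =>
  intro A _ hN σ hσ u eu hu heu hnp x x' c c' y hx hx' h h'
  have hyX : InX u y := inX_image hσ h (rep_locZ hσ fun n => (h n).1) hu hx
  by_contra hne
  rcases step hσ h h' hne with hF | ⟨P, p, M, hp, hper⟩
  swap
  · refine hnp (fun t : ℕ => y (P + t)) p M hp hper ?_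
    intro l a hl
    apply hyX l (P + a)
    rw [occ_iff] at hl ⊢
    intro k hk
    rw [← hl k hk]
    congr 1
    push_cast
    ring
  apply hne
  obtain ⟨B, _, α, τ, hcard, hα, hτ, hs⟩ := hF
  obtain rfl : (fun a => (α a).flatMap τ) = σ := funext hs
  obtain ⟨ea, v, hea, hv⟩ := exists_imageN hα u
  obtain ⟨ft, u', hft, hu'⟩ := exists_imageN hτ v
  have huu : u' = u := by
    have h1 := rep_comp hv hu'
    have h2 : (fun n => ft (ea n)) = eu := by
      funext n
      induction n with
      | zero => rw [hea, hft, heu]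
      | succ n ihn =>
        have h3 := (h1 n).1
        beta_reduce at h3
        rw [h3, (hu n).1, ihn]
    rw [h2] at h1
    refine rep_unique (rep_locN hσ (fun n => (hu n).1) heu) h1 hu
  subst huu
  have hβ : ∀ b, (τ b).flatMap α ≠ [] := fun b h0 => by
    have h1 := length_flatMap_ge hα (τ b)
    have h2 := List.length_pos_of_ne_nil (hτ b)
    rw [h0, List.length_nil] at h1
    omega
  have hnv : NP v := by
    intro w p M hp hw hwX
    obtain ⟨cw, Y, hcw, hY⟩ := exists_imageN hτ w
    obtain ⟨q, M', hq, hYp⟩ := per_image (fun n => hτ _) hY hp hw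
    exact hnp Y q M' hq hYp
      (inX_image hτ hY (rep_locN hτ (fun n => by simpa using (hY n).1) hcw) hu' hwX)
  have IH := ih (Fintype.card B) (by omega) B rfl (fun b => (τ b).flatMap α) hβ v
    (fun n => ea (ft n)) (rep_comp hu' hv) (by rw [hft, hea]) hnv
  obtain ⟨e, p, f, he, hp, hf, hfe⟩ := decompZ hα hτ h
  obtain ⟨e', p', f', he', hp', hf', hfe'⟩ := decompZ hα hτ h'
  have hpX : InX v p := inX_image hα hp (rep_locZ hα fun n => (hp n).1) hv hx
  have hpX' : InX v p' := inX_image hα hp' (rep_locZ hα fun n => (hp' n).1) hv hx'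
  obtain ⟨g, q, -, hq⟩ := exists_imageZ hα y 0
  have hgm := rep_strictMonoZ hα fun n => (hq n).1
  obtain ⟨d, hd⟩ := IH p p' _ _ q hpX hpX' (rep_comp hf hq) (rep_comp hf' hq)
  have hd2 : ∀ n, f' n = f (n + d) := fun n => hgm.injective (hd n).2
  obtain ⟨z, k, hz, hzX⟩ := lift_exists hτ hu' hft hx
  obtain ⟨z', k', hz', hzX'⟩ := lift_exists hτ hu' hft hx'
  have hpE : Rep α x' (fun n => e' n + d) p := by
    intro n
    obtain ⟨h1, h2⟩ := hp' n
    refine ⟨by simp only; rw [h1]; ring, ?_⟩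
    rw [occ_iff] at h2 ⊢
    intro t ht
    rw [← h2 t ht, (hd _).1]
    congr 1
    ring
  obtain ⟨d', hd'⟩ := IH z z' _ _ p hzX hzX' (rep_comp hz hp) (rep_comp hz' hpE)
  set D := k' 0 - k d' with hD
  have hk : ∀ n, k' n = k (n + d') + D := by
    refine cuts_unique (len := fun n => ((τ (z' n)).length : ℤ)) 0 (by simp [hD])
      (fun n => (hz' n).1) (fun n => ?_)
    rw [show n + 1 + d' = n + d' + 1 by ring, (hz _).1, (hd' n).1]
    ring
  have hxx : (fun m => x' (m + D)) = x := by
    refine rep_unique (rep_locZ hτ fun n => (hz n).1) (α := τ) (c := k) (x := z) ?_ hz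
    intro n
    refine ⟨(hz n).1, ?_⟩
    have h2 := (hz' (n - d')).2
    rw [(hd' _).1, hk, show n - d' + d' = n by ring] at h2
    rw [occ_iff] at h2 ⊢
    intro t ht
    rw [← h2 t ht]
    congr 1
    ring
  have hxx' : ∀ m, x' (m + D) = x m := fun m => congrFun hxx m
  have hee : ∀ m, e' (m + D) + d = e m := by
    refine cuts_unique (len := fun n => ((α (x n)).length : ℤ)) (k d') ?_ (fun m => ?_)
      (fun m => (hp m).1)
    · have h1 := (hd' 0).2
      have h2 := hk 0
      simp only [zero_add] at h1 h2
      rw [← h2, h1]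
    · rw [show m + 1 + D = m + D + 1 by ring, (hp' _).1, hxx']
      ring
  refine ⟨-D, fun n => ⟨?_, ?_⟩⟩
  · rw [← hxx' (n + -D)]
    congr 1
    ring
  · rw [← hfe, ← hfe', hd2, ← hee]
    congr 3
    ring

end Ind
end Recog

namespace Recog
universe v
section Top
variable {A : Type v}

theorem seg_length (u : ℕ → A) (i j : ℕ) : (seg u i j).length = j - i := by simp [seg]

theorem seg_occ (u : ℕ → A) (i j : ℕ) : Occ (seg u i j) u i := by
  rw [occ_iff]
  intro k hk
  simp [seg]

theorem seg_eq_iff (u : ℕ → A) (i j L : ℕ) :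
    seg u i (i + L) = seg u j (j + L) ↔ ∀ s < L, u (i + s) = u (j + s) := by
  simp only [seg, Nat.add_sub_cancel_left]
  rw [List.map_inj_left]
  simp

/-- the cut positions. -/
def cuts (σ : A → List A) (u : ℕ → A) (n : ℕ) : ℕ := (substWord σ (seg u 0 n)).length

theorem cuts_zero (σ : A → List A) (u : ℕ → A) : cuts σ u 0 = 0 := by
  simp [cuts, seg, substWord]

theorem mem_cutPoints (σ : A → List A) (u : ℕ → A) (m : ℕ) :
    m ∈ cutPoints σ u 1 ↔ ∃ n, m = cuts σ u n := Iff.rfl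

theorem rep_cuts {σ : A → List A} {u : ℕ → A} (h : IsFixedPoint σ u) : Rep σ u (cuts σ u) u := by
  intro n
  have h1 : substWord σ (seg u 0 (n + 1)) = substWord σ (seg u 0 n) ++ σ (u n) := by
    simp [seg, substWord, List.range_succ]
  have h2 := h (n + 1)
  have h3 := seg_occ u 0 (substWord σ (seg u 0 (n + 1))).length
  rw [← h2, h1, occ_append] at h3
  refine ⟨?_, ?_⟩
  · simp only [cuts, h1, List.length_append, Nat.cast_id]
  · simpa [cuts] using h3.2

theorem rep_pow {σ : A → List A} {u : ℕ → A} (h : IsFixedPoint σ u) (k : ℕ) :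
    ∃ E, E 0 = 0 ∧ Rep (fun a => substPow σ k [a]) u E u := by
  induction k with
  | zero =>
    refine ⟨fun n => n, rfl, fun n => ⟨by simp [substPow], ?_⟩⟩
    simp [substPow, Occ]
  | succ k ih =>
    obtain ⟨E, h0, hE⟩ := ih
    refine ⟨fun n => cuts σ u (E n), ?_, ?_⟩
    rotate_left
    · have := rep_comp hE (rep_cuts h)
      convert this using 2 with a
      simp only [substPow]
      rw [Function.iterate_succ_apply']
      rfl
    · simp only [h0, cuts_zero]

theorem flatMap_length_two {ρ : A → List A} (hρ : ∀ a, 2 ≤ (ρ a).length) (l : List A) :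
    2 * l.length ≤ (l.flatMap ρ).length := by
  induction l with
  | nil => simp
  | cons a l ih =>
    have := hρ a
    simp only [List.flatMap_cons, List.length_append, List.length_cons]
    omega

theorem recurrence [Fintype A] (h2 : 2 ≤ Fintype.card A) {σ : A → List A}
    (hp : IsPrimitiveSubst σ) {u : ℕ → A} (h : IsFixedPoint σ u) (m : ℕ) :
    ∃ R, ∀ i, ∃ r ≤ R, ∀ s < m, u (i + r + s) = u s := by
  obtain ⟨k, hk⟩ := hp
  obtain ⟨E, hE0, hE⟩ := rep_pow h k
  set ρ : A → List A := fun a => substPow σ k [a] with hρd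
  have hρ : ∀ a, 2 ≤ (ρ a).length := by
    intro a
    obtain ⟨x, y, hxy⟩ := Fintype.one_lt_card_iff.1 h2
    have hx : x ∈ ρ a := hk x a
    have hy : y ∈ ρ a := hk y a
    match hl : ρ a with
    | [] => simp [hl] at hx
    | [z] =>
      rw [hl, List.mem_singleton] at hx hy
      exact absurd (hx.trans hy.symm) hxy
    | _ :: _ :: _ => simp
  have hθ : ∀ j : ℕ, ∃ (θ : A → List A) (c : ℕ → ℕ), (∀ a, j + 1 ≤ (θ a).length) ∧
      Rep θ u c u ∧ c 0 = 0 := by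
    intro j
    induction j with
    | zero => exact ⟨ρ, E, fun a => by have := hρ a; omega, hE, hE0⟩
    | succ j ih =>
      obtain ⟨θ, c, h1, h2, h3⟩ := ih
      refine ⟨_, _, fun a => ?_, rep_comp h2 hE, by simp only [h3, hE0]⟩
      have := flatMap_length_two hρ (θ a)
      have := h1 a
      omega
  obtain ⟨θ, c, hθl, hc, hc0⟩ := hθ m
  have hcomp := rep_comp hE hc
  have hρne : ∀ a, ρ a ≠ [] := fun a h0 => by
    have := hρ a
    rw [h0] at this
    simp at this
  have hθne : ∀ a, θ a ≠ [] := fun a h0 => by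
    have := hθl a
    rw [h0] at this
    simp at this
  have hEm : StrictMono E := rep_strictMonoN (fun n => hρne _) hE
  have hcm : StrictMono c := rep_strictMonoN (fun n => hθne _) hc
  obtain ⟨K, hK⟩ : ∃ K, ∀ a, ((ρ a).flatMap θ).length ≤ K := by
    obtain ⟨K, hK⟩ := (Set.finite_range fun a => ((ρ a).flatMap θ).length).bddAbove
    exact ⟨K, fun b => hK ⟨b, rfl⟩⟩
  refine ⟨2 * K, fun i => ?_⟩
  obtain ⟨n, hn1, hn2⟩ := locN_aux (hcm.comp hEm) i (by simp [hE0, hc0])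
  simp only [Function.comp] at hn1 hn2
  have s1 := (hcomp n).1
  have s2 := (hcomp (n + 1)).1
  beta_reduce at s1 s2
  rw [Nat.cast_id] at s1 s2
  have k1 := hK (u n)
  have k2 := hK (u (n + 1))
  have hmem : u 0 ∈ ρ (u (n + 1)) := hk _ _
  obtain ⟨t, ht, htu⟩ := List.getElem_of_mem hmem
  have o1 := occ_iff.1 (hE (n + 1)).2 t ht
  rw [htu, Nat.cast_id] at o1
  have o2 := (hE (n + 1)).1
  rw [Nat.cast_id] at o2
  have b1 : c (E (n + 1) + t) ≤ c (E (n + 1 + 1)) := hcm.monotone (by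
    rw [o2]; exact Nat.add_le_add_left ht.le _)
  have b2 : c (E (n + 1)) ≤ c (E (n + 1) + t) := hcm.monotone (by omega)
  refine ⟨c (E (n + 1) + t) - i, by omega, fun s hs => ?_⟩
  rw [show i + (c (E (n + 1) + t) - i) + s = c (E (n + 1) + t) + s by omega]
  have q1 := (hc (E (n + 1) + t)).2
  rw [o1, occ_iff] at q1
  have q2 := (hc 0).2
  rw [hc0, occ_iff] at q2
  have hs' : s < (θ (u 0)).length := by have := hθl (u 0); omega
  have q3 := q1 s hs'
  have q4 := q2 s hs'
  rw [← q4] at q3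
  simpa using q3

theorem np_of_prim [Fintype A] (h2 : 2 ≤ Fintype.card A) {σ : A → List A}
    (hp : IsPrimitiveSubst σ) {u : ℕ → A} (h : IsFixedPoint σ u) (hap : AperiodicSeq u) :
    NP u := by
  intro w p N hp1 hw hX
  apply hap p hp1
  funext n
  obtain ⟨R, hR⟩ := recurrence h2 hp h (n + p + 1)
  obtain ⟨l, hl, ho⟩ := exists_occ w N (R + (n + p + 1))
  obtain ⟨i, hi⟩ := hX l N ho
  rw [occ_iff] at ho hi
  simp only [Nat.cast_id] at ho hi
  obtain ⟨r, hr, hrs⟩ := hR i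
  have key : ∀ s < n + p + 1, w (N + (r + s)) = u s := by
    intro s hs
    rw [ho (r + s) (by omega), ← hi (r + s) (by omega), ← add_assoc]
    exact hrs s hs
  rw [← key n (by omega), ← key (n + p) (by omega), ← hw (N + (r + n)) (by omega)]
  congr 1
  omega

theorem bilateral [Fintype A] (h2 : 2 ≤ Fintype.card A) {σ : A → List A} (hσ : ∀ a, σ a ≠ [])
    (hp : IsPrimitiveSubst σ) {u : ℕ → A} (h : IsFixedPoint σ u) (hap : AperiodicSeq u) :
    ∃ L : ℕ, ∀ i j, L ≤ i → L ≤ j → (∀ t < 2 * L, u (i - L + t) = u (j - L + t)) →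
      (∃ n, i = cuts σ u n) → ∃ n, j = cuts σ u n := by
  by_contra hno
  push Not at hno
  choose i j hi hj hag hin hjn using hno
  have hu := rep_cuts h
  have hnp := np_of_prim h2 hp h hap
  obtain ⟨x, c, y, r1, r2, r3, r4, r5, r6⟩ := lim hσ hu (cuts_zero σ u) i hi
  obtain ⟨x', c', y', r1', r2', r3', r4', r5', r6'⟩ := lim hσ hu (cuts_zero σ u) j hj
  have hyy : y' = y := by
    funext n
    obtain ⟨L, b1, b2, b3⟩ := ((r3 n).and ((r3' n).and (ultra_ge (n.natAbs + 1)))).exists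
    rw [← b1, ← b2]
    have := hag L (L + n).toNat (by omega)
    have := hi L
    have := hj L
    rw [show ((i L : ℤ) + n).toNat = i L - L + (L + n).toNat by omega,
      show ((j L : ℤ) + n).toNat = j L - L + (L + n).toNat by omega]
    exact (hag L (L + n).toNat (by omega)).symm
  subst hyy
  obtain ⟨d, hd⟩ := recog _ A rfl σ hσ u _ hu (cuts_zero σ u) hnp x x' c c' _ r2 r2' r1 r1'
  obtain ⟨L, b1, b2⟩ := (r6.and r6').exists
  have hc0 : c 0 = 0 := b1.2 (hin L)
  have hc0' : c' 0 ≠ 0 := fun h0 => by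
    obtain ⟨n, hn⟩ := b2.1 h0
    exact hjn L n hn
  have hm := rep_strictMonoZ hσ fun n => (r1 n).1
  have e1 : c (0 + d) < c 0 := by
    rw [← (hd 0).2]
    omega
  have e2 : c 0 < c (1 + d) := by
    rw [← (hd 1).2]
    omega
  have := hm.lt_iff_lt.1 e1
  have := hm.lt_iff_lt.1 e2
  omega

theorem next_cut {e : ℕ → ℕ} (hm : StrictMono e) {K M a b s i j : ℕ}
    (hK : ∀ n, e (n + 1) ≤ e n + K)
    (hE : ∀ t, 0 < t → t ≤ M → ((∃ n, a + t = e n) ↔ ∃ n, b + t = e n))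
    (ha : e j = a + s) (hb1 : e i ≤ b + s) (hb2 : b + s < e (i + 1)) (hs : s + K ≤ M) :
    ∃ s', s < s' ∧ s' ≤ s + K ∧ e (j + 1) = a + s' ∧ e (i + 1) = b + s' := by
  have k1 := hK j
  have k2 := hK i
  have m1 := hm (Nat.lt_succ_self j)
  obtain ⟨s', hs'⟩ : ∃ s', e (j + 1) = a + s' := ⟨e (j + 1) - a, by simp at m1; omega⟩
  obtain ⟨t, ht⟩ : ∃ t, e (i + 1) = b + t := ⟨e (i + 1) - b, by omega⟩
  simp only [Nat.succ_eq_add_one] at m1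
  have l1 : t ≤ s' := by
    obtain ⟨n, hn⟩ := (hE s' (by omega) (by omega)).1 ⟨_, hs'.symm⟩
    have : i < n := hm.lt_iff_lt.1 (by omega)
    have := hm.monotone (show i + 1 ≤ n by omega)
    omega
  have l2 : s' ≤ t := by
    obtain ⟨n, hn⟩ := (hE t (by omega) (by omega)).2 ⟨_, ht.symm⟩
    have : j < n := hm.lt_iff_lt.1 (by omega)
    have := hm.monotone (show j + 1 ≤ n by omega)
    omega
  exact ⟨s', by omega, by omega, hs', by omega⟩

theorem find_gap {σ : A → List A} (hσ : ∀ a, σ a ≠ []) {u : ℕ → A} {e : ℕ → ℕ}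
    (hu : Rep σ u e u) (h0 : e 0 = 0) {K M a b L : ℕ} (hK : ∀ a, (σ a).length ≤ K)
    (ha : ∃ n, a = e n) (hb : ¬ ∃ n, b = e n)
    (hE : ∀ t, 0 < t → t ≤ M → ((∃ n, a + t = e n) ↔ ∃ n, b + t = e n))
    (hag : ∀ s < M, u (a + s) = u (b + s)) (hM : (L + 1) * K ≤ M) :
    ∃ i j : ℕ, (σ (u j) <:+ σ (u i) ∧ σ (u j) ≠ σ (u i)) ∧
        ∀ k : ℕ, 1 ≤ k → k ≤ L → σ (u (i + k)) = σ (u (j + k)) := by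
  have hm : StrictMono e := rep_strictMonoN (fun n => hσ _) hu
  have hs : ∀ n, e (n + 1) = e n + (σ (u n)).length := fun n => by simpa using (hu n).1
  have ho : ∀ n k (hk : k < (σ (u n)).length), u (e n + k) = (σ (u n))[k] := fun n => by
    simpa using occ_iff.1 (hu n).2
  have hKe : ∀ n, e (n + 1) ≤ e n + K := fun n => by
    rw [hs]; exact Nat.add_le_add_left (hK _) _
  obtain ⟨j, rfl⟩ := ha
  obtain ⟨i, hi1, hi2⟩ := locN_aux hm b (by omega)
  have hib : e i ≠ b := fun h => hb ⟨i, h.symm⟩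
  have hKM : K ≤ M := le_trans (Nat.le_mul_of_pos_left _ (by omega)) hM
  obtain ⟨s₁, q1, q2, q3, q4⟩ := next_cut hm hKe hE (s := 0) (j := j) (by simp) (by simpa using hi1)
    (by simpa using hi2) (by omega)
  have hlj : (σ (u j)).length = s₁ := by have := hs j; omega
  have hli : s₁ < (σ (u i)).length := by have := hs i; omega
  have hbi := hs i
  refine ⟨i, j, ⟨?_, fun h => by rw [h] at hlj; omega⟩, ?_⟩
  · have : σ (u j) = (σ (u i)).drop ((σ (u i)).length - s₁) := by
      apply List.ext_getElem
      · rw [List.length_drop]; omega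
      · intro k k1 k2
        rw [List.getElem_drop, ← ho, ← ho, hag k (by omega)]
        congr 1
        omega
    rw [this]
    exact List.drop_suffix _ _
  · have key : ∀ k ≤ L, ∃ s, s ≤ (k + 1) * K ∧ e (j + 1 + k) = e j + s ∧
        e (i + 1 + k) = b + s := by
      intro k
      induction k with
      | zero => intro _; exact ⟨s₁, by omega, q3, q4⟩
      | succ k ih =>
        intro hk
        obtain ⟨s, p1, p2, p3⟩ := ih (by omega)
        have hkM : (k + 1 + 1) * K ≤ (L + 1) * K := Nat.mul_le_mul_right _ (by omega)
        have hkk : (k + 1 + 1) * K = (k + 1) * K + K := by ring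
        obtain ⟨s', z1, z2, z3, z4⟩ := next_cut hm hKe hE p2 p3.le
          (by rw [← p3]; exact hm (Nat.lt_succ_self _)) (by omega)
        exact ⟨s', by omega, z3, z4⟩
    intro k k1 k2
    obtain ⟨s, p1, p2, p3⟩ := key (k - 1) (by omega)
    obtain ⟨s', p1', p2', p3'⟩ := key k k2
    rw [show j + 1 + (k - 1) = j + k by omega] at p2
    rw [show i + 1 + (k - 1) = i + k by omega] at p3
    have hkM : (k + 1) * K ≤ (L + 1) * K := Nat.mul_le_mul_right _ (by omega)
    have r1 := hs (j + k)
    have r2 := hs (i + k)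
    rw [show j + k + 1 = j + 1 + k by omega] at r1
    rw [show i + k + 1 = i + 1 + k by omega] at r2
    apply List.ext_getElem
    · omega
    · intro t t1 t2
      rw [← ho, ← ho, p2, p3, add_assoc, add_assoc]
      exact (hag (s + t) (by omega)).symm

theorem gap_of_not_rec [Fintype A] (h2 : 2 ≤ Fintype.card A) {σ : A → List A}
    (hσ : ∀ a, σ a ≠ [])
    (hp : IsPrimitiveSubst σ) {u : ℕ → A} (h : IsFixedPoint σ u) (hap : AperiodicSeq u)
    (hn : ¬ UnilaterallyRecognizable σ u) (L : ℕ) :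
    ∃ i j : ℕ, (σ (u j) <:+ σ (u i) ∧ σ (u j) ≠ σ (u i)) ∧
        ∀ k : ℕ, 1 ≤ k → k ≤ L → σ (u (i + k)) = σ (u (j + k)) := by
  obtain ⟨R, hR⟩ := bilateral h2 hσ hp h hap
  obtain ⟨K, hK⟩ : ∃ K, ∀ a, (σ a).length ≤ K := by
    obtain ⟨K, hK⟩ := (Set.finite_range fun a => (σ a).length).bddAbove
    exact ⟨K, fun b => hK ⟨b, rfl⟩⟩
  simp only [UnilaterallyRecognizable, not_exists, not_and, not_forall] at hn
  obtain ⟨i, j, hseg, hi, hj⟩ := hn (2 * R + (L + 1) * K + 1) (by omega)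
  rw [mem_cutPoints] at hi hj
  rw [seg_eq_iff] at hseg
  have hE : ∀ t, R ≤ t → t ≤ R + (L + 1) * K →
      ((∃ n, i + t = cuts σ u n) ↔ ∃ n, j + t = cuts σ u n) := by
    intro t t1 t2
    have hh : ∀ s < 2 * R, u (i + t - R + s) = u (j + t - R + s) := by
      intro s hs
      have := hseg (t - R + s) (by omega)
      rw [show i + t - R + s = i + (t - R + s) by omega,
        show j + t - R + s = j + (t - R + s) by omega, this]
    exact ⟨hR _ _ (by omega) (by omega) hh,
      hR _ _ (by omega) (by omega) fun s hs => (hh s hs).symm⟩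
  classical
  let P : ℕ → Prop := fun t => ¬ ((∃ n, i + t = cuts σ u n) ↔ ∃ n, j + t = cuts σ u n)
  have hP0 : P 0 := fun hiff => hj (by simpa using hiff.1 (by simpa using hi))
  have hPt : P (Nat.findGreatest P R) := Nat.findGreatest_spec (Nat.zero_le R) hP0
  have htR : Nat.findGreatest P R ≤ R := Nat.findGreatest_le R
  have hmax : ∀ s, Nat.findGreatest P R < s → s ≤ R + (L + 1) * K → ¬ P s := by
    intro s s1 s2
    rcases le_or_gt s R with hs | hs
    · exact Nat.findGreatest_is_greatest s1 hs
    · exact not_not.2 (hE s hs.le s2)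
  generalize Nat.findGreatest P R = t at hPt htR hmax
  have hag : ∀ s < (L + 1) * K, u (i + t + s) = u (j + t + s) := by
    intro s hs
    have := hseg (t + s) (by omega)
    rwa [← add_assoc, ← add_assoc] at this
  have hEE : ∀ s, 0 < s → s ≤ (L + 1) * K →
      ((∃ n, i + t + s = cuts σ u n) ↔ ∃ n, j + t + s = cuts σ u n) := by
    intro s s1 s2
    have := not_not.1 (hmax (t + s) (by omega) (by omega))
    simpa only [← add_assoc] using this
  have hu := rep_cuts h
  by_cases hit : ∃ n, i + t = cuts σ u n
  · have hjt : ¬ ∃ n, j + t = cuts σ u n := fun hjt => hPt ⟨fun _ => hjt, fun _ => hit⟩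
    exact find_gap hσ hu (cuts_zero σ u) hK hit hjt hEE hag le_rfl
  · have hjt : ∃ n, j + t = cuts σ u n := by
      by_contra hjt
      exact hPt ⟨fun h => absurd h hit, fun h => absurd h hjt⟩
    exact find_gap hσ hu (cuts_zero σ u) hK hjt hit (fun s s1 s2 => (hEE s s1 s2).symm)
      (fun s hs => (hag s hs).symm) le_rfl

theorem not_rec_of_gap {σ : A → List A} (hσ : ∀ a, σ a ≠ []) {u : ℕ → A} (h : IsFixedPoint σ u)
    (hg : ∀ L : ℕ, 1 ≤ L → ∃ i j : ℕ,
        (σ (u j) <:+ σ (u i) ∧ σ (u j) ≠ σ (u i)) ∧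
        ∀ k : ℕ, 1 ≤ k → k ≤ L → σ (u (i + k)) = σ (u (j + k))) :
    ¬ UnilaterallyRecognizable σ u := by
  rintro ⟨L, hL, hrec⟩
  obtain ⟨i, j, ⟨hsuf, hne⟩, hk⟩ := hg L hL
  have hu := rep_cuts h
  have hm : StrictMono (cuts σ u) := rep_strictMonoN (fun n => hσ _) hu
  have hs : ∀ n, cuts σ u (n + 1) = cuts σ u n + (σ (u n)).length :=
    fun n => by simpa using (hu n).1
  have ho : ∀ n k (hk : k < (σ (u n)).length), u (cuts σ u n + k) = (σ (u n))[k] := fun n => by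
    simpa using occ_iff.1 (hu n).2
  obtain ⟨w, hw⟩ := hsuf
  have hwl : (σ (u i)).length = w.length + (σ (u j)).length := by rw [← hw, List.length_append]
  have hw0 : 0 < w.length := by
    apply List.length_pos_of_ne_nil
    rintro rfl
    exact hne (by simpa using hw)
  have hjl := List.length_pos_of_ne_nil (hσ (u j))
  have si := hs i
  have sj := hs j
  obtain ⟨b, hb⟩ : ∃ b, b = cuts σ u i + w.length := ⟨_, rfl⟩
  have key : ∀ k ≤ L, ∃ s, k + 1 ≤ s ∧ cuts σ u (j + 1 + k) = cuts σ u j + s ∧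
      cuts σ u (i + 1 + k) = b + s ∧ ∀ r < s, u (cuts σ u j + r) = u (b + r) := by
    intro k
    induction k with
    | zero =>
      intro _
      refine ⟨(σ (u j)).length, by omega, sj, by rw [add_zero]; omega, fun r hr => ?_⟩
      rw [hb, add_assoc, ho j r hr, ho i (w.length + r) (by omega)]
      simp [← hw]
    | succ k ih =>
      intro hkL
      obtain ⟨s, p1, p2, p3, p4⟩ := ih (by omega)
      have hkk := hk (k + 1) (by omega) hkL
      rw [show i + (k + 1) = i + 1 + k by omega, show j + (k + 1) = j + 1 + k by omega] at hkk
      have t1 := hs (i + 1 + k)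
      have t2 := hs (j + 1 + k)
      have t3 := List.length_pos_of_ne_nil (hσ (u (j + 1 + k)))
      rw [hkk] at t1
      refine ⟨s + (σ (u (j + 1 + k))).length, by omega, ?_, ?_, fun r hr => ?_⟩
      · rw [← add_assoc (j + 1), t2, p2]; ring
      · rw [← add_assoc (i + 1), t1, p3]; ring
      · rcases lt_or_ge r s with hrs | hrs
        · exact p4 r hrs
        · have q1 := ho (j + 1 + k) (r - s) (by omega)
          have q2 := ho (i + 1 + k) (r - s) (by rw [hkk]; omega)
          simp only [hkk] at q2
          rw [← q1, p2, p3] at q2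
          rw [show cuts σ u j + r = cuts σ u j + s + (r - s) by omega,
            show b + r = b + s + (r - s) by omega, q2]
  obtain ⟨s, p1, -, -, p4⟩ := key L le_rfl
  obtain ⟨n, hn⟩ := hrec (cuts σ u j) b
    ((seg_eq_iff _ _ _ _).2 fun r hr => p4 r (by omega)) ⟨j, rfl⟩
  have hn' : b = cuts σ u n := hn
  have l1 : i < n := hm.lt_iff_lt.1 (by omega)
  have l2 : n < i + 1 := hm.lt_iff_lt.1 (by omega)
  omega

end Top
end Recog


/-- B. Mossé's unilateral recognizability theorem (Theorem 1.1): `σ` is not unilaterally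
recognizable iff for each `L` there are positions `i, j` with `σ(u_j)` a strict suffix of
`σ(u_i)` and `σ(u_{i+k}) = σ(u_{j+k})` for `1 ≤ k ≤ L`. -/
theorem stmt_0 (A : Type*) [Fintype A] [DecidableEq A] [Nonempty A]
    (h2 : 2 ≤ Fintype.card A)
    (σ : A → List A) (hσne : ∀ a, σ a ≠ [])
    (hprim : IsPrimitiveSubst σ)
    (u : ℕ → A) (hfix : IsFixedPoint σ u) (hap : AperiodicSeq u) :
    (¬ UnilaterallyRecognizable σ u) ↔
      ∀ L : ℕ, 1 ≤ L → ∃ i j : ℕ,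
        (σ (u j) <:+ σ (u i) ∧ σ (u j) ≠ σ (u i)) ∧
        ∀ k : ℕ, 1 ≤ k → k ≤ L → σ (u (i + k)) = σ (u (j + k)) := by
  exact ⟨fun hn L _ => Recog.gap_of_not_rec h2 hσne hprim hfix hap hn L,
    fun hg => Recog.not_rec_of_gap hσne hfix hg⟩
end

section
/- Let p₀ = K²(C⁴(K+1)+2C²+1) · (Σ_{n = C²(K+1)+2}^{(K+1)C⁶+2C⁴+C²+2} n) + 1 and L₀ = (C⁴(K+1)+2C²+1)·S_{p₀}. Then the substitution σ is bilaterally recognizable under the index L₀: for all i, j ≥ L₀, if u_{[i−L₀, i+L₀)} = u_{[j−L₀, j+L₀)} and i ∈ E₁, then j ∈ E₁. -/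
open List Filter

namespace Rec

section Words

variable {A : Type*}

/-- position of the `n`-th cut of order `p` -/
def cut (σ : A → List A) (u : ℕ → A) (p n : ℕ) : ℕ := (substPow σ p (seg u 0 n)).length

/-- length of `σ^p(a)` -/
def len (σ : A → List A) (p : ℕ) (a : A) : ℕ := (substPow σ p [a]).length

lemma substPow_append (σ : A → List A) (p : ℕ) (v w : List A) :
    substPow σ p (v ++ w) = substPow σ p v ++ substPow σ p w := by
  induction p generalizing v w with
  | zero => rfl
  | succ p ih =>
    unfold substPow at *
    simp only [Function.iterate_succ_apply]
    rw [← ih]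
    simp [substWord]

lemma substPow_succ (σ : A → List A) (p : ℕ) (w : List A) :
    substPow σ (p + 1) w = substWord σ (substPow σ p w) := by
  unfold substPow
  exact Function.iterate_succ_apply' _ _ _

lemma substPow_add (σ : A → List A) (p q : ℕ) (w : List A) :
    substPow σ (p + q) w = substPow σ p (substPow σ q w) := by
  unfold substPow
  exact Function.iterate_add_apply _ _ _ _

lemma substPow_one (σ : A → List A) (w : List A) : substPow σ 1 w = substWord σ w := rfl

lemma substPow_nil (σ : A → List A) (p : ℕ) : substPow σ p [] = [] := by
  induction p with
  | zero => rfl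
  | succ p ih => rw [substPow_succ, ih]; rfl

lemma seg_zero_succ (u : ℕ → A) (n : ℕ) : seg u 0 (n + 1) = seg u 0 n ++ [u n] := by
  simp [seg, List.range_succ]

lemma seg_length (u : ℕ → A) (i j : ℕ) : (seg u i j).length = j - i := by simp [seg]

lemma seg_getElem? (u : ℕ → A) (i j k : ℕ) (h : k < j - i) :
    (seg u i j)[k]? = some (u (i + k)) := by
  simp [seg, h]

lemma seg_eq_iff (u : ℕ → A) (x y m : ℕ) :
    seg u x (x + m) = seg u y (y + m) ↔ ∀ t < m, u (x + t) = u (y + t) := by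
  simp [seg]

variable (σ : A → List A) (u : ℕ → A)

lemma substPow_seg (hfix : IsFixedPoint σ u) (p n : ℕ) :
    substPow σ p (seg u 0 n) = seg u 0 (cut σ u p n) := by
  induction p with
  | zero => simp [cut, substPow, seg]
  | succ p ih =>
    unfold cut
    rw [substPow_succ, ih]
    exact hfix _

lemma cut_zero (p : ℕ) : cut σ u p 0 = 0 := by
  simp [cut, seg, substPow_nil]

lemma cut_succ (p n : ℕ) : cut σ u p (n + 1) = cut σ u p n + len σ p (u n) := by
  unfold cut len
  rw [seg_zero_succ, substPow_append, List.length_append]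

lemma cut_add (hfix : IsFixedPoint σ u) (p q n : ℕ) :
    cut σ u (p + q) n = cut σ u p (cut σ u q n) := by
  conv_lhs => unfold cut
  rw [substPow_add, substPow_seg σ u hfix]
  rfl

lemma cut_letter (hfix : IsFixedPoint σ u) (p n k : ℕ) (hk : k < len σ p (u n)) :
    (substPow σ p [u n])[k]? = some (u (cut σ u p n + k)) := by
  have h1 := substPow_seg σ u hfix p (n + 1)
  rw [seg_zero_succ, substPow_append, substPow_seg σ u hfix] at h1
  have h2 := congrArg (fun l => l[cut σ u p n + k]?) h1
  rw [seg_getElem? _ _ _ _ (by rw [cut_succ]; omega),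
    List.getElem?_append_right (by simp [seg_length])] at h2
  simpa [seg_length] using h2

lemma match_cut {x y m : ℕ} (h : ∀ t < m, u (x + t) = u (y + t)) (r : ℕ) :
    ∀ t ≤ m, cut σ u r (x + t) + cut σ u r y = cut σ u r (y + t) + cut σ u r x := by
  intro t
  induction t with
  | zero => intro _; simp [add_comm]
  | succ t ih =>
    intro ht
    have := ih (by omega)
    rw [← add_assoc, ← add_assoc, cut_succ, cut_succ, h t (by omega)]
    omega

lemma match_letters (hfix : IsFixedPoint σ u) {x y m : ℕ}
    (h : ∀ t < m, u (x + t) = u (y + t)) (r : ℕ) :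
    ∀ t, cut σ u r x + t < cut σ u r (x + m) →
      u (cut σ u r x + t) = u (cut σ u r y + t) := by
  induction m with
  | zero => intro t ht; simp at ht
  | succ m ih =>
    intro t ht
    by_cases hlt : cut σ u r x + t < cut σ u r (x + m)
    · exact ih (fun t ht => h t (by omega)) t hlt
    · have hm := match_cut σ u h r m (by omega)
      rw [← add_assoc, cut_succ] at ht
      have e := h m (by omega)
      have h1 := cut_letter σ u hfix r (x + m) (cut σ u r x + t - cut σ u r (x + m)) (by omega)
      have h2 := cut_letter σ u hfix r (y + m) (cut σ u r x + t - cut σ u r (x + m))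
        (by rw [← e]; omega)
      rw [e, h2] at h1
      have h3 := Option.some.inj h1
      have e1 : cut σ u r (x + m) + (cut σ u r x + t - cut σ u r (x + m)) = cut σ u r x + t := by
        omega
      have e2 : cut σ u r (y + m) + (cut σ u r x + t - cut σ u r (x + m)) = cut σ u r y + t := by
        omega
      rw [e1, e2] at h3
      exact h3.symm

lemma length_le_substWord (hσne : ∀ a, σ a ≠ []) (w : List A) :
    w.length ≤ (substWord σ w).length := by
  induction w with
  | nil => simp
  | cons a w ih =>
    have : 0 < (σ a).length := List.length_pos_iff.2 (hσne a)
    simp only [substWord, List.flatMap_cons, List.length_append, List.length_cons] at *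
    omega

lemma len_mono (hσne : ∀ a, σ a ≠ []) (a : A) {p q : ℕ} (h : p ≤ q) :
    len σ p a ≤ len σ q a := by
  induction q, h using Nat.le_induction with
  | base => rfl
  | succ q _ ih =>
    refine ih.trans ?_
    unfold len
    rw [substPow_succ]
    exact length_le_substWord σ hσne _

lemma len_zero (a : A) : len σ 0 a = 1 := rfl

lemma len_pos (hσne : ∀ a, σ a ≠ []) (p : ℕ) (a : A) : 1 ≤ len σ p a :=
  (len_mono σ hσne a (Nat.zero_le p))

lemma cut_mono (p : ℕ) : Monotone (cut σ u p) :=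
  monotone_nat_of_le_succ fun n => by rw [cut_succ]; omega

lemma cut_strictMono (hσne : ∀ a, σ a ≠ []) (p : ℕ) : StrictMono (cut σ u p) :=
  strictMono_nat_of_lt_succ fun n => by
    have := len_pos σ hσne p (u n)
    rw [cut_succ]; omega

lemma exists_block (hσne : ∀ a, σ a ≠ []) (p z : ℕ) :
    ∃ n, cut σ u p n ≤ z ∧ z < cut σ u p (n + 1) := by
  have hid := (cut_strictMono σ u hσne p).id_le
  have hex : ∃ n, z < cut σ u p n := ⟨z + 1, by have := hid (z + 1); simp at this; omega⟩
  classical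
  rcases hn : Nat.find hex with _ | n
  · have := Nat.find_spec hex
    rw [hn, cut_zero] at this
    omega
  · refine ⟨n, ?_, ?_⟩
    · have := Nat.find_min hex (m := n) (by omega)
      omega
    · have := Nat.find_spec hex
      rwa [hn] at this

lemma cut_add_le {p S : ℕ} (hS : ∀ a, len σ p a ≤ S) (n m : ℕ) :
    cut σ u p (n + m) ≤ cut σ u p n + m * S := by
  induction m with
  | zero => simp
  | succ m ih =>
    have := hS (u (n + m))
    rw [← add_assoc, cut_succ, Nat.succ_mul]; omega

lemma le_cut_add {p I : ℕ} (hI : ∀ a, I ≤ len σ p a) (n m : ℕ) :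
    cut σ u p n + m * I ≤ cut σ u p (n + m) := by
  induction m with
  | zero => simp
  | succ m ih =>
    have := hI (u (n + m))
    rw [← add_assoc, cut_succ, Nat.succ_mul]; omega

end Words

set_option linter.unusedSectionVars false

section Growth

variable {A : Type*} [Fintype A] [Nonempty A] [DecidableEq A]
variable (σ : A → List A) (u : ℕ → A)

lemma len_le_Sp (p : ℕ) (a : A) : len σ p a ≤ Sp σ p :=
  Finset.le_sup' (fun a => (substPow σ p [a]).length) (Finset.mem_univ a)

lemma Ip_le_len (p : ℕ) (a : A) : Ip σ p ≤ len σ p a :=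
  Finset.inf'_le (fun a => (substPow σ p [a]).length) (Finset.mem_univ a)

lemma exists_Ip (p : ℕ) : ∃ a, Ip σ p = len σ p a := by
  obtain ⟨a, -, h⟩ := Finset.exists_mem_eq_inf' (Finset.univ_nonempty (α := A))
    (fun a => (substPow σ p [a]).length)
  exact ⟨a, h⟩

lemma exists_Sp (p : ℕ) : ∃ a, Sp σ p = len σ p a := by
  obtain ⟨a, -, h⟩ := Finset.exists_mem_eq_sup' (Finset.univ_nonempty (α := A))
    (fun a => (substPow σ p [a]).length)
  exact ⟨a, h⟩

lemma Sp_mono (hσne : ∀ a, σ a ≠ []) {p q : ℕ} (h : p ≤ q) : Sp σ p ≤ Sp σ q := by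
  obtain ⟨a, ha⟩ := exists_Sp σ p
  rw [ha]
  exact (len_mono σ hσne a h).trans (len_le_Sp σ q a)

lemma Ip_pos (hσne : ∀ a, σ a ≠ []) (p : ℕ) : 1 ≤ Ip σ p := by
  obtain ⟨a, ha⟩ := exists_Ip σ p
  rw [ha]
  exact len_pos σ hσne p a

lemma Ip_zero : Ip σ 0 = 1 := by
  obtain ⟨a, ha⟩ := exists_Ip σ 0
  rw [ha]; rfl

lemma exists_letter (hprim : IsPrimitiveSubst σ) (hfix : IsFixedPoint σ u) (a : A) :
    ∃ n, u n = a := by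
  obtain ⟨k, hk⟩ := hprim
  obtain ⟨s, hs, h⟩ := List.mem_iff_getElem.1 (hk a (u 0))
  have := cut_letter σ u hfix k 0 s hs
  rw [List.getElem?_eq_getElem hs, h] at this
  exact ⟨_, (Option.some.inj this).symm⟩

lemma len_unbounded (h2 : 2 ≤ Fintype.card A) (hprim : IsPrimitiveSubst σ)
    (hfix : IsFixedPoint σ u) (N : ℕ) : ∃ p, N ≤ Ip σ p := by
  have hex := exists_letter σ u hprim hfix
  obtain ⟨k, hk⟩ := hprim
  have hlen : ∀ b, 2 ≤ len σ k b := by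
    intro b
    have h1 : (Finset.univ : Finset A) ⊆ (substPow σ k [b]).toFinset := by
      intro a _
      simpa using hk a b
    have h3 := Finset.card_le_card h1
    rw [Finset.card_univ] at h3
    exact h2.trans (h3.trans (List.toFinset_card_le _))
  have key : ∀ n : ℕ, ∀ a, n + 1 ≤ len σ (k * n) a := by
    intro n
    induction n with
    | zero => intro a; simp [len_zero]
    | succ n ih =>
      intro a
      obtain ⟨m, rfl⟩ := hex a
      have e1 := cut_succ σ u (k * n) m
      have e2 := cut_succ σ u (k * (n + 1)) m
      rw [show k * (n + 1) = k + k * n by ring, cut_add σ u hfix, cut_add σ u hfix, e1] at e2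
      have := le_cut_add σ u hlen (cut σ u (k * n) m) (len σ (k * n) (u m))
      have := ih (u m)
      rw [show k * (n + 1) = k + k * n by ring]
      omega
  refine ⟨k * N, ?_⟩
  obtain ⟨a, ha⟩ := exists_Ip σ (k * N)
  have := key N a
  omega

lemma isGap_two_iff (a b : A) (g : ℕ) :
    IsGap u [a, b] g ↔ ∀ i, ∃ m, i ≤ m ∧ m + 2 ≤ i + g ∧ u m = a ∧ u (m + 1) = b := by
  unfold IsGap
  refine forall_congr' fun i => ⟨?_, ?_⟩
  · rintro ⟨s, t, h⟩
    have hl := congrArg List.length h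
    simp [seg_length] at hl
    refine ⟨i + s.length, by omega, by omega, ?_, ?_⟩
    · have := seg_getElem? u i (i + g) s.length (by omega)
      rw [← h] at this
      simpa using this.symm
    · have := seg_getElem? u i (i + g) (s.length + 1) (by omega)
      rw [← h] at this
      simpa [add_assoc] using this.symm
  · rintro ⟨m, h1, h2, rfl, rfl⟩
    refine ⟨seg u i m, seg u (m + 2) (i + g), ?_⟩
    apply List.ext_getElem?
    intro k
    by_cases hk : k < g
    · rw [seg_getElem? _ _ _ _ (by omega)]
      rcases lt_trichotomy k (m - i) with h | h | h
      · rw [List.append_assoc, List.getElem?_append_left (by rw [seg_length]; omega),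
          seg_getElem? _ _ _ _ (by omega)]
      · subst h
        rw [List.append_assoc, List.getElem?_append_right (by rw [seg_length])]
        simp [seg_length, h1]
      · rw [List.append_assoc, List.getElem?_append_right (by rw [seg_length]; omega), seg_length]
        obtain ⟨c, rfl⟩ : ∃ c, k = m - i + 1 + c := ⟨k - (m - i + 1), by omega⟩
        rw [show m - i + 1 + c - (m - i) = c + 1 by omega]
        rcases c with _ | c
        · simp [show i + (m - i + 1) = m + 1 by omega]
        · simp only [List.cons_append, List.getElem?_cons_succ, List.nil_append]
          rw [seg_getElem? _ _ _ _ (by omega)]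
          congr 2; omega
    · rw [List.getElem?_eq_none (by simp [seg_length]; omega),
        List.getElem?_eq_none (by simp [seg_length]; omega)]

lemma exists_gap (h2 : 2 ≤ Fintype.card A) (hσne : ∀ a, σ a ≠ []) (hprim : IsPrimitiveSubst σ)
    (hfix : IsFixedPoint σ u) (n : ℕ) : ∃ g, IsGap u [u n, u (n + 1)] g := by
  obtain ⟨P, hP⟩ := len_unbounded σ u h2 hprim hfix (n + 2)
  obtain ⟨k, hk⟩ := hprim
  refine ⟨2 * Sp σ (P + k), (isGap_two_iff u _ _ _).2 fun i => ?_⟩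
  obtain ⟨m, hm1, hm2⟩ := exists_block σ u hσne (P + k) i
  obtain ⟨s, hs, h⟩ := List.mem_iff_getElem.1 (hk (u 0) (u (m + 1)))
  have h0 := cut_letter σ u hfix k (m + 1) s hs
  rw [List.getElem?_eq_getElem hs, h] at h0
  have h0 := (Option.some.inj h0).symm
  set x := cut σ u k (m + 1) + s with hx
  have hmat : ∀ t < 1, u (x + t) = u (0 + t) := by
    intro t ht
    obtain rfl : t = 0 := by omega
    simpa using h0
  have hL := match_letters σ u hfix hmat P
  have hc := cut_succ σ u P x
  have hlen := Ip_le_len σ P (u x)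
  have l1 := hL n (by omega)
  have l2 := hL (n + 1) (by omega)
  rw [cut_zero, zero_add] at l1 l2
  have hxle : x + 1 ≤ cut σ u k (m + 1 + 1) := by
    rw [cut_succ, hx]
    have : s < len σ k (u (m + 1)) := hs
    omega
  have a1 := cut_mono σ u P hxle
  have a2 : cut σ u P (cut σ u k (m + 1)) ≤ cut σ u P x := cut_mono σ u P (by omega)
  rw [← cut_add σ u hfix] at a1 a2
  have a3 := cut_add_le σ u (len_le_Sp σ (P + k)) m 2
  refine ⟨cut σ u P x + n, by omega, ?_, l1, by rw [add_assoc]; exact l2⟩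
  have : m + 1 + 1 = m + 2 := rfl
  rw [this] at a1
  omega

lemma gap_spec (h2 : 2 ≤ Fintype.card A) (hσne : ∀ a, σ a ≠ []) (hprim : IsPrimitiveSubst σ)
    (hfix : IsFixedPoint σ u) (n i : ℕ) :
    ∃ m, i ≤ m ∧ m + 2 ≤ i + gapConst u ∧ u m = u n ∧ u (m + 1) = u (n + 1) := by
  have hg := exists_gap σ u h2 hσne hprim hfix n
  have hmem : IsGap u [u n, u (n + 1)] (minGap u [u n, u (n + 1)]) :=
    Nat.sInf_mem (s := {g | IsGap u [u n, u (n + 1)] g}) hg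
  have hle : minGap u [u n, u (n + 1)] ≤ gapConst u := by
    apply le_csSup
    · have hf : (factors u 2).Finite := by
        refine (List.finite_length_eq A 2).subset ?_
        rintro w ⟨i, rfl⟩
        simp [seg_length]
      have : {m | ∃ w ∈ factors u 2, m = minGap u w} = minGap u '' factors u 2 := by
        ext m; simp [eq_comm]
      rw [this]
      exact (hf.image _).bddAbove
    · refine ⟨[u n, u (n + 1)], ⟨n, ?_⟩, rfl⟩
      simp [seg, List.range_succ]
  obtain ⟨m, h⟩ := (isGap_two_iff u _ _ _).1 hmem i
  exact ⟨m, h.1, by omega, h.2.2⟩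

lemma weight_substPow (lam : ℝ) (β : A → ℝ)
    (heig : (incMatrixR σ).mulVec β = lam • β) (p : ℕ) (w : List A) :
    ((substPow σ p w).map β).sum = lam ^ p * (w.map β).sum := by
  have h1 : ∀ w : List A, ((substWord σ w).map β).sum = lam * (w.map β).sum := by
    intro w
    induction w with
    | nil => simp [substWord]
    | cons a w ih =>
      have ha : ((σ a).map β).sum = lam * β a := by
        have := congrFun heig a
        simp only [Matrix.mulVec, dotProduct, incMatrixR, Matrix.of_apply, Pi.smul_apply,
          smul_eq_mul] at this
        rw [← this, Finset.sum_list_map_count]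
        simp only [nsmul_eq_mul]
        apply Finset.sum_subset (Finset.subset_univ _)
        intro b _ hb
        rw [List.count_eq_zero_of_not_mem (by simpa using hb)]
        simp
      simp only [substWord, List.flatMap_cons, List.map_append, List.sum_append, List.map_cons,
        List.sum_cons] at *
      rw [ih, ha]; ring
  induction p with
  | zero => simp [substPow]
  | succ p ih => rw [substPow_succ, h1, ih]; ring

lemma le_weight (β : A → ℝ) (w : List A) :
    w.length * Finset.univ.inf' Finset.univ_nonempty β ≤ (w.map β).sum := by
  induction w with
  | nil => simp
  | cons a w ih =>
    have := Finset.inf'_le β (Finset.mem_univ a)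
    simp only [List.length_cons, List.map_cons, List.sum_cons]
    push_cast
    linarith

lemma weight_le (β : A → ℝ) (w : List A) :
    (w.map β).sum ≤ w.length * Finset.univ.sup' Finset.univ_nonempty β := by
  induction w with
  | nil => simp
  | cons a w ih =>
    have := Finset.le_sup' β (Finset.mem_univ a)
    simp only [List.length_cons, List.map_cons, List.sum_cons]
    push_cast
    linarith

variable (lam : ℝ) (β : A → ℝ)

lemma consts (hβ : ∀ a, 0 < β a) : ∃ lo hi : ℝ, 0 < lo ∧ lo ≤ hi ∧ hi ≤ Cst β * lo ∧
    lo = Finset.univ.inf' Finset.univ_nonempty β ∧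
    hi = Finset.univ.sup' Finset.univ_nonempty β := by
  have hlo : 0 < Finset.univ.inf' Finset.univ_nonempty β := by
    rw [Finset.lt_inf'_iff]; exact fun a _ => hβ a
  refine ⟨_, _, hlo, ?_, ?_, rfl, rfl⟩
  · obtain ⟨a⟩ := ‹Nonempty A›
    exact (Finset.inf'_le β (Finset.mem_univ a)).trans (Finset.le_sup' β (Finset.mem_univ a))
  · rw [← div_le_iff₀ hlo]
    exact Nat.le_ceil _

lemma Cst_pos (hβ : ∀ a, 0 < β a) : 1 ≤ Cst β := by
  obtain ⟨lo, hi, h1, h2, h3, -, -⟩ := consts β hβ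
  by_contra h
  have : Cst β = 0 := by omega
  rw [this] at h3
  simp at h3
  linarith

lemma one_le_lam (hσne : ∀ a, σ a ≠ []) (hβ : ∀ a, 0 < β a)
    (heig : (incMatrixR σ).mulVec β = lam • β) : 1 ≤ lam := by
  obtain ⟨a, -, ha⟩ := Finset.exists_mem_eq_inf' (Finset.univ_nonempty (α := A)) β
  have h1 := weight_substPow σ lam β heig 1 [a]
  have h2 := le_weight β (substPow σ 1 [a])
  have h3 : (1 : ℝ) ≤ (substPow σ 1 [a]).length := by
    exact_mod_cast len_pos σ hσne 1 a
  rw [h1, ha] at h2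
  simp at h2
  have h4 := hβ a
  by_contra h
  push Not at h
  have : 1 * β a ≤ ((substPow σ 1 [a]).length : ℝ) * β a := by gcongr
  nlinarith

lemma Sp_le_lam (hσne : ∀ a, σ a ≠ []) (hβ : ∀ a, 0 < β a)
    (heig : (incMatrixR σ).mulVec β = lam • β) (p r : ℕ) :
    (Sp σ (p + r) : ℝ) ≤ lam ^ r * (Cst β : ℝ) ^ 2 * Ip σ p := by
  obtain ⟨lo, hi, h1, h2, h3, e1, e2⟩ := consts β hβ
  have hl := one_le_lam σ lam β hσne hβ heig
  obtain ⟨a, ha⟩ := exists_Sp σ (p + r)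
  obtain ⟨b, hb⟩ := exists_Ip σ p
  have a1 := weight_substPow σ lam β heig (p + r) [a]
  have b1 := weight_substPow σ lam β heig p [b]
  have a2 := le_weight β (substPow σ (p + r) [a])
  have b2 := weight_le β (substPow σ p [b])
  rw [a1, ← e1] at a2
  rw [b1, ← e2] at b2
  have hba : β a ≤ hi := e2 ▸ Finset.le_sup' β (Finset.mem_univ a)
  have hbb : lo ≤ β b := e1 ▸ Finset.inf'_le β (Finset.mem_univ b)
  rw [ha, hb]
  change ((len σ (p + r) a : ℕ) : ℝ) * lo ≤ _ at a2
  change _ ≤ ((len σ p b : ℕ) : ℝ) * hi at b2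
  simp only [List.map_cons, List.map_nil, List.sum_cons, List.sum_nil, add_zero] at a2 b2
  set c : ℝ := (Cst β : ℝ)
  set S : ℝ := (len σ (p + r) a : ℝ)
  set I : ℝ := (len σ p b : ℝ)
  have hI : 0 ≤ I := Nat.cast_nonneg _
  have hc : 0 ≤ c := Nat.cast_nonneg _
  have lp : 0 ≤ lam ^ p := by positivity
  have lr : 0 ≤ lam ^ r := by positivity
  -- lam^p ≤ I * c
  have k1 : lam ^ p ≤ I * c := by
    have : lam ^ p * lo ≤ I * c * lo := by
      calc lam ^ p * lo ≤ lam ^ p * β b := by gcongr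
        _ ≤ I * hi := b2
        _ ≤ I * (c * lo) := by gcongr
        _ = I * c * lo := by ring
    exact le_of_mul_le_mul_right this h1
  have k2 : S * lo ≤ (lam ^ r * c ^ 2 * I) * lo := by
    calc S * lo ≤ lam ^ (p + r) * β a := a2
      _ ≤ lam ^ (p + r) * (c * lo) := by gcongr; exact hba.trans h3
      _ = lam ^ r * lam ^ p * (c * lo) := by ring
      _ ≤ lam ^ r * (I * c) * (c * lo) := by gcongr
      _ = _ := by ring
  exact le_of_mul_le_mul_right k2 h1

lemma Sp_le_Ip (hσne : ∀ a, σ a ≠ []) (hβ : ∀ a, 0 < β a)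
    (heig : (incMatrixR σ).mulVec β = lam • β) (p : ℕ) :
    Sp σ p ≤ (Cst β) ^ 2 * Ip σ p := by
  have := Sp_le_lam σ lam β hσne hβ heig p 0
  simp at this
  exact_mod_cast this

lemma exists_scale (h2 : 2 ≤ Fintype.card A) (hσne : ∀ a, σ a ≠ []) (hprim : IsPrimitiveSubst σ)
    (hfix : IsFixedPoint σ u) (hβ : ∀ a, 0 < β a)
    (heig : (incMatrixR σ).mulVec β = lam • β) (d : ℕ) (hd : 1 ≤ d) :
    ∃ p, d < Ip σ p ∧ (Sp σ p : ℝ) ≤ lam * (Cst β : ℝ) ^ 2 * d := by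
  have hex : ∃ p, d < Ip σ p := len_unbounded σ u h2 hprim hfix (d + 1)
  have hl := one_le_lam σ lam β hσne hβ heig
  refine ⟨Nat.find hex, Nat.find_spec hex, ?_⟩
  rcases hn : Nat.find hex with _ | p
  · have := Nat.find_spec hex
    rw [hn, Ip_zero] at this
    omega
  · have h1 := Nat.find_min hex (m := p) (by omega)
    have h3 := Sp_le_lam σ lam β hσne hβ heig p 1
    rw [pow_one] at h3
    refine h3.trans ?_
    have : (Ip σ p : ℝ) ≤ d := by exact_mod_cast (not_lt.1 h1)
    gcongr

lemma le_Kst (_hlam : 0 ≤ lam) (x : ℝ) (d S n : ℕ) (hS : (S : ℝ) ≤ lam * (Cst β : ℝ) ^ 2 * d)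
    (hx : x ≤ max (2 * ((gapConst u : ℝ) + 1)) ((Fintype.card A : ℝ) ^ 2))
    (hn : (n : ℝ) ≤ x) : n * S ≤ Kst u lam β * d := by
  have hK : lam * (Cst β : ℝ) ^ 2 *
    max (2 * ((gapConst u : ℝ) + 1)) ((Fintype.card A : ℝ) ^ 2) ≤ Kst u lam β := Nat.le_ceil _
  have : (n : ℝ) * S ≤ Kst u lam β * d := by
    have h0 : (0 : ℝ) ≤ n := Nat.cast_nonneg _
    have hh := hn.trans hx
    set mx := max (2 * ((gapConst u : ℝ) + 1)) ((Fintype.card A : ℝ) ^ 2)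
    calc (n : ℝ) * S ≤ mx * (lam * (Cst β : ℝ) ^ 2 * d) := by gcongr
      _ = (lam * (Cst β : ℝ) ^ 2 * mx) * d := by ring
      _ ≤ _ := by gcongr
  exact_mod_cast this

lemma power_free (h2 : 2 ≤ Fintype.card A) (hσne : ∀ a, σ a ≠ []) (hprim : IsPrimitiveSubst σ)
    (hfix : IsFixedPoint σ u) (hap : AperiodicSeq u) (hβ : ∀ a, 0 < β a)
    (heig : (incMatrixR σ).mulVec β = lam • β) (x d M : ℕ) (hd : 1 ≤ d)
    (hM : Kst u lam β * d ≤ M) (hper : ∀ t, t + d < M → u (x + t) = u (x + t + d)) : False := by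
  obtain ⟨p, hp, hS⟩ := exists_scale σ u lam β h2 hσne hprim hfix hβ heig d hd
  have hl := one_le_lam σ lam β hσne hβ heig
  have hgS : (gapConst u + 1) * Sp σ p ≤ M := by
    refine le_trans (le_Kst u lam β (by linarith) ((gapConst u : ℝ) + 1) d (Sp σ p) _ hS ?_ ?_) hM
    · refine le_trans ?_ (le_max_left _ _)
      have : (0 : ℝ) ≤ gapConst u := Nat.cast_nonneg _
      linarith
    · push_cast; rfl
  refine hap d hd (funext fun z => ?_)
  obtain ⟨n, hn1, hn2⟩ := exists_block σ u hσne p z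
  obtain ⟨m₀, hm1, hm2⟩ := exists_block σ u hσne p x
  obtain ⟨m, h1, h3, e0, e1⟩ := gap_spec σ u h2 hσne hprim hfix n (m₀ + 1)
  have hmat : ∀ t < 2, u (n + t) = u (m + t) := by
    intro t ht
    interval_cases t
    · simpa using e0.symm
    · exact e1.symm
  have hL := match_letters σ u hfix hmat p
  have hc := match_cut σ u hmat p 2 le_rfl
  have c1 := cut_succ σ u p (n + 1)
  have c2 := Ip_le_len σ p (u (n + 1))
  have e : n + 1 + 1 = n + 2 := rfl
  rw [e] at c1
  obtain ⟨s, rfl⟩ := Nat.exists_eq_add_of_le hn1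
  have l1 := hL s (by omega)
  have l2 := hL (s + d) (by omega)
  have b1 : cut σ u p (m + 2) ≤ cut σ u p (m₀ + 1 + gapConst u) := cut_mono σ u p h3
  have b2 := cut_add_le σ u (len_le_Sp σ p) m₀ (gapConst u + 1)
  have b3 : m₀ + 1 + gapConst u = m₀ + (gapConst u + 1) := by omega
  rw [b3] at b1
  have b4 : cut σ u p (m₀ + 1) ≤ cut σ u p m := cut_mono σ u p h1
  have h5 := hper (cut σ u p m + s - x) (by omega)
  have e3 : x + (cut σ u p m + s - x) = cut σ u p m + s := by omega
  rw [e3] at h5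
  rw [add_assoc, l1, l2, h5, add_assoc]

open Classical in
lemma complexity (h2 : 2 ≤ Fintype.card A) (hσne : ∀ a, σ a ≠ []) (hprim : IsPrimitiveSubst σ)
    (hfix : IsFixedPoint σ u) (hβ : ∀ a, 0 < β a)
    (heig : (incMatrixR σ).mulVec β = lam • β) (d : ℕ) (hd : 1 ≤ d) :
    ∃ F : Finset (List A), (∀ x, seg u x (x + d) ∈ F) ∧ F.card ≤ Kst u lam β * d := by
  obtain ⟨p, hp, hS⟩ := exists_scale σ u lam β h2 hσne hprim hfix hβ heig d hd
  have hl := one_le_lam σ lam β hσne hβ heig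
  refine ⟨(Finset.univ : Finset ((A × A) × Fin (Sp σ p))).image
    fun t => ((substPow σ p [t.1.1] ++ substPow σ p [t.1.2]).drop t.2).take d, ?_, ?_⟩
  · intro x
    obtain ⟨n, hn1, hn2⟩ := exists_block σ u hσne p x
    obtain ⟨s, rfl⟩ := Nat.exists_eq_add_of_le hn1
    rw [cut_succ] at hn2
    have hs : s < Sp σ p := lt_of_lt_of_le (by omega) (len_le_Sp σ p (u n))
    rw [Finset.mem_image]
    refine ⟨((u n, u (n + 1)), ⟨s, hs⟩), Finset.mem_univ _, ?_⟩
    simp only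
    apply List.ext_getElem?
    intro k
    have c2 := Ip_le_len σ p (u (n + 1))
    by_cases hk : k < d
    · rw [seg_getElem? _ _ _ _ (by omega), List.getElem?_take_of_lt hk, List.getElem?_drop]
      by_cases hh : s + k < len σ p (u n)
      · rw [List.getElem?_append_left hh, cut_letter σ u hfix _ _ _ hh, add_assoc]
      · have hh' : (substPow σ p [u n]).length ≤ s + k := not_lt.1 hh
        rw [List.getElem?_append_right hh']
        change (substPow σ p [u (n + 1)])[s + k - len σ p (u n)]? = _
        rw [cut_letter σ u hfix _ _ _ (by omega), cut_succ]
        congr 2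
        omega
    · rw [List.getElem?_eq_none, List.getElem?_eq_none]
      · rw [seg_length]; omega
      · rw [List.length_take]; omega
  · refine Finset.card_image_le.trans ?_
    rw [Finset.card_univ, Fintype.card_prod, Fintype.card_prod, Fintype.card_fin]
    refine le_Kst u lam β (by linarith) ((Fintype.card A : ℝ) ^ 2) d (Sp σ p) _ hS
      (le_max_right _ _) ?_
    push_cast
    rw [pow_two]

end Growth

section Main

variable {A : Type*} [Fintype A] [Nonempty A] [DecidableEq A]
variable (σ : A → List A) (u : ℕ → A)

/-- The data of a window at level `p` around `i`, and of its copy around `j`. -/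
def Level (i j R p w v n s : ℕ) : Prop :=
  cut σ u p w ≤ i ∧ i < cut σ u p (w + R) ∧ s + i = j + cut σ u p w ∧
  cut σ u p v ≤ s ∧ s < cut σ u p (v + 1) ∧
  s + cut σ u p (w + R) ≤ cut σ u p (v + n) + cut σ u p w ∧
  (∀ t, cut σ u p w + t < cut σ u p (w + R) → u (s + t) = u (cut σ u p w + t))

lemma exists_level (hσne : ∀ a, σ a ≠ []) (i j L C k p : ℕ)
    (hSI : Sp σ p ≤ C ^ 2 * Ip σ p)
    (hL : (C ^ 4 * k + 2 * C ^ 2 + 1) * Sp σ p ≤ L) (hi : L ≤ i) (hj : L ≤ j)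
    (hm : ∀ t < 2 * L, u (i - L + t) = u (j - L + t)) :
    ∃ w v n s, Level σ u i j (C ^ 4 * k + 2 * C ^ 2 + 1) p w v n s ∧
      C ^ 2 * k + 2 ≤ n ∧ n ≤ k * C ^ 6 + 2 * C ^ 4 + C ^ 2 + 2 := by
  obtain ⟨R, hR⟩ : ∃ R, R = C ^ 4 * k + 2 * C ^ 2 + 1 := ⟨_, rfl⟩
  rw [← hR] at hL ⊢
  have hR1 : 1 ≤ R := by omega
  have hSpos : Sp σ p ≤ R * Sp σ p := Nat.le_mul_of_pos_left _ hR1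
  have hIpos := Ip_pos σ hσne p
  obtain ⟨w, hw1, hw2⟩ := exists_block σ u hσne p i
  have hwS := cut_succ σ u p w
  have hwS' := len_le_Sp σ p (u w)
  have hwR : cut σ u p (w + 1) ≤ cut σ u p (w + R) := cut_mono σ u p (by omega)
  have hwRS := cut_add_le σ u (len_le_Sp σ p) w R
  have hwRI := le_cut_add σ u (Ip_le_len σ p) w R
  obtain ⟨s, hs⟩ : ∃ s, s + i = j + cut σ u p w := ⟨j + cut σ u p w - i, by omega⟩
  obtain ⟨v, hv1, hv2⟩ := exists_block σ u hσne p s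
  have hid := (cut_strictMono σ u hσne p).id_le
  obtain ⟨m, hmdef⟩ : ∃ m, cut σ u p (w + R) = cut σ u p w + m :=
    Nat.exists_eq_add_of_le (cut_mono σ u p (by omega))
  -- last block
  obtain ⟨x, hx1, hx2⟩ := exists_block σ u hσne p (s + m - 1)
  have hmpos : 1 ≤ m := by omega
  have hvx : v ≤ x := by
    by_contra h
    have : cut σ u p (x + 1) ≤ cut σ u p v := cut_mono σ u p (by omega)
    omega
  obtain ⟨n, rfl⟩ := Nat.exists_eq_add_of_le hvx
  refine ⟨w, v, n + 1, s, ⟨hw1, by omega, hs, hv1, hv2, ?_, ?_⟩, ?_, ?_⟩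
  · rw [← add_assoc]; omega
  · intro t ht
    have := hm (cut σ u p w + t - (i - L)) (by omega)
    rw [show i - L + (cut σ u p w + t - (i - L)) = cut σ u p w + t by omega,
      show j - L + (cut σ u p w + t - (i - L)) = s + t by omega] at this
    exact this.symm
  · have h1 := cut_add_le σ u (len_le_Sp σ p) v (n + 1)
    rw [← add_assoc] at h1
    have h2 : R * Ip σ p ≤ (n + 1) * Sp σ p := by omega
    have h3 : R * Ip σ p ≤ ((n + 1) * C ^ 2) * Ip σ p := by
      calc R * Ip σ p ≤ (n + 1) * Sp σ p := h2
        _ ≤ (n + 1) * (C ^ 2 * Ip σ p) := Nat.mul_le_mul_left _ hSI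
        _ = _ := by ring
    have h4 := Nat.le_of_mul_le_mul_right h3 hIpos
    rw [hR] at h4
    by_contra hlt
    have h5 : n + 1 ≤ C ^ 2 * k + 2 := by omega
    have h6 := Nat.mul_le_mul_right (C ^ 2) h5
    have h7 : (C ^ 2 * k + 2) * C ^ 2 = C ^ 4 * k + 2 * C ^ 2 := by ring
    omega
  · rcases n with _ | n
    · omega
    · have h1 := le_cut_add σ u (Ip_le_len σ p) (v + 1) n
      rw [show v + 1 + n = v + (n + 1) by ring] at h1
      have h2 : n * Ip σ p ≤ R * Sp σ p := by omega
      have h3 : n * Ip σ p ≤ (R * C ^ 2) * Ip σ p := by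
        calc n * Ip σ p ≤ R * Sp σ p := h2
          _ ≤ R * (C ^ 2 * Ip σ p) := Nat.mul_le_mul_left _ hSI
          _ = _ := by ring
      have h4 := Nat.le_of_mul_le_mul_right h3 hIpos
      have h5 : R * C ^ 2 = k * C ^ 6 + 2 * C ^ 4 + C ^ 2 := by rw [hR]; ring
      omega

lemma level_step (hfix : IsFixedPoint σ u) (hσne : ∀ a, σ a ≠ []) (i j R n p r Q : ℕ) (hQ : Q = r + p)
    (w₁ v₁ s₁ w₂ v₂ s₂ : ℕ)
    (h₁ : Level σ u i j R p w₁ v₁ n s₁) (h₂ : Level σ u i j R (1 + Q) w₂ v₂ n s₂)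
    (hR : 1 ≤ R) (hn : 1 ≤ n)
    (hW : ∀ t < R, u (w₁ + t) = u (w₂ + t)) (hV : ∀ t < n, u (v₁ + t) = u (v₂ + t))
    (hpf : ∀ x d, 1 ≤ d → d ≤ Sp σ (1 + Q) →
      (∀ t, t + d < R * Ip σ (1 + Q) → u (x + t) = u (x + t + d)) → False)
    (hi : i ∈ cutPoints σ u 1) : j ∈ cutPoints σ u 1 := by
  obtain ⟨-, -, -, a4, a5, a6, a7⟩ := h₁
  obtain ⟨b1, b2, b3, b4, b5, b6, b7⟩ := h₂
  obtain ⟨z, hz⟩ := hi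
  change i = cut σ u 1 z at hz
  have cQ : ∀ n, cut σ u Q n = cut σ u r (cut σ u p n) := fun n => by rw [hQ, cut_add σ u hfix]
  have cq : ∀ n, cut σ u (1 + Q) n = cut σ u 1 (cut σ u Q n) := fun n => cut_add σ u hfix _ _ _
  -- level p match
  obtain ⟨m, hm⟩ : ∃ m, cut σ u p (w₁ + R) = cut σ u p w₁ + m :=
    Nat.exists_eq_add_of_le (cut_mono σ u p (by omega))
  have m0 : ∀ t < m, u (s₁ + t) = u (cut σ u p w₁ + t) := fun t ht => a7 t (by omega)
  -- level Q
  obtain ⟨M, hM⟩ : ∃ M, cut σ u Q (w₁ + R) = cut σ u Q w₁ + M :=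
    Nat.exists_eq_add_of_le (cut_mono σ u Q (by omega))
  have hXM : cut σ u r (s₁ + m) = cut σ u r s₁ + M := by
    have := match_cut σ u m0 r m le_rfl
    rw [← hm, ← cQ, ← cQ] at this
    omega
  have m1 : ∀ t < M, u (cut σ u r s₁ + t) = u (cut σ u Q w₁ + t) := fun t ht => by
    rw [cQ]
    exact match_letters σ u hfix m0 r t (by omega)
  have m2 : ∀ t < M, u (cut σ u Q w₁ + t) = u (cut σ u Q w₂ + t) := fun t ht =>
    match_letters σ u hfix hW Q t (by omega)
  have hM2 : cut σ u Q (w₂ + R) = cut σ u Q w₂ + M := by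
    have := match_cut σ u hW Q R le_rfl
    omega
  obtain ⟨D, hD⟩ : ∃ D, cut σ u r s₁ = cut σ u Q v₁ + D :=
    Nat.exists_eq_add_of_le (by rw [cQ]; exact cut_mono σ u r a4)
  have hDM : cut σ u Q v₁ + D + M ≤ cut σ u Q (v₁ + n) := by
    have : cut σ u r (s₁ + m) ≤ cut σ u Q (v₁ + n) := by
      rw [cQ]; exact cut_mono σ u r (by omega)
    omega
  have hDv : cut σ u Q v₂ + D ≤ cut σ u Q (v₂ + 1) := by
    have h1 : cut σ u r s₁ ≤ cut σ u Q (v₁ + 1) := by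
      rw [cQ]; exact cut_mono σ u r (by omega)
    have h2 := match_cut σ u hV Q 1 hn
    omega
  have m3 : ∀ t < M, u (cut σ u Q v₂ + D + t) = u (cut σ u Q w₂ + t) := fun t ht => by
    rw [← m2 t ht, ← m1 t ht, hD, add_assoc, add_assoc]
    exact (match_letters σ u hfix hV Q (D + t) (by omega)).symm
  -- level 1 + Q
  obtain ⟨X, hX⟩ : ∃ X, X = cut σ u 1 (cut σ u Q v₂ + D) := ⟨_, rfl⟩
  obtain ⟨N, hN⟩ : ∃ N, cut σ u (1 + Q) (w₂ + R) = cut σ u (1 + Q) w₂ + N :=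
    Nat.exists_eq_add_of_le (cut_mono σ u _ (by omega))
  have hXN : cut σ u 1 (cut σ u Q v₂ + D + M) = X + N := by
    have := match_cut σ u m3 1 M le_rfl
    rw [← hM2, ← cq, ← cq, ← hX] at this
    omega
  have m4 : ∀ t < N, u (X + t) = u (cut σ u (1 + Q) w₂ + t) := fun t ht => by
    rw [cq, hX]
    exact match_letters σ u hfix m3 1 t (by omega)
  have hX1 : cut σ u (1 + Q) v₂ ≤ X := by
    rw [cq, hX]; exact cut_mono σ u 1 (by omega)
  have hX2 : X ≤ cut σ u (1 + Q) (v₂ + 1) := by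
    rw [cq, hX]; exact cut_mono σ u 1 (by omega)
  have hN' : R * Ip σ (1 + Q) ≤ N := by
    have := le_cut_add σ u (Ip_le_len σ (1 + Q)) w₂ R
    omega
  have hlen := cut_succ σ u (1 + Q) v₂
  have hlen' := len_le_Sp σ (1 + Q) (u v₂)
  have hXs : X = s₂ := by
    rcases lt_trichotomy X s₂ with h | h | h
    · exfalso
      obtain ⟨d, rfl⟩ := Nat.exists_eq_add_of_lt h
      refine hpf (cut σ u (1 + Q) w₂) (d + 1) (by omega) (by omega) fun t ht => ?_
      have e1 := b7 t (by omega)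
      have e2 := m4 (t + (d + 1)) (by omega)
      rw [← e1, add_assoc (cut σ u (1 + Q) w₂), ← e2]
      congr 1; omega
    · exact h
    · exfalso
      obtain ⟨d, rfl⟩ := Nat.exists_eq_add_of_lt h
      refine hpf (cut σ u (1 + Q) w₂) (d + 1) (by omega) (by omega) fun t ht => ?_
      have e1 := b7 (t + (d + 1)) (by omega)
      have e2 := m4 t (by omega)
      rw [← e2, add_assoc (cut σ u (1 + Q) w₂), ← e1]
      congr 1; omega
  -- conclusion
  have hsm := cut_strictMono σ u hσne 1
  have z1 : cut σ u Q w₂ ≤ z := by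
    rw [← hsm.le_iff_le, ← cq]; omega
  have z2 : z ≤ cut σ u Q w₂ + M := by
    rw [← hsm.le_iff_le, ← hM2, ← cq]; omega
  obtain ⟨y, rfl⟩ := Nat.exists_eq_add_of_le z1
  refine ⟨cut σ u Q v₂ + D + y, ?_⟩
  change j = cut σ u 1 _
  have := match_cut σ u m3 1 y (by omega)
  rw [← cq, ← hX] at this
  omega

end Main

end Rec

/-- Lemma 4.2, first part: `σ` is bilaterally recognizable under the index
`L₀ = (C⁴(K+1)+2C²+1) S_{p₀}`. -/
theorem stmt_8 (A : Type*) [Fintype A] [DecidableEq A] [Nonempty A]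
    (h2 : 2 ≤ Fintype.card A)
    (σ : A → List A) (hσne : ∀ a, σ a ≠ [])
    (hprim : IsPrimitiveSubst σ)
    (u : ℕ → A) (hfix : IsFixedPoint σ u) (hap : AperiodicSeq u)
    (lam : ℝ) (β : A → ℝ) (hβ : ∀ a, 0 < β a)
    (heig : (incMatrixR σ).mulVec β = lam • β) :
    ∀ i j : ℕ, L0 σ u lam β ≤ i → L0 σ u lam β ≤ j →
      seg u (i - L0 σ u lam β) (i + L0 σ u lam β) =
        seg u (j - L0 σ u lam β) (j + L0 σ u lam β) →
      i ∈ cutPoints σ u 1 → j ∈ cutPoints σ u 1 := by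
  classical
  intro i j hi hj hseg hcut
  have hC := Rec.Cst_pos β hβ
  have hSI := Rec.Sp_le_Ip σ lam β hσne hβ heig
  have hcx := fun d hd => Rec.complexity σ u lam β h2 hσne hprim hfix hβ heig d hd
  have hpf := fun x d M => Rec.power_free σ u lam β h2 hσne hprim hfix hap hβ heig x d M
  obtain ⟨L, hL⟩ : ∃ L, L = L0 σ u lam β := ⟨_, rfl⟩
  obtain ⟨P, hP⟩ : ∃ P, P = p0 u lam β := ⟨_, rfl⟩
  have hL' := hL
  have hP' := hP
  unfold L0 at hL'
  rw [← hP] at hL'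
  unfold p0 at hP'
  rw [← hL] at hi hj hseg
  clear hL hP
  generalize Cst β = C at *
  generalize Kst u lam β = K at *
  obtain ⟨R, hR⟩ : ∃ R, R = C ^ 4 * (K + 1) + 2 * C ^ 2 + 1 := ⟨_, rfl⟩
  rw [show i + L = i - L + 2 * L by omega, show j + L = j - L + 2 * L by omega,
    Rec.seg_eq_iff] at hseg
  have hlev : ∀ p, p ≤ P → ∃ w v n s, Rec.Level σ u i j R p w v n s ∧
      C ^ 2 * (K + 1) + 2 ≤ n ∧ n ≤ (K + 1) * C ^ 6 + 2 * C ^ 4 + C ^ 2 + 2 := by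
    intro p hp
    rw [hR]
    refine Rec.exists_level σ u hσne i j L C (K + 1) p (hSI p) ?_ hi hj hseg
    rw [hL']
    exact Nat.mul_le_mul_left _ (Rec.Sp_mono σ hσne hp)
  rw [← hR] at hP'
  choose! w v n s hlev hlo hhi using hlev
  choose! F hF hFc using hcx
  have hR1 : 1 ≤ R := by omega
  obtain ⟨J, hJ⟩ : ∃ J, J = Finset.Icc (C ^ 2 * (K + 1) + 2)
    ((K + 1) * C ^ 6 + 2 * C ^ 4 + C ^ 2 + 2) := ⟨_, rfl⟩
  rw [← hJ] at hP'
  have hcard : (F R ×ˢ J.biUnion F).card < (Finset.Icc 1 P).card := by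
    rw [Finset.card_product, Nat.card_Icc]
    have h1 : (J.biUnion F).card ≤ K * ∑ n ∈ J, n := by
      refine Finset.card_biUnion_le.trans ?_
      rw [Finset.mul_sum]
      refine Finset.sum_le_sum fun d hd => hFc d ?_
      rw [hJ, Finset.mem_Icc] at hd
      omega
    have h3 := Nat.mul_le_mul (hFc R hR1) h1
    have h4 : K * R * (K * ∑ n ∈ J, n) = K ^ 2 * R * ∑ n ∈ J, n := by ring
    omega
  obtain ⟨p, hp, q, hq, hne, heq⟩ := Finset.exists_ne_map_eq_of_card_lt_of_maps_to hcard
    (f := fun p => (seg u (w p) (w p + R), seg u (v p) (v p + n p))) (by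
      intro p hp
      have hp' := (Finset.mem_Icc.1 hp).2
      simp only [Finset.coe_product, Set.mem_prod, Finset.mem_coe]
      have := hlo p hp'
      refine ⟨hF R hR1 _, Finset.mem_biUnion.2 ⟨n p, ?_, hF _ (by omega) _⟩⟩
      rw [hJ, Finset.mem_Icc]
      exact ⟨hlo p hp', hhi p hp'⟩)
  have key : ∀ p q, p < q → q ≤ P →
      seg u (w p) (w p + R) = seg u (w q) (w q + R) →
      seg u (v p) (v p + n p) = seg u (v q) (v q + n q) → j ∈ cutPoints σ u 1 := by
    intro p q hpq hq hw hv
    obtain ⟨r, rfl⟩ : ∃ r, q = 1 + (r + p) := ⟨q - p - 1, by omega⟩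
    have hnn : n p = n (1 + (r + p)) := by
      have := congrArg List.length hv
      simpa [Rec.seg_length] using this
    have l1 := hlev p (by omega)
    have l2 := hlev _ hq
    have hn1 := hlo p (by omega)
    rw [← hnn] at l2 hv
    refine Rec.level_step σ u hfix hσne i j R (n p) p r (r + p) rfl _ _ _ _ _ _ l1 l2 hR1
      (by omega) ((Rec.seg_eq_iff u _ _ _).1 hw) ((Rec.seg_eq_iff u _ _ _).1 hv) ?_ hcut
    intro x d hd hdS hper
    refine hpf x d _ hd ?_ hper
    have h5 : K * C ^ 2 ≤ R := by
      have h6 : C ^ 2 ≤ C ^ 4 := Nat.pow_le_pow_right hC (by norm_num)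
      have h7 : K * C ^ 2 ≤ K * C ^ 4 := Nat.mul_le_mul_left _ h6
      have h8 : C ^ 4 * (K + 1) = K * C ^ 4 + C ^ 4 := by ring
      omega
    calc K * d ≤ K * (C ^ 2 * Ip σ (1 + (r + p))) :=
          Nat.mul_le_mul_left _ (hdS.trans (hSI _))
      _ = K * C ^ 2 * Ip σ (1 + (r + p)) := by ring
      _ ≤ _ := Nat.mul_le_mul_right _ h5
  rw [Prod.mk.injEq] at heq
  rcases lt_or_gt_of_ne hne with h | h
  · exact key p q h (Finset.mem_Icc.1 hq).2 heq.1 heq.2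
  · exact key q p h (Finset.mem_Icc.1 hp).2 heq.1.symm heq.2.symm
end

section
/- Let p₀ = K²(C⁴(K+1)+2C²+1) · (Σ_{n = C²(K+1)+2}^{(K+1)C⁶+2C⁴+C²+2} n) + 1 and L₀ = (C⁴(K+1)+2C²+1)·S_{p₀}. Then σ has the local unique composition property under L₀: for all i, j ≥ L₀ and m, n ∈ ℤ₊, if u_{[i−L₀, i+L₀)} = u_{[j−L₀, j+L₀)}, |σ(u_{[0,m)})| ≤ i < |σ(u_{[0,m+1)})| and |σ(u_{[0,n)})| ≤ j < |σ(u_{[0,n+1)})|, then u_m = u_n. -/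
open List Filter

section Aux

variable {A : Type*}

theorem substPow_append (σ : A → List A) (p : ℕ) (v w : List A) :
    substPow σ p (v ++ w) = substPow σ p v ++ substPow σ p w := by
  induction p generalizing v w with
  | zero => rfl
  | succ p ih =>
    simp only [substPow, Function.iterate_succ_apply] at ih ⊢
    rw [substWord, List.flatMap_append]
    exact ih _ _

theorem substPow_add (σ : A → List A) (p r : ℕ) (w : List A) :
    substPow σ (p + r) w = substPow σ p (substPow σ r w) := by
  simp only [substPow, Function.iterate_add_apply]

theorem substPow_one (σ : A → List A) (w : List A) : substPow σ 1 w = substWord σ w := rfl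

theorem seg_zero_succ (u : ℕ → A) (m : ℕ) : seg u 0 (m + 1) = seg u 0 m ++ [u m] := by
  simp [seg, List.range_succ]

theorem seg_length (u : ℕ → A) (i j : ℕ) : (seg u i j).length = j - i := by
  simp [seg]

/-- position of the `n`-th natural `p`-cutting point -/
def cc (σ : A → List A) (u : ℕ → A) (p n : ℕ) : ℕ := (substPow σ p (seg u 0 n)).length

/-- agreement of `u` on two intervals of length `l` -/
def Agree (u : ℕ → A) (e f l : ℕ) : Prop := ∀ t < l, u (e + t) = u (f + t)

theorem Agree.symm {u : ℕ → A} {e f l : ℕ} (h : Agree u e f l) : Agree u f e l :=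
  fun t ht => (h t ht).symm

theorem Agree.trans {u : ℕ → A} {e f k l : ℕ} (h : Agree u e f l) (h' : Agree u f k l) :
    Agree u e k l := fun t ht => (h t ht).trans (h' t ht)

theorem Agree.mono {u : ℕ → A} {e f l l' : ℕ} (h : Agree u e f l) (hl : l' ≤ l) :
    Agree u e f l' := fun t ht => h t (by omega)

theorem Agree.shift {u : ℕ → A} {e f l : ℕ} (a l' : ℕ) (h : Agree u e f l) (hl : a + l' ≤ l) :
    Agree u (e + a) (f + a) l' := fun t ht => by
  have := h (a + t) (by omega)
  rwa [← Nat.add_assoc, ← Nat.add_assoc] at this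

theorem agree_of_seg {u : ℕ → A} {e f l : ℕ} (h : seg u e (e + l) = seg u f (f + l)) :
    Agree u e f l := by
  intro t ht
  have := congrArg (fun w => w[t]?) h
  simpa [seg, ht] using this

theorem seg_of_agree {u : ℕ → A} {e f l : ℕ} (h : Agree u e f l) :
    seg u e (e + l) = seg u f (f + l) := by
  simp only [seg, Nat.add_sub_cancel_left]
  apply List.map_congr_left
  intro t ht
  exact h t (by simpa using ht)

theorem substPow_seg {σ : A → List A} {u : ℕ → A} (hfix : IsFixedPoint σ u) (p n : ℕ) :
    substPow σ p (seg u 0 n) = seg u 0 (cc σ u p n) := by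
  induction p with
  | zero => simp [substPow, cc, seg_length]
  | succ p ih =>
    have h1 : substPow σ (p + 1) (seg u 0 n) = substWord σ (substPow σ p (seg u 0 n)) := by
      simp [substPow, Function.iterate_succ_apply']
    rw [cc, h1, ih]
    exact hfix _

theorem cc_comp {σ : A → List A} {u : ℕ → A} (hfix : IsFixedPoint σ u) (p r n : ℕ) :
    cc σ u (p + r) n = cc σ u p (cc σ u r n) := by
  unfold cc
  rw [substPow_add, substPow_seg hfix r n, cc]
  simp [seg_length]

theorem cc_zero (σ : A → List A) (u : ℕ → A) (p : ℕ) : cc σ u p 0 = 0 := by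
  have h : ∀ p, substPow σ p ([] : List A) = [] := by
    intro p
    induction p with
    | zero => rfl
    | succ p ih => simpa [substPow, substWord] using ih
  simp [cc, seg, h]

theorem cc_succ (σ : A → List A) (u : ℕ → A) (p n : ℕ) :
    cc σ u p (n + 1) = cc σ u p n + (substPow σ p [u n]).length := by
  simp [cc, seg_zero_succ, substPow_append]

theorem u_block {σ : A → List A} {u : ℕ → A} (hfix : IsFixedPoint σ u) (p n t : ℕ)
    (ht : t < (substPow σ p [u n]).length) :
    some (u (cc σ u p n + t)) = (substPow σ p [u n])[t]? := by
  have h := substPow_seg hfix p (n + 1)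
  rw [seg_zero_succ, substPow_append] at h
  have h2 := congrArg (fun w => w[cc σ u p n + t]?) h
  rw [List.getElem?_append_right (by simp [cc])] at h2
  have h3 : cc σ u p n + t < cc σ u p (n + 1) := by rw [cc_succ]; omega
  simp only [seg, Nat.sub_zero, Nat.zero_add, List.getElem?_map,
    List.getElem?_range h3, Option.map_some] at h2
  rw [← h2]
  congr 1
  simp only [cc, seg, Nat.sub_zero, Nat.zero_add]
  omega

theorem agree_cc {σ : A → List A} {u : ℕ → A} (r : ℕ) {e f l : ℕ}
    (h : Agree u e f l) (t : ℕ) (ht : t ≤ l) :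
    cc σ u r (e + t) + cc σ u r f = cc σ u r (f + t) + cc σ u r e := by
  induction t with
  | zero => simp [Nat.add_comm]
  | succ t ih =>
    have := ih (by omega)
    rw [← Nat.add_assoc, ← Nat.add_assoc, cc_succ, cc_succ, h t (by omega)]
    omega

theorem agree_lift {σ : A → List A} {u : ℕ → A} (hfix : IsFixedPoint σ u) (r : ℕ) {e f l : ℕ}
    (h : Agree u e f l) :
    Agree u (cc σ u r e) (cc σ u r f) (cc σ u r (e + l) - cc σ u r e) := by
  induction l with
  | zero => intro t ht; simp at ht
  | succ l ih =>
    intro s hs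
    have ih' := ih (h.mono (by omega))
    by_cases hsl : s < cc σ u r (e + l) - cc σ u r e
    · exact ih' s hsl
    · have hm : cc σ u r e ≤ cc σ u r (e + l) := by
        clear ih ih' hs hsl h
        induction l with
        | zero => simp
        | succ l ih => rw [← Nat.add_assoc, cc_succ]; omega
      have h1 := agree_cc (σ := σ) r h l (by omega)
      rw [← Nat.add_assoc, cc_succ] at hs
      obtain ⟨s', rfl⟩ : ∃ s', s = cc σ u r (e + l) - cc σ u r e + s' :=
        ⟨s - (cc σ u r (e + l) - cc σ u r e), by omega⟩
      have e1 : cc σ u r e + (cc σ u r (e + l) - cc σ u r e + s') = cc σ u r (e + l) + s' := by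
        omega
      have e2 : cc σ u r f + (cc σ u r (e + l) - cc σ u r e + s') = cc σ u r (f + l) + s' := by
        omega
      rw [e1, e2]
      have hl := h l (by omega)
      have b1 := u_block hfix r (e + l) s' (by omega)
      have b2 := u_block hfix r (f + l) s' (by rw [← hl]; omega)
      rw [← hl, ← b1] at b2
      exact (Option.some.inj b2).symm

theorem substPow_ne {σ : A → List A} (hσne : ∀ a, σ a ≠ []) (p : ℕ) (w : List A) :
    w.length ≤ (substPow σ p w).length := by
  induction p with
  | zero => simp [substPow]
  | succ p ih =>
    refine ih.trans ?_
    have h1 : substPow σ (p + 1) w = substWord σ (substPow σ p w) := by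
      simp [substPow, Function.iterate_succ_apply']
    rw [h1]
    generalize substPow σ p w = v
    induction v with
    | nil => simp
    | cons a v ih =>
      have := List.length_pos_iff.mpr (hσne a)
      simp [substWord] at ih ⊢
      omega

theorem cc_mono (σ : A → List A) (u : ℕ → A) (p : ℕ) : Monotone (cc σ u p) :=
  monotone_nat_of_le_succ fun n => by rw [cc_succ]; omega

theorem cc_strictMono {σ : A → List A} (hσne : ∀ a, σ a ≠ []) (u : ℕ → A) (p : ℕ) :
    StrictMono (cc σ u p) :=
  strictMono_nat_of_lt_succ fun n => by
    have := substPow_ne hσne p [u n]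
    rw [cc_succ]
    simp at this
    omega

theorem exists_block {σ : A → List A} (hσne : ∀ a, σ a ≠ []) (u : ℕ → A) (p i : ℕ) :
    ∃ m, cc σ u p m ≤ i ∧ i < cc σ u p (m + 1) := by
  have hs := cc_strictMono hσne u p
  have hex : ∃ m, i < cc σ u p (m + 1) := ⟨i, Nat.lt_of_lt_of_le (Nat.lt_succ_self i) (hs.id_le _)⟩
  classical
  refine ⟨Nat.find hex, ?_, Nat.find_spec hex⟩
  rcases h : Nat.find hex with _ | k
  · simp [cc_zero]
  · have := Nat.find_min hex (m := k) (by omega)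
    omega

/-- next cutting point -/
theorem exists_next {σ : A → List A} (hσne : ∀ a, σ a ≠ []) (u : ℕ → A) (p x : ℕ) :
    ∃ n, x ≤ cc σ u p n ∧ (n = 0 ∨ cc σ u p (n - 1) ≤ x) := by
  rcases Nat.eq_zero_or_pos x with rfl | hx
  · exact ⟨0, by simp⟩
  · obtain ⟨m, h1, h2⟩ := exists_block hσne u p x
    exact ⟨m + 1, h2.le, Or.inr (by simpa using h1)⟩

/-- The same level-one letter sits over `i` and `j` when the level-`r` blocks are aligned. -/
theorem comp_of_aligned {σ : A → List A} (hσne : ∀ a, σ a ≠ []) {u : ℕ → A}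
    (hfix : IsFixedPoint σ u) {r e f l i j m n : ℕ} (hag : Agree u e f l)
    (hij : cc σ u (r + 1) e + j = cc σ u (r + 1) f + i)
    (hi1 : cc σ u (r + 1) e ≤ i) (hi2 : i < cc σ u (r + 1) (e + l))
    (hm1 : cc σ u 1 m ≤ i) (hm2 : i < cc σ u 1 (m + 1))
    (hn1 : cc σ u 1 n ≤ j) (hn2 : j < cc σ u 1 (n + 1)) : u m = u n := by
  have hs := cc_strictMono hσne u 1
  rw [Nat.add_comm r 1, cc_comp hfix] at hi1 hi2 hij
  rw [cc_comp hfix 1 r f] at hij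
  have hl := agree_lift hfix r hag
  have hle : cc σ u r e ≤ cc σ u r (e + l) := cc_mono σ u r (by omega)
  have a1 : cc σ u r e < m + 1 := hs.lt_iff_lt.mp (by omega)
  have a2 : m < cc σ u r (e + l) := hs.lt_iff_lt.mp (by omega)
  obtain ⟨t, rfl⟩ : ∃ t, m = cc σ u r e + t := ⟨m - cc σ u r e, by omega⟩
  have c1 := agree_cc (σ := σ) 1 hl t (by omega)
  have c2 := agree_cc (σ := σ) 1 hl (t + 1) (by omega)
  rw [← Nat.add_assoc, ← Nat.add_assoc] at c2
  have b1 : cc σ u r f + t < n + 1 := hs.lt_iff_lt.mp (by omega)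
  have b2 : n < cc σ u r f + t + 1 := hs.lt_iff_lt.mp (by omega)
  have : n = cc σ u r f + t := by omega
  rw [this]
  exact hl t (by omega)

end Aux

section Aux2

set_option linter.unusedSectionVars false

variable {A : Type*} [Fintype A] [Nonempty A] [DecidableEq A]

theorem cc_add_le (σ : A → List A) (u : ℕ → A) (p n k : ℕ) :
    cc σ u p (n + k) ≤ cc σ u p n + k * Sp σ p := by
  induction k with
  | zero => simp
  | succ k ih =>
    have : (substPow σ p [u (n + k)]).length ≤ Sp σ p :=
      Finset.le_sup' (fun a => (substPow σ p [a]).length) (Finset.mem_univ _)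
    rw [← Nat.add_assoc, cc_succ, Nat.succ_mul]
    omega

theorem le_cc_add (σ : A → List A) (u : ℕ → A) (p n k : ℕ) :
    cc σ u p n + k * Ip σ p ≤ cc σ u p (n + k) := by
  induction k with
  | zero => simp
  | succ k ih =>
    have : Ip σ p ≤ (substPow σ p [u (n + k)]).length :=
      Finset.inf'_le (fun a => (substPow σ p [a]).length) (Finset.mem_univ _)
    rw [← Nat.add_assoc, cc_succ, Nat.succ_mul]
    omega

/-- The combinatorial core: two scales with the same words give unique composition. -/
theorem core {σ : A → List A} (hσne : ∀ a, σ a ≠ []) {u : ℕ → A}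
    (hfix : IsFixedPoint σ u) {i j m n : ℕ} {K N W p r Mp Mq np nq xp xq : ℕ}
    (hpow : ∀ x d l, 1 ≤ d → K * d ≤ l → ¬ Agree u x (x + d) l)
    (hW : K * Sp σ (p + (r + 1)) ≤ W * Ip σ (p + (r + 1)))
    (hN : (W + 1) * Sp σ p ≤ N * Ip σ p)
    (hv : Agree u Mp Mq N) (hw : Agree u np nq W)
        (hxq : cc σ u (p + (r + 1)) Mq + j = xq + i)
    (hnp : xp ≤ cc σ u p np) (hnp' : np = 0 ∨ cc σ u p (np - 1) ≤ xp)
    (hnq : xq ≤ cc σ u (p + (r + 1)) nq)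
    (hnq' : nq = 0 ∨ cc σ u (p + (r + 1)) (nq - 1) ≤ xq)
    (hap : Agree u (cc σ u p Mp) xp ((W + 1) * Sp σ p))
    (haq : Agree u (cc σ u (p + (r + 1)) Mq) xq ((W + 1) * Sp σ (p + (r + 1))))
    (hi1 : cc σ u (p + (r + 1)) Mq + Sp σ (p + (r + 1)) ≤ i)
    (hi2 : i < cc σ u (p + (r + 1)) Mq + W * Ip σ (p + (r + 1)))
    (hm1 : cc σ u 1 m ≤ i) (hm2 : i < cc σ u 1 (m + 1))
    (hn1 : cc σ u 1 n ≤ j) (hn2 : j < cc σ u 1 (n + 1)) : u m = u n := by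
  have hq : ∀ n, cc σ u (p + (r + 1)) n = cc σ u (r + 1) (cc σ u p n) := fun n => by
    rw [Nat.add_comm, cc_comp hfix]
  have off : ∀ p x n, x ≤ cc σ u p n → (n = 0 ∨ cc σ u p (n - 1) ≤ x) →
      cc σ u p n ≤ x + Sp σ p := by
    intro p x n h1 h2
    rcases n with _ | n
    · simp [cc_zero]
    · have := cc_add_le σ u p n 1
      simp at h2
      omega
  obtain ⟨ap, hap_eq⟩ : ∃ a, cc σ u p np = xp + a := ⟨_, (Nat.add_sub_cancel' hnp).symm⟩
  obtain ⟨aq, haq_eq⟩ : ∃ a, cc σ u (p + (r + 1)) nq = xq + a := ⟨_, (Nat.add_sub_cancel' hnq).symm⟩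
  have hap_le : ap ≤ Sp σ p := by have := off p xp np hnp hnp'; omega
  have haq_le : aq ≤ Sp σ (p + (r + 1)) := by have := off _ xq nq hnq hnq'; omega
  -- lengths
  obtain ⟨lp, hlp⟩ : ∃ l, cc σ u p (np + W) = cc σ u p np + l :=
    ⟨_, (Nat.add_sub_cancel' (cc_mono σ u p (by omega))).symm⟩
  obtain ⟨lq, hlq⟩ : ∃ l, cc σ u (p + (r + 1)) (nq + W) = cc σ u (p + (r + 1)) nq + l :=
    ⟨_, (Nat.add_sub_cancel' (cc_mono σ u _ (by omega))).symm⟩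
  have hlp_le : lp ≤ W * Sp σ p := by have := cc_add_le σ u p np W; omega
  have hlq_le : lq ≤ W * Sp σ (p + (r + 1)) := by
    have := cc_add_le σ u (p + (r + 1)) nq W; omega
  have hlq_ge : W * Ip σ (p + (r + 1)) ≤ lq := by
    have := le_cc_add σ u (p + (r + 1)) nq W; omega
  have hlpq : cc σ u p (nq + W) = cc σ u p nq + lp := by
    have := agree_cc (σ := σ) p hw W le_rfl; omega
  rw [Nat.succ_mul] at hap haq hN
  -- word over v at level p
  have hV := agree_lift hfix p hv
  have hVlen : N * Ip σ p ≤ cc σ u p (Mp + N) - cc σ u p Mp := by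
    have := le_cc_add σ u p Mp N; omega
  have hV' : Agree u (cc σ u p Mq) (cc σ u p Mp) (ap + lp) := (hV.mono (by omega)).symm
  have hWl := agree_lift hfix p hw
  have hWl' : Agree u (cc σ u p np) (cc σ u p nq) lp := hWl.mono (by omega)
  have hap1 : Agree u (cc σ u p Mp + ap) (xp + ap) lp := hap.shift ap lp (by omega)
  have hef : Agree u (cc σ u p Mq + ap) (cc σ u p nq) lp := by
    refine (hV'.shift ap lp le_rfl).trans (hap1.trans ?_)
    rw [← hap_eq]
    exact hWl'
  have haq1 : Agree u (cc σ u (p + (r + 1)) Mq + aq) (cc σ u (p + (r + 1)) nq) lq := by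
    rw [haq_eq]
    exact haq.shift aq lq (by omega)
  -- lift to level q
  have hlift := agree_lift hfix (r + 1) hef.symm
  rw [← hlpq, ← hq, ← hq, hlq, Nat.add_sub_cancel_left] at hlift
  have hboth := hlift.symm.trans haq1.symm
  -- offset of the lifted position
  have o1 := agree_cc (σ := σ) (r + 1) (hV'.trans (hap.mono (by omega))) ap (by omega)
  rw [← hap_eq, ← hq, ← hq] at o1
  have o2 : cc σ u (p + (r + 1)) np ≤ cc σ u (r + 1) xp + Sp σ (p + (r + 1)) := by
    rcases hnp' with h0 | h0
    · subst h0; simp [cc_zero]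
    · have h3 := cc_mono σ u (r + 1) h0
      rw [← hq] at h3
      rcases np with _ | np
      · simp [cc_zero]
      · have h4 := cc_add_le σ u (p + (r + 1)) np 1
        simp at h3
        omega
  have o3 : cc σ u (p + (r + 1)) Mq ≤ cc σ u (r + 1) (cc σ u p Mq + ap) := by
    rw [hq]; exact cc_mono σ u _ (by omega)
  have heq : cc σ u (r + 1) (cc σ u p Mq + ap) = cc σ u (p + (r + 1)) Mq + aq := by
    set y := cc σ u (r + 1) (cc σ u p Mq + ap)
    set z := cc σ u (p + (r + 1)) Mq
    rcases lt_trichotomy y (z + aq) with hlt | h | hlt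
    · exfalso
      obtain ⟨d, hd⟩ := Nat.exists_eq_add_of_lt hlt
      refine hpow y (d + 1) lq (by omega) ?_ (by rw [← Nat.add_assoc, ← hd]; exact hboth)
      exact (Nat.mul_le_mul_left K (by omega)).trans (hW.trans hlq_ge)
    · exact h
    · exfalso
      obtain ⟨d, hd⟩ := Nat.exists_eq_add_of_lt hlt
      refine hpow (z + aq) (d + 1) lq (by omega) ?_ (by rw [← Nat.add_assoc, ← hd]; exact hboth.symm)
      exact (Nat.mul_le_mul_left K (by omega)).trans (hW.trans hlq_ge)
  have hend : cc σ u (r + 1) (cc σ u p Mq + ap + lp) = cc σ u (p + (r + 1)) Mq + aq + lq := by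
    have := agree_cc (σ := σ) (r + 1) hef lp le_rfl
    rw [← hlpq, ← hq, ← hq] at this
    omega
  refine comp_of_aligned hσne hfix (r := r) hef ?_ ?_ ?_ hm1 hm2 hn1 hn2
  · rw [← hq]; omega
  · omega
  · omega

/-- weight of a word -/
def wt (β : A → ℝ) (w : List A) : ℝ := (w.map β).sum

theorem wt_count (β : A → ℝ) (w : List A) : wt β w = ∑ b, (w.count b : ℝ) * β b := by
  induction w with
  | nil => simp [wt]
  | cons a w ih =>
    simp only [wt, List.map_cons, List.sum_cons] at ih ⊢
    rw [ih]
    simp only [List.count_cons, Nat.cast_add, add_mul, Finset.sum_add_distrib]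
    simp [add_comm]

theorem wt_substWord {σ : A → List A} {lam : ℝ} {β : A → ℝ}
    (heig : (incMatrixR σ).mulVec β = lam • β) (w : List A) :
    wt β (substWord σ w) = lam * wt β w := by
  induction w with
  | nil => simp [wt, substWord]
  | cons a w ih =>
    have h1 : wt β (σ a) = lam * β a := by
      rw [wt_count]
      have := congrFun heig a
      simpa [Matrix.mulVec, dotProduct, incMatrixR] using this
    simp only [wt, substWord, List.flatMap_cons, List.map_append, List.sum_append,
      List.map_cons, List.sum_cons] at ih h1 ⊢
    rw [ih, h1]
    ring

theorem wt_substPow {σ : A → List A} {lam : ℝ} {β : A → ℝ}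
    (heig : (incMatrixR σ).mulVec β = lam • β) (p : ℕ) (w : List A) :
    wt β (substPow σ p w) = lam ^ p * wt β w := by
  induction p with
  | zero => simp [substPow]
  | succ p ih =>
    have h1 : substPow σ (p + 1) w = substWord σ (substPow σ p w) := by
      simp [substPow, Function.iterate_succ_apply']
    rw [h1, wt_substWord heig, ih]
    ring

theorem wt_ge {β : A → ℝ} {x : ℝ} (hx : ∀ a, x ≤ β a) (w : List A) :
    (w.length : ℝ) * x ≤ wt β w := by
  induction w with
  | nil => simp [wt]
  | cons a w ih =>
    have := hx a
    simp only [wt, List.map_cons, List.sum_cons, List.length_cons] at ih ⊢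
    push_cast
    linarith

theorem wt_le {β : A → ℝ} {x : ℝ} (hx : ∀ a, β a ≤ x) (w : List A) :
    wt β w ≤ (w.length : ℝ) * x := by
  induction w with
  | nil => simp [wt]
  | cons a w ih =>
    have := hx a
    simp only [wt, List.map_cons, List.sum_cons, List.length_cons] at ih ⊢
    push_cast
    linarith

theorem consts {σ : A → List A} (hσne : ∀ a, σ a ≠ []) {lam : ℝ} {β : A → ℝ}
    (hβ : ∀ a, 0 < β a) (heig : (incMatrixR σ).mulVec β = lam • β) :
    1 ≤ Cst β ∧ 1 ≤ lam ∧ (∀ p, (Sp σ p : ℝ) ≤ Cst β * lam ^ p) ∧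
      (∀ p, lam ^ p ≤ Cst β * (Ip σ p : ℝ)) ∧
      (∀ p n, (∀ a, n ≤ (substPow σ p [a]).length) → (n : ℝ) ≤ lam ^ p) := by
  obtain ⟨amin, -, hmin⟩ := Finset.exists_mem_eq_inf' (Finset.univ_nonempty (α := A)) β
  obtain ⟨amax, -, hmax⟩ := Finset.exists_mem_eq_sup' (Finset.univ_nonempty (α := A)) β
  have hle : ∀ a, β amin ≤ β a := fun a => by
    rw [← hmin]; exact Finset.inf'_le _ (Finset.mem_univ a)
  have hge : ∀ a, β a ≤ β amax := fun a => by
    rw [← hmax]; exact Finset.le_sup' _ (Finset.mem_univ a)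
  have hC : β amax / β amin ≤ Cst β := by
    rw [Cst, hmin, hmax]; exact Nat.le_ceil _
  have h0 := hβ amin
  have hC' : β amax ≤ Cst β * β amin := by rwa [div_le_iff₀ h0] at hC
  have hC1 : (1 : ℝ) ≤ Cst β := by
    refine le_trans ?_ hC
    rw [le_div_iff₀ h0]
    linarith [hle amax]
  have hpn : ∀ p n, (∀ a, n ≤ (substPow σ p [a]).length) → (n : ℝ) ≤ lam ^ p := by
    intro p n h
    have h1 := wt_substPow heig p [amin]
    have h2 := wt_ge hle (substPow σ p [amin])
    have h3 : (n : ℝ) ≤ (substPow σ p [amin]).length := by exact_mod_cast h amin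
    simp only [wt, List.map_cons, List.map_nil, List.sum_cons, List.sum_nil, add_zero] at h1 h2
    rw [h1] at h2
    exact h3.trans (le_of_mul_le_mul_right h2 h0)
  have hl1 : 1 ≤ lam := by
    have := hpn 1 1 (fun a => by simpa using substPow_ne hσne 1 [a])
    simpa using this
  refine ⟨by exact_mod_cast hC1, hl1, ?_, ?_, hpn⟩
  · intro p
    obtain ⟨a, -, ha⟩ := Finset.exists_mem_eq_sup' (Finset.univ_nonempty (α := A))
      (fun a => (substPow σ p [a]).length)
    rw [Sp, ha]
    have h1 := wt_substPow heig p [a]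
    have h2 := wt_ge hle (substPow σ p [a])
    simp only [wt, List.map_cons, List.map_nil, List.sum_cons, List.sum_nil, add_zero] at h1 h2
    rw [h1] at h2
    refine le_of_mul_le_mul_right (h2.trans ?_) h0
    have hp : 0 ≤ lam ^ p := by positivity
    calc lam ^ p * β a ≤ lam ^ p * (Cst β * β amin) :=
          mul_le_mul_of_nonneg_left ((hge a).trans hC') hp
      _ = _ := by ring
  · intro p
    obtain ⟨a, -, ha⟩ := Finset.exists_mem_eq_inf' (Finset.univ_nonempty (α := A))
      (fun a => (substPow σ p [a]).length)
    rw [Ip, ha]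
    have h1 := wt_substPow heig p [a]
    have h2 := wt_le hge (substPow σ p [a])
    simp only [wt, List.map_cons, List.map_nil, List.sum_cons, List.sum_nil, add_zero] at h1 h2
    rw [h1] at h2
    have hp : 0 ≤ lam ^ p := by positivity
    have hlen : (0 : ℝ) ≤ (substPow σ p [a]).length := Nat.cast_nonneg _
    refine le_of_mul_le_mul_right ?_ h0
    calc lam ^ p * β amin ≤ lam ^ p * β a := mul_le_mul_of_nonneg_left (hle a) hp
      _ ≤ _ := h2
      _ ≤ (substPow σ p [a]).length * (Cst β * β amin) := mul_le_mul_of_nonneg_left hC' hlen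
      _ = _ := by ring

theorem two_le_of_prim (h2 : 2 ≤ Fintype.card A) {σ : A → List A} {k : ℕ}
    (hk : ∀ a b : A, a ∈ substPow σ k [b]) (b : A) : 2 ≤ (substPow σ k [b]).length := by
  obtain ⟨x, y, hxy⟩ := Fintype.exists_pair_of_one_lt_card (by omega : 1 < Fintype.card A)
  have hx := hk x b
  have hy := hk y b
  match h : substPow σ k [b] with
  | [] => simp [h] at hx
  | [z] =>
    simp [h] at hx hy
    exact absurd (hx.trans hy.symm) hxy
  | z :: z' :: t => simp

theorem Ip_unbounded (h2 : 2 ≤ Fintype.card A) {σ : A → List A} (hσne : ∀ a, σ a ≠ [])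
    (hprim : IsPrimitiveSubst σ) {lam : ℝ} {β : A → ℝ}
    (hβ : ∀ a, 0 < β a) (heig : (incMatrixR σ).mulVec β = lam • β) (d : ℕ) :
    ∃ p, d ≤ Ip σ p := by
  obtain ⟨hC, hl, -, hI, hpn⟩ := consts hσne hβ heig
  obtain ⟨k, hk⟩ := hprim
  have h3 : ((2 : ℕ) : ℝ) ≤ lam ^ k := hpn k 2 (two_le_of_prim h2 hk)
  have hl1 : 1 < lam := by
    rcases hl.lt_or_eq with h | h
    · exact h
    · rw [← h] at h3; norm_num at h3
  obtain ⟨p, hp⟩ := pow_unbounded_of_one_lt ((Cst β : ℝ) * d) hl1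
  refine ⟨p, ?_⟩
  have h4 := hp.trans_le (hI p)
  have h5 : (0 : ℝ) < Cst β := by exact_mod_cast hC
  have := lt_of_mul_lt_mul_left h4 h5.le
  exact_mod_cast this.le

/-- a scale adapted to `d` -/
theorem scale (h2 : 2 ≤ Fintype.card A) {σ : A → List A} (hσne : ∀ a, σ a ≠ [])
    (hprim : IsPrimitiveSubst σ) {lam : ℝ} {β : A → ℝ}
    (hβ : ∀ a, 0 < β a) (heig : (incMatrixR σ).mulVec β = lam • β) (d : ℕ) (hd : 1 ≤ d) :
    ∃ p, d ≤ Ip σ p ∧ (Sp σ p : ℝ) ≤ lam * (Cst β : ℝ) ^ 2 * d := by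
  obtain ⟨hC, hl, hS, hI, hpn⟩ := consts hσne hβ heig
  have hex := Ip_unbounded h2 hσne hprim hβ heig d
  have hC' : (1 : ℝ) ≤ Cst β := by exact_mod_cast hC
  have hd' : (1 : ℝ) ≤ d := by exact_mod_cast hd
  classical
  refine ⟨Nat.find hex, Nat.find_spec hex, ?_⟩
  rcases h : Nat.find hex with _ | p
  · have : Sp σ 0 = 1 := by simp [Sp, substPow]
    rw [this]
    have h1 : (1 : ℝ) ≤ (Cst β : ℝ) ^ 2 := one_le_pow₀ hC'
    have h3 : (1 : ℝ) ≤ lam * (Cst β : ℝ) ^ 2 := one_le_mul_of_one_le_of_one_le hl h1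
    simpa using one_le_mul_of_one_le_of_one_le h3 hd'
  · have hlt := Nat.find_min hex (m := p) (by omega)
    have hlt' : (Ip σ p : ℝ) ≤ d := by exact_mod_cast (not_le.mp hlt).le
    calc (Sp σ (p + 1) : ℝ) ≤ Cst β * lam ^ (p + 1) := hS _
      _ = Cst β * lam * lam ^ p := by ring
      _ ≤ Cst β * lam * (Cst β * Ip σ p) := by
          apply mul_le_mul_of_nonneg_left (hI p); positivity
      _ ≤ Cst β * lam * (Cst β * d) := by
          apply mul_le_mul_of_nonneg_left _ (by positivity)
          exact mul_le_mul_of_nonneg_left hlt' (by positivity)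
      _ = _ := by ring

theorem scaleK (h2 : 2 ≤ Fintype.card A) {σ : A → List A} (hσne : ∀ a, σ a ≠ [])
    (hprim : IsPrimitiveSubst σ) (u : ℕ → A) {lam : ℝ} {β : A → ℝ}
    (hβ : ∀ a, 0 < β a) (heig : (incMatrixR σ).mulVec β = lam • β) (d : ℕ) (hd : 1 ≤ d) :
    ∃ p, d ≤ Ip σ p ∧ (gapConst u + 1) * Sp σ p ≤ Kst u lam β * d ∧
      Fintype.card A ^ 2 * Sp σ p ≤ Kst u lam β * d := by
  obtain ⟨p, hp1, hp2⟩ := scale h2 hσne hprim hβ heig d hd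
  obtain ⟨hC, hl, hS, hI, hpn⟩ := consts hσne hβ heig
  have hK : lam * (Cst β : ℝ) ^ 2 *
    max (2 * ((gapConst u : ℝ) + 1)) ((Fintype.card A : ℝ) ^ 2) ≤ Kst u lam β := Nat.le_ceil _
  have key : ∀ x : ℝ, 0 ≤ x → x ≤ max (2 * ((gapConst u : ℝ) + 1)) ((Fintype.card A : ℝ) ^ 2) →
      x * Sp σ p ≤ Kst u lam β * d := by
    intro x hx0 hx
    calc x * Sp σ p ≤ x * (lam * (Cst β : ℝ) ^ 2 * d) := mul_le_mul_of_nonneg_left hp2 hx0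
      _ = (lam * (Cst β : ℝ) ^ 2 * d) * x := by ring
      _ ≤ (lam * (Cst β : ℝ) ^ 2 * d) *
          max (2 * ((gapConst u : ℝ) + 1)) ((Fintype.card A : ℝ) ^ 2) := by
          apply mul_le_mul_of_nonneg_left hx; positivity
      _ = (lam * (Cst β : ℝ) ^ 2 *
          max (2 * ((gapConst u : ℝ) + 1)) ((Fintype.card A : ℝ) ^ 2)) * d := by ring
      _ ≤ _ := mul_le_mul_of_nonneg_right hK (Nat.cast_nonneg _)
  have hg : (0 : ℝ) ≤ gapConst u := Nat.cast_nonneg _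
  refine ⟨p, hp1, ?_, ?_⟩
  · have := key (gapConst u + 1) (by positivity) (le_max_of_le_left (by linarith))
    exact_mod_cast this
  · have := key ((Fintype.card A : ℝ) ^ 2) (by positivity) (le_max_right _ _)
    exact_mod_cast this

theorem C2_le_K {σ : A → List A} (hσne : ∀ a, σ a ≠ []) (u : ℕ → A) {lam : ℝ} {β : A → ℝ}
    (hβ : ∀ a, 0 < β a) (heig : (incMatrixR σ).mulVec β = lam • β) :
    Cst β ^ 2 ≤ Kst u lam β := by
  obtain ⟨hC, hl, hS, hI, hpn⟩ := consts hσne hβ heig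
  have hK : lam * (Cst β : ℝ) ^ 2 *
    max (2 * ((gapConst u : ℝ) + 1)) ((Fintype.card A : ℝ) ^ 2) ≤ Kst u lam β := Nat.le_ceil _
  have hg : (0 : ℝ) ≤ gapConst u := Nat.cast_nonneg _
  have h1 : (1 : ℝ) ≤ max (2 * ((gapConst u : ℝ) + 1)) ((Fintype.card A : ℝ) ^ 2) :=
    le_max_of_le_left (by linarith)
  have h2 : (Cst β : ℝ) ^ 2 ≤ Kst u lam β := by
    refine le_trans ?_ hK
    have h3 : (Cst β : ℝ) ^ 2 ≤ lam * (Cst β : ℝ) ^ 2 := le_mul_of_one_le_left (by positivity) hl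
    exact h3.trans (le_mul_of_one_le_right (by positivity) h1)
  exact_mod_cast h2

theorem Sp_le_C2 {σ : A → List A} (hσne : ∀ a, σ a ≠ []) {lam : ℝ} {β : A → ℝ}
    (hβ : ∀ a, 0 < β a) (heig : (incMatrixR σ).mulVec β = lam • β) (p : ℕ) :
    Sp σ p ≤ Cst β ^ 2 * Ip σ p := by
  obtain ⟨hC, hl, hS, hI, hpn⟩ := consts hσne hβ heig
  have : (Sp σ p : ℝ) ≤ (Cst β : ℝ) ^ 2 * Ip σ p := by
    calc (Sp σ p : ℝ) ≤ Cst β * lam ^ p := hS p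
      _ ≤ Cst β * (Cst β * Ip σ p) := mul_le_mul_of_nonneg_left (hI p) (Nat.cast_nonneg _)
      _ = _ := by ring
  exact_mod_cast this

theorem Sp_mono {σ : A → List A} (hσne : ∀ a, σ a ≠ []) : Monotone (Sp σ) := by
  refine monotone_nat_of_le_succ fun p => ?_
  refine Finset.sup'_le _ _ fun a _ => ?_
  refine le_trans ?_ (Finset.le_sup' (fun a => (substPow σ (p + 1) [a]).length)
    (Finset.mem_univ a))
  have := substPow_ne hσne 1 (substPow σ p [a])
  rw [← substPow_add, Nat.add_comm] at this
  exact this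

theorem one_le_Sp {σ : A → List A} (hσne : ∀ a, σ a ≠ []) (p : ℕ) : 1 ≤ Sp σ p := by
  obtain ⟨a⟩ := (inferInstance : Nonempty A)
  refine le_trans ?_ (Finset.le_sup' (fun a => (substPow σ p [a]).length) (Finset.mem_univ a))
  simpa using substPow_ne hσne p [a]

theorem infix_seg (u : ℕ → A) (n k z g : ℕ) :
    seg u n (n + k) <:+: seg u z (z + g) ↔ ∃ y, z ≤ y ∧ y + k ≤ z + g ∧ Agree u n y k := by
  constructor
  · rintro ⟨s, t, h⟩
    have hlen := congrArg List.length h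
    simp [seg_length] at hlen
    refine ⟨z + s.length, by omega, by omega, ?_⟩
    intro r hr
    have h3 := congrArg (fun w => w[s.length + r]?) h
    simp only [List.append_assoc] at h3
    rw [List.getElem?_append_right (by omega)] at h3
    rw [Nat.add_sub_cancel_left, List.getElem?_append_left (by simp [seg_length]; omega)] at h3
    have h4 : s.length + r < g := by omega
    simp only [seg, Nat.add_sub_cancel_left, List.getElem?_map, List.getElem?_range hr,
      List.getElem?_range h4, Option.map_some, Option.some.injEq] at h3
    rw [h3, Nat.add_assoc]
  · rintro ⟨y, h1, h3, hag⟩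
    rw [seg_of_agree hag]
    obtain ⟨a, rfl⟩ := Nat.exists_eq_add_of_le h1
    obtain ⟨b, hb⟩ := Nat.exists_eq_add_of_le h3
    have hg : g = a + (k + b) := by omega
    subst hg
    refine ⟨seg u z (z + a), seg u (z + a + k) (z + a + k + b), ?_⟩
    simp only [seg, Nat.add_sub_cancel_left, List.range_add, List.map_append, List.map_map,
      List.append_assoc]
    congr 1
    congr 1
    · apply List.map_congr_left
      intro t _
      simp [Nat.add_assoc]
    · apply List.map_congr_left
      intro t _
      simp [Nat.add_assoc]

theorem exists_gap (h2 : 2 ≤ Fintype.card A) {σ : A → List A} (hσne : ∀ a, σ a ≠ [])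
    (hprim : IsPrimitiveSubst σ) {u : ℕ → A} (hfix : IsFixedPoint σ u) {lam : ℝ} {β : A → ℝ}
    (hβ : ∀ a, 0 < β a) (heig : (incMatrixR σ).mulVec β = lam • β) (n : ℕ) :
    ∃ g, IsGap u (seg u n (n + 2)) g := by
  obtain ⟨p, hp⟩ := Ip_unbounded h2 hσne hprim hβ heig (n + 2)
  obtain ⟨k, hk⟩ := hprim
  refine ⟨2 * Sp σ (p + k), fun i => ?_⟩
  rw [infix_seg]
  obtain ⟨y, hy1, hy2⟩ := exists_next hσne u (p + k) i
  have hyS : cc σ u (p + k) y ≤ i + Sp σ (p + k) := by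
    rcases y with _ | y
    · simp [cc_zero]
    · have := cc_add_le σ u (p + k) y 1
      simp at hy2
      omega
  have hyS2 := cc_add_le σ u (p + k) y 1
  obtain ⟨t, ht, hget⟩ := List.mem_iff_getElem.mp (hk (u 0) (u y))
  have hb := u_block hfix k y t ht
  rw [List.getElem?_eq_getElem ht, hget] at hb
  have hb' : u (cc σ u k y + t) = u 0 := Option.some.inj hb
  have hag : Agree u 0 (cc σ u k y + t) 1 := by
    intro s hs
    obtain rfl : s = 0 := by omega
    simpa using hb'.symm
  have hag2 := agree_lift hfix p hag
  have hlen := le_cc_add σ u p 0 1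
  have c1 := agree_cc (σ := σ) p hag 1 le_rfl
  rw [cc_zero] at hag2 hlen c1
  have hsh := hag2.shift n 2 (by omega)
  rw [Nat.zero_add] at hsh
  have l1 : cc σ u (p + k) y ≤ cc σ u p (cc σ u k y + t) := by
    rw [cc_comp hfix]; exact cc_mono σ u p (by omega)
  have l2 : cc σ u p (cc σ u k y + t + 1) ≤ cc σ u (p + k) (y + 1) := by
    rw [cc_comp hfix]
    refine cc_mono σ u p ?_
    rw [cc_succ]; omega
  exact ⟨cc σ u p (cc σ u k y + t) + n, by omega, by omega, hsh⟩

theorem gapConst_spec (h2 : 2 ≤ Fintype.card A) {σ : A → List A} (hσne : ∀ a, σ a ≠ [])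
    (hprim : IsPrimitiveSubst σ) {u : ℕ → A} (hfix : IsFixedPoint σ u) {lam : ℝ} {β : A → ℝ}
    (hβ : ∀ a, 0 < β a) (heig : (incMatrixR σ).mulVec β = lam • β) (n z : ℕ) :
    ∃ y, z ≤ y ∧ y + 2 ≤ z + gapConst u ∧ Agree u n y 2 := by
  have hmin : IsGap u (seg u n (n + 2)) (minGap u (seg u n (n + 2))) :=
    Nat.sInf_mem (exists_gap h2 hσne hprim hfix hβ heig n)
  have hfin : (factors u 2).Finite := by
    refine (List.finite_length_eq A 2).subset ?_
    rintro w ⟨i, rfl⟩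
    simp [seg_length]
  have hbdd : BddAbove { m | ∃ w ∈ factors u 2, m = minGap u w } := by
    refine Set.Finite.bddAbove ((hfin.image (minGap u)).subset ?_)
    rintro m ⟨w, hw, rfl⟩
    exact ⟨w, hw, rfl⟩
  have hle : minGap u (seg u n (n + 2)) ≤ gapConst u :=
    le_csSup hbdd ⟨_, ⟨n, rfl⟩, rfl⟩
  obtain ⟨y, hy1, hy2, hy3⟩ := (infix_seg u n 2 z _).mp (hmin z)
  exact ⟨y, hy1, by omega, hy3⟩

theorem power_free (h2 : 2 ≤ Fintype.card A) {σ : A → List A} (hσne : ∀ a, σ a ≠ [])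
    (hprim : IsPrimitiveSubst σ) {u : ℕ → A} (hfix : IsFixedPoint σ u) (hap : AperiodicSeq u)
    {lam : ℝ} {β : A → ℝ}
    (hβ : ∀ a, 0 < β a) (heig : (incMatrixR σ).mulVec β = lam • β) (x d l : ℕ) (hd : 1 ≤ d)
    (hl : Kst u lam β * d ≤ l) : ¬ Agree u x (x + d) l := by
  intro hag
  obtain ⟨p, hp1, hp2, -⟩ := scaleK h2 hσne hprim u hβ heig d hd
  apply hap d hd
  funext t
  obtain ⟨z, hz1, hz2⟩ := exists_next hσne u p x
  have hzS : cc σ u p z ≤ x + Sp σ p := by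
    rcases z with _ | z
    · simp [cc_zero]
    · have := cc_add_le σ u p z 1
      simp at hz2
      omega
  have hzg := cc_add_le σ u p z (gapConst u)
  rw [Nat.succ_mul] at hp2
  obtain ⟨n, hn1, hn2⟩ := exists_block hσne u p t
  obtain ⟨y, hy1, hy2, hy3⟩ := gapConst_spec h2 hσne hprim hfix hβ heig n z
  have hL := agree_lift hfix p hy3
  have b1 : cc σ u p (n + 1) + 1 * Ip σ p ≤ cc σ u p (n + 2) := le_cc_add σ u p (n + 1) 1
  obtain ⟨s, rfl⟩ := Nat.exists_eq_add_of_le hn1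
  have e1 := hL s (by omega)
  have e2 := hL (s + d) (by omega)
  have c1 := agree_cc (σ := σ) p hy3 2 le_rfl
  have m1 := cc_mono σ u p hy1
  have m2 := cc_mono σ u p hy2
  have hpp := hag (cc σ u p y + s - x) (by omega)
  have q1 : x + (cc σ u p y + s - x) = cc σ u p y + s := by omega
  have q2 : x + d + (cc σ u p y + s - x) = cc σ u p y + (s + d) := by omega
  rw [q1, q2] at hpp
  rw [e1, hpp, ← e2, Nat.add_assoc]

theorem complexity (h2 : 2 ≤ Fintype.card A) {σ : A → List A} (hσne : ∀ a, σ a ≠ [])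
    (hprim : IsPrimitiveSubst σ) {u : ℕ → A} (hfix : IsFixedPoint σ u)
    {lam : ℝ} {β : A → ℝ}
    (hβ : ∀ a, 0 < β a) (heig : (incMatrixR σ).mulVec β = lam • β) (n : ℕ) (hn : 1 ≤ n) :
    ∃ F : Finset (List A), F.card ≤ Kst u lam β * n ∧ ∀ i, seg u i (i + n) ∈ F := by
  classical
  obtain ⟨p, hp1, -, hp2⟩ := scaleK h2 hσne hprim u hβ heig n hn
  let G : (A × A) × ℕ → List A := fun t =>
    if h : ∃ y, u y = t.1.1 ∧ u (y + 1) = t.1.2 then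
      seg u (cc σ u p h.choose + t.2) (cc σ u p h.choose + t.2 + n) else []
  refine ⟨((Finset.univ : Finset (A × A)) ×ˢ Finset.range (Sp σ p)).image G, ?_, ?_⟩
  · refine Finset.card_image_le.trans ?_
    rw [Finset.card_product, Finset.card_range, Finset.card_univ, Fintype.card_prod, ← sq]
    exact hp2
  · intro i
    obtain ⟨y, hy1, hy2⟩ := exists_block hσne u p i
    obtain ⟨s, rfl⟩ := Nat.exists_eq_add_of_le hy1
    have b0 := cc_add_le σ u p y 1
    have b1 : cc σ u p (y + 1) + 1 * Ip σ p ≤ cc σ u p (y + 2) := le_cc_add σ u p (y + 1) 1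
    refine Finset.mem_image.mpr ⟨((u y, u (y + 1)), s), ?_, ?_⟩
    · simp only [Finset.mem_product, Finset.mem_univ, true_and, Finset.mem_range]
      omega
    · have h : ∃ y', u y' = u y ∧ u (y' + 1) = u (y + 1) := ⟨y, rfl, rfl⟩
      have hG : G ((u y, u (y + 1)), s) =
          seg u (cc σ u p h.choose + s) (cc σ u p h.choose + s + n) := by
        simp only [G]
        rw [dif_pos h]
      rw [hG]
      have hc := h.choose_spec
      have hag : Agree u y h.choose 2 := by
        intro t ht
        rcases (by omega : t = 0 ∨ t = 1) with rfl | rfl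
        · exact hc.1.symm
        · exact hc.2.symm
      exact seg_of_agree ((agree_lift hfix p hag).shift s n (by omega)).symm

/-- data at level `p` -/
theorem level_data {σ : A → List A} (hσne : ∀ a, σ a ≠ []) {u : ℕ → A}
    {i j L N W D p : ℕ} (hD : Sp σ p ≤ D * Ip σ p) (hDW : (D + 1) * D ≤ W)
    (hWN : W + 1 ≤ N) (hDN : D + 1 ≤ N) (hL : N * Sp σ p ≤ L)
    (hiL : L ≤ i) (hjL : L ≤ j) (hag : Agree u (i - L) (j - L) (2 * L)) :
    ∃ M n x : ℕ, cc σ u p M + j = x + i ∧ x ≤ cc σ u p n ∧ (n = 0 ∨ cc σ u p (n - 1) ≤ x) ∧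
      Agree u (cc σ u p M) x ((W + 1) * Sp σ p) ∧
      cc σ u p M + Sp σ p ≤ i ∧ i < cc σ u p M + W * Ip σ p := by
  obtain ⟨m, hm1, hm2⟩ := exists_block hσne u p i
  have hmN : N < m + 1 := by
    have h1 := cc_add_le σ u p 0 (m + 1)
    rw [cc_zero, Nat.zero_add, Nat.zero_add] at h1
    have h3 : N * Sp σ p < (m + 1) * Sp σ p := by omega
    exact lt_of_mul_lt_mul_right h3 (Nat.zero_le _)
  obtain ⟨M, rfl⟩ : ∃ M, m = M + D := ⟨m - D, by omega⟩
  have h1 := le_cc_add σ u p M D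
  have h3 := cc_add_le σ u p M (D + 1)
  rw [← Nat.add_assoc] at h3
  have h4 : (D + 1) * Sp σ p ≤ W * Ip σ p := by
    calc (D + 1) * Sp σ p ≤ (D + 1) * (D * Ip σ p) := Nat.mul_le_mul_left _ hD
      _ = (D + 1) * D * Ip σ p := by ring
      _ ≤ _ := Nat.mul_le_mul_right _ hDW
  have h5 : (D + 1) * Sp σ p ≤ N * Sp σ p := Nat.mul_le_mul_right _ hDN
  have h6 : (W + 1) * Sp σ p ≤ N * Sp σ p := Nat.mul_le_mul_right _ hWN
  obtain ⟨x, hx⟩ : ∃ x, cc σ u p M + j = x + i := ⟨cc σ u p M + j - i, by omega⟩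
  obtain ⟨n, hn1, hn2⟩ := exists_next hσne u p x
  refine ⟨M, n, x, hx, hn1, hn2, ?_, by omega, by omega⟩
  intro t ht
  have := hag (cc σ u p M + t - (i - L)) (by omega)
  have e1 : i - L + (cc σ u p M + t - (i - L)) = cc σ u p M + t := by omega
  have e2 : j - L + (cc σ u p M + t - (i - L)) = x + t := by omega
  rwa [e1, e2] at this

theorem final_step (h2 : 2 ≤ Fintype.card A)
    {σ : A → List A} (hσne : ∀ a, σ a ≠ []) (hprim : IsPrimitiveSubst σ)
    {u : ℕ → A} (hfix : IsFixedPoint σ u) (hap : AperiodicSeq u)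
    {lam : ℝ} {β : A → ℝ} (hβ : ∀ a, 0 < β a)
    (heig : (incMatrixR σ).mulVec β = lam • β) :
    ∀ i j m n : ℕ, L0 σ u lam β ≤ i → L0 σ u lam β ≤ j →
      seg u (i - L0 σ u lam β) (i + L0 σ u lam β) =
        seg u (j - L0 σ u lam β) (j + L0 σ u lam β) →
      (substWord σ (seg u 0 m)).length ≤ i → i < (substWord σ (seg u 0 (m + 1))).length →
      (substWord σ (seg u 0 n)).length ≤ j → j < (substWord σ (seg u 0 (n + 1))).length →
      u m = u n := by
  intro i j m n hiL hjL hseg hm1 hm2 hn1 hn2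
  obtain ⟨hC, -⟩ := consts hσne hβ heig
  have hCK := C2_le_K hσne u hβ heig
  have hSI := Sp_le_C2 hσne hβ heig
  have hpf := power_free h2 hσne hprim hfix hap hβ heig
  have hcx := complexity h2 hσne hprim hfix hβ heig
  have hLdef : L0 σ u lam β = ((Cst β ^ 2) ^ 2 * (Kst u lam β + 1) + 2 * (Cst β) ^ 2 + 1) *
      Sp σ (p0 u lam β) := by
    rw [L0]; ring_nf
  have hPdef : p0 u lam β = (Kst u lam β) ^ 2 *
      ((Cst β ^ 2) ^ 2 * (Kst u lam β + 1) + 2 * (Cst β) ^ 2 + 1) *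
      (∑ n ∈ Finset.Icc ((Cst β) ^ 2 * (Kst u lam β + 1) + 2)
        ((Kst u lam β + 1) * (Cst β) ^ 6 + 2 * (Cst β) ^ 4 + (Cst β) ^ 2 + 2), n) + 1 := by
    rw [p0, ← pow_mul]
  have hD1 : 1 ≤ Cst β ^ 2 := Nat.one_le_pow _ _ hC
  have hsum : Cst β ^ 2 * (Kst u lam β + 1) + 2 ≤
      ∑ n ∈ Finset.Icc ((Cst β) ^ 2 * (Kst u lam β + 1) + 2)
        ((Kst u lam β + 1) * (Cst β) ^ 6 + 2 * (Cst β) ^ 4 + (Cst β) ^ 2 + 2), n := by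
    refine Finset.single_le_sum (f := fun n => n) (fun _ _ => Nat.zero_le _) ?_
    rw [Finset.mem_Icc]
    refine ⟨le_rfl, ?_⟩
    have h3 : Cst β ^ 2 ≤ Cst β ^ 6 := Nat.pow_le_pow_right hC (by norm_num)
    have h4 := Nat.mul_le_mul_right (Kst u lam β + 1) h3
    rw [Nat.mul_comm (Cst β ^ 6)] at h4
    omega
  generalize hK : Kst u lam β = K at *
  generalize hP : p0 u lam β = P at *
  generalize hL : L0 σ u lam β = L at *
  generalize (∑ n ∈ Finset.Icc ((Cst β) ^ 2 * (K + 1) + 2)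
        ((K + 1) * (Cst β) ^ 6 + 2 * (Cst β) ^ 4 + (Cst β) ^ 2 + 2), n) = S at *
  generalize Cst β ^ 2 = D at *
  obtain ⟨W, hW⟩ : ∃ W, W = D * (K + 1) + 1 := ⟨_, rfl⟩
  obtain ⟨N, hN⟩ : ∃ N, N = D ^ 2 * (K + 1) + 2 * D + 1 := ⟨_, rfl⟩
  rw [← hN] at hLdef hPdef
  have hWN' : (W + 1) * D ≤ N := by rw [hW, hN]; nlinarith
  have hWN : W + 1 ≤ N := le_trans (Nat.le_mul_of_pos_right _ hD1) hWN'
  have hDW : (D + 1) * D ≤ W := by rw [hW]; nlinarith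
  have hDN : D + 1 ≤ N := by rw [hN]; omega
  have hKW : K * D ≤ W := by rw [hW]; nlinarith
  have hag : Agree u (i - L) (j - L) (2 * L) := by
    apply agree_of_seg
    have e1 : i - L + 2 * L = i + L := by omega
    have e2 : j - L + 2 * L = j + L := by omega
    rw [e1, e2]
    exact hseg
  have hdata : ∀ p : ℕ, ∃ M n x : ℕ, p < P → cc σ u p M + j = x + i ∧ x ≤ cc σ u p n ∧
      (n = 0 ∨ cc σ u p (n - 1) ≤ x) ∧
      Agree u (cc σ u p M) x ((W + 1) * Sp σ p) ∧
      cc σ u p M + Sp σ p ≤ i ∧ i < cc σ u p M + W * Ip σ p := by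
    intro p
    by_cases hp : p < P
    · have hLp : N * Sp σ p ≤ L := by
        rw [hLdef]; exact Nat.mul_le_mul_left _ (Sp_mono hσne hp.le)
      obtain ⟨M, n, x, h⟩ := level_data hσne (hSI p) hDW hWN hDN hLp hiL hjL hag
      exact ⟨M, n, x, fun _ => h⟩
    · exact ⟨0, 0, 0, fun h => absurd h hp⟩
  choose M nn x hx using hdata
  -- the two-scale argument
  have hmain : ∀ p q, p < q → q < P → Agree u (M p) (M q) N → Agree u (nn p) (nn q) W →
      u m = u n := by
    intro p q hpq hq hv hw
    obtain ⟨r, rfl⟩ := Nat.exists_eq_add_of_lt hpq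
    rw [Nat.add_assoc] at hq hv hw
    obtain ⟨p1, p2, p3, p4, p5, p6⟩ := hx p (by omega)
    obtain ⟨q1, q2, q3, q4, q5, q6⟩ := hx (p + (r + 1)) hq
    refine core hσne hfix (K := K) hpf ?_ ?_ hv hw q1 p2 p3 q2 q3 p4 q4 q5 q6 hm1 hm2 hn1 hn2
    · calc K * Sp σ (p + (r + 1)) ≤ K * (D * Ip σ (p + (r + 1))) := Nat.mul_le_mul_left _ (hSI _)
        _ = K * D * Ip σ (p + (r + 1)) := by ring
        _ ≤ _ := Nat.mul_le_mul_right _ hKW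
    · calc (W + 1) * Sp σ p ≤ (W + 1) * (D * Ip σ p) := Nat.mul_le_mul_left _ (hSI _)
        _ = (W + 1) * D * Ip σ p := by ring
        _ ≤ _ := Nat.mul_le_mul_right _ hWN'
  -- pigeonhole
  obtain ⟨F, hF, hFm⟩ := hcx N (by omega)
  obtain ⟨G, hG, hGm⟩ := hcx W (by omega)
  have hcard : (F ×ˢ G).card < (Finset.range P).card := by
    rw [Finset.card_product, Finset.card_range, hPdef]
    have h3 : F.card * G.card ≤ K * N * (K * W) := Nat.mul_le_mul hF hG
    have h4 : K * N * (K * W) = K ^ 2 * N * W := by ring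
    have h5 : K ^ 2 * N * W ≤ K ^ 2 * N * S := Nat.mul_le_mul_left _ (by omega)
    omega
  obtain ⟨p, hp, q, hq, hne, heq⟩ := Finset.exists_ne_map_eq_of_card_lt_of_maps_to hcard
    (f := fun p => (seg u (M p) (M p + N), seg u (nn p) (nn p + W)))
    (fun p _ => Finset.mem_coe.mpr (Finset.mem_product.mpr ⟨hFm _, hGm _⟩))
  rw [Finset.mem_range] at hp hq
  have e1 := agree_of_seg (congrArg Prod.fst heq)
  have e2 := agree_of_seg (congrArg Prod.snd heq)
  rcases lt_or_gt_of_ne hne with h | h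
  · exact hmain p q h hq e1 e2
  · exact hmain q p h hp e1.symm e2.symm

end Aux2

/-- Lemma 4.2, second part: `σ` has the local unique composition property under the index
`L₀ = (C⁴(K+1)+2C²+1) S_{p₀}`. -/
theorem stmt_9 (A : Type*) [Fintype A] [DecidableEq A] [Nonempty A]
    (h2 : 2 ≤ Fintype.card A)
    (σ : A → List A) (hσne : ∀ a, σ a ≠ [])
    (hprim : IsPrimitiveSubst σ)
    (u : ℕ → A) (hfix : IsFixedPoint σ u) (hap : AperiodicSeq u)
    (lam : ℝ) (β : A → ℝ) (hβ : ∀ a, 0 < β a)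
    (heig : (incMatrixR σ).mulVec β = lam • β) :
    ∀ i j m n : ℕ, L0 σ u lam β ≤ i → L0 σ u lam β ≤ j →
      seg u (i - L0 σ u lam β) (i + L0 σ u lam β) =
        seg u (j - L0 σ u lam β) (j + L0 σ u lam β) →
      (substWord σ (seg u 0 m)).length ≤ i → i < (substWord σ (seg u 0 (m + 1))).length →
      (substWord σ (seg u 0 n)).length ≤ j → j < (substWord σ (seg u 0 (n + 1))).length →
      u m = u n := by
  exact final_step h2 hσne hprim hfix hap hβ heig
end
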